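/- arXiv:1810.01255 — 2 statements merged into one kernel-verified Lean document; each statement's English description precedes it below -/
import Mathlib

section
/- Let C : ℕ → ℝ² be any admissible sequence of centers, i.e. (i) the closed balls of radius 1 centered at the points C n cover ℝ² (⋃ₙ closedBall(C n, 1) = ℝ²), (ii) for every n ≥ 1 one has 0 < dist(C n, C (n−1)) ≤ 1, and (iii) for every n ≥ 1 the undirected Euclidean angle ∠ C(n−1) C(n) C(n+1) is at least 2π/3. Then the infimum, over all admissible sequences C, of the lower density liminf_{λ→∞} N_C(λ)·π/(4λ²) (computed in the extended nonnegative reals) equals 2π/(2+√3). -/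
open Metric MeasureTheory Filter Real
open scoped ENNReal

noncomputable section

/-- The Euclidean plane. -/
abbrev Pt := EuclideanSpace ℝ (Fin 2)

/-- The open square `(−λ,λ) × (−λ,λ)`. -/
def openSquare (l : ℝ) : Set Pt := {p | |p 0| < l ∧ |p 1| < l}

/-- `N_C(λ)`: the extended number of indices `i` such that the closed unit ball centered at
`C i` meets the open square `(−λ,λ) × (−λ,λ)`. -/
def Ncount {ι : Type*} (C : ι → Pt) (l : ℝ) : ℝ≥0∞ :=
  ({i | (closedBall (C i) 1 ∩ openSquare l).Nonempty}.encard : ℕ∞)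

/-- The lower density `liminf_{λ→∞} N_C(λ)·π/(4λ²)` of the family of unit disks centered at
the points `C i`, computed in `ℝ≥0∞`. -/
def lowerDensity {ι : Type*} (C : ι → Pt) : ℝ≥0∞ :=
  Filter.liminf (fun l : ℝ => Ncount C l * ENNReal.ofReal π / ENNReal.ofReal (4 * l ^ 2))
    Filter.atTop

/-- A sequence of centers is admissible if the corresponding closed unit balls cover the plane,
each consecutive pair of centers is at positive distance at most 1, and no turning angle is
sharper than `2π/3`. -/
def Admissible (C : ℕ → Pt) : Prop :=
  (⋃ n, closedBall (C n) 1) = Set.univ ∧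
  (∀ n, 1 ≤ n → 0 < dist (C n) (C (n - 1)) ∧ dist (C n) (C (n - 1)) ≤ 1) ∧
  (∀ n, 1 ≤ n → 2 * π / 3 ≤ EuclideanGeometry.angle (C (n - 1)) (C n) (C (n + 1)))


def cB : ℝ := 1/4 - √3 * π / 24
def cJ : ℝ := √3/4 - cB
def cD : ℝ := √3/4 * (2*π/3) - cJ
def cM : ℝ := 2*π*(√3/4) - 2*cD

lemma sqrt3_bounds : (1.732:ℝ) < √3 ∧ √3 < 1.7321 := by
  constructor
  · apply Real.lt_sqrt_of_sq_lt; norm_num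
  · rw [Real.sqrt_lt' (by norm_num)]; norm_num

lemma cB_nonneg : 0 ≤ cB := by
  have h1 := sqrt3_bounds
  have h2 := Real.pi_lt_d4
  have h3 := Real.pi_pos
  unfold cB
  nlinarith

lemma cB_le : cB ≤ 1/4 := by
  have h3 := Real.pi_pos
  unfold cB
  have : 0 ≤ √3 * π := by positivity
  linarith

lemma cJ_pos : 0 < cJ := by
  have := cB_le; have := sqrt3_bounds; unfold cJ; linarith

lemma cM_eq : cM + 6 * cB = 1 + √3/2 := by
  unfold cM cD cJ cB; ring

lemma cM_pos : 0 < cM := by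
  have := cJ_pos
  have h3 := Real.pi_pos
  have : 0 < √3 * π := by positivity
  unfold cM cD; linarith

lemma sin_tangent {x : ℝ} (hx : 0 ≤ x) : sin x / 2 ≤ cB + √3/4 * x := by
  have hs : sin x = 1/2 * cos (x - π/6) + √3/2 * sin (x - π/6) := by
    have : x = (x - π/6) + π/6 := by ring
    conv_lhs => rw [this]
    rw [sin_add, cos_pi_div_six, sin_pi_div_six]; ring
  set y := x - π/6 with hy
  have hxy : x = y + π/6 := by rw [hy]; ring
  clear_value y
  have key : 1/2 * cos y + √3/2 * sin y ≤ 1/2 + √3/2 * y := by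
    rcases le_or_gt 0 y with h | h
    · have := sin_le h
      have := cos_le_one y
      nlinarith [sqrt3_bounds.1]
    · have hz : 0 < -y := by linarith
      have hz1 : -y ≤ 0.53 := by have := Real.pi_lt_d4; linarith
      obtain ⟨z, rfl⟩ : ∃ z, y = -z := ⟨-y, by ring⟩
      rw [neg_neg] at hz hz1
      have h1 : cos z ≤ 1 - z^2/2 + z^4*(5/96) := by
        have h5 := Real.cos_bound (x := z) (by rw [abs_le]; constructor <;> linarith)
        have h6 := (abs_le.1 h5).2
        rw [abs_of_pos hz] at h6
        linarith
      have h2 := sin_gt_sub_cube hz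
      rw [cos_neg, sin_neg]
      have h3 : √3/2 * (z - sin z) ≤ 0.87 * (z^3/6) := by
        have := sqrt3_bounds
        have := sin_lt hz
        apply mul_le_mul <;> first | linarith | positivity
      have h4 : 0 ≤ z^2 * (1/2 - z^2*(5/96) - 0.29*z) := by
        apply mul_nonneg (by positivity); nlinarith
      nlinarith
  rw [hs, hxy]; unfold cB; linarith

lemma arc_ineq (θ : ℝ) (m : ℕ) (h : m * (2*π/3) ≤ θ) :
    sin θ / 2 ≤ cB + √3/4 * θ - cD * m := by
  have h3 := sqrt3_bounds
  have hB := cB_nonneg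
  rcases m with _ | _ | m
  · have := sin_tangent (x := θ) (by simpa using h)
    simpa using this
  · push_cast at *
    obtain ⟨e, rfl⟩ : ∃ e, θ = 2*π/3 + e := ⟨θ - 2*π/3, by ring⟩
    have he : 0 ≤ e := by linarith
    have h1 : sin (2*π/3) = √3/2 := by
      rw [show 2*π/3 = π - π/3 by ring, sin_pi_sub, sin_pi_div_three]
    have h2 : cos (2*π/3) = -1/2 := by
      rw [show 2*π/3 = π - π/3 by ring, cos_pi_sub, cos_pi_div_three]; ring
    rw [sin_add, h1, h2]
    have := cos_le_one e
    have := neg_le_of_abs_le (abs_sin_le_abs (x := e))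
    rw [abs_of_nonneg he] at this
    unfold cD cJ
    nlinarith
  · push_cast at *
    have h4 : √3/4 * θ ≥ √3/4 * ((m + 1 + 1) * (2*π/3)) := by gcongr
    have h5 := cJ_pos
    have h6 : cB + √3/4 * θ - cD * (m+1+1) ≥ cB + cJ * (m+1+1) := by
      unfold cD; linarith
    have h7 : cJ * (m+1+1) ≥ cJ * 2 := by
      have : (0:ℝ) ≤ m := by positivity
      nlinarith
    have h8 : cB + cJ * 2 ≥ 1/2 := by
      have := cB_le
      unfold cJ; linarith
    linarith [sin_le_one θ]


/-- cross product of two complex numbers -/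
def crs (z w : ℂ) : ℝ := z.re * w.im - z.im * w.re
/-- unit complex number at angle t -/
def uE (t : ℝ) : ℂ := ⟨cos t, sin t⟩

structure VRep where
  a : ℝ
  b : ℝ
  w : ℝ
  l : ℝ
  na : ℝ
  nb : ℝ

def VRep.pt (r : VRep) : ℂ := r.l • ((1 - r.w) • uE r.a + r.w • uE r.b)
def VRep.pot (r : VRep) : ℝ :=
  √3/4 * ((1 - r.w) * r.a + r.w * r.b) - cD * ((1 - r.w) * r.na + r.w * r.nb)
def VRep.Ok (r : VRep) : Prop := 0 ≤ r.w ∧ r.w ≤ 1 ∧ 0 < r.l ∧ r.l ≤ 1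
def VRep.shift (r : VRep) : VRep := ⟨r.a + 2*π, r.b + 2*π, r.w, r.l, r.na + 2, r.nb + 2⟩

def AI (a n a' n' : ℝ) : Prop := sin (a' - a) / 2 ≤ cB + √3/4 * (a' - a) - cD * (n' - n)

lemma AI_of {a n a' n' : ℝ} (m : ℕ) (h : n' - n = m) (h2 : m * (2*π/3) ≤ a' - a) :
    AI a n a' n' := by
  unfold AI; rw [h]; exact arc_ineq _ _ h2

lemma AI_rev {a n a' n' : ℝ} (h : n' - n = -1) (h2 : a' - a = -(2*π/3)) :
    AI a n a' n' := by
  unfold AI; rw [h, h2, sin_neg, show 2*π/3 = π - π/3 by ring, sin_pi_sub, sin_pi_div_three]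
  have := cB_nonneg
  unfold cD cJ; linarith

lemma VRep.shift_pt (r : VRep) : r.shift.pt = r.pt := by
  simp [VRep.shift, VRep.pt, uE]

lemma VRep.shift_pot (r : VRep) : r.shift.pot = r.pot + cM := by
  simp [VRep.shift, VRep.pot, cM]; ring

lemma edge_ineq (r s : VRep) (hr : r.Ok) (hs : s.Ok) (h0 : 0 ≤ crs r.pt s.pt)
    (h1 : AI r.a r.na s.a s.na) (h2 : AI r.a r.na s.b s.nb)
    (h3 : AI r.b r.nb s.a s.na) (h4 : AI r.b r.nb s.b s.nb) :
    crs r.pt s.pt / 2 ≤ cB + s.pot - r.pot := by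
  obtain ⟨a, b, w, l, na, nb⟩ := r
  obtain ⟨a', b', w', l', na', nb'⟩ := s
  obtain ⟨hw0, hw1, hl0, hl1⟩ := hr
  obtain ⟨hw0', hw1', hl0', hl1'⟩ := hs
  simp only [AI] at *
  set q := (1-w)*(1-w') * sin (a'-a) + (1-w)*w' * sin (b'-a) + w*(1-w')*sin (a'-b)
    + w*w'*sin (b'-b) with hq
  have e1 : crs (VRep.pt ⟨a, b, w, l, na, nb⟩) (VRep.pt ⟨a', b', w', l', na', nb'⟩) = l*l'*q := by
    simp [crs, VRep.pt, uE, hq, sin_sub]; ring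
  have e2 : l * l' * q ≤ q := by
    rw [e1] at h0
    have hq0 : 0 ≤ q := by
      by_contra hc
      push Not at hc
      have : l*l'*q < 0 := mul_neg_of_pos_of_neg (by positivity) hc
      linarith
    have : l * l' ≤ 1 := by nlinarith
    nlinarith
  rw [e1]
  have hA : 0 ≤ (1-w)*(1-w') := mul_nonneg (by linarith) (by linarith)
  have hB : 0 ≤ (1-w)*w' := mul_nonneg (by linarith) (by linarith)
  have hC : 0 ≤ w*(1-w') := mul_nonneg (by linarith) (by linarith)
  have hD : 0 ≤ w*w' := mul_nonneg (by linarith) (by linarith)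
  have i1 := mul_le_mul_of_nonneg_left h1 hA
  have i2 := mul_le_mul_of_nonneg_left h2 hB
  have i3 := mul_le_mul_of_nonneg_left h3 hC
  have i4 := mul_le_mul_of_nonneg_left h4 hD
  simp only [VRep.pot]
  have : q / 2 ≤ cB + (√3 / 4 * ((1 - w') * a' + w' * b') - cD * ((1 - w') * na' + w' * nb'))
      - (√3 / 4 * ((1 - w) * a + w * b) - cD * ((1 - w) * na + w * nb)) := by
    rw [hq]; linarith
  linarith

/-- the four possible positions of a direction `t` in `[-π/3, 5π/3)` -/
def Kind (γ t : ℝ) (r : VRep) : Prop :=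
  (r.a = -(π/3) ∧ r.b = π/3 ∧ r.na = 0 ∧ r.nb = 1 ∧ -(π/3) ≤ t ∧ t ≤ π/3) ∨
  (r.a = t ∧ r.b = t ∧ r.na = 1 ∧ r.nb = 1 ∧ π/3 ≤ t ∧ t ≤ γ - π/3) ∨
  (r.a = γ - π/3 ∧ r.b = γ + π/3 ∧ r.na = 1 ∧ r.nb = 2 ∧ γ - π/3 ≤ t ∧ t ≤ γ + π/3) ∨
  (r.a = t ∧ r.b = t ∧ r.na = 2 ∧ r.nb = 2 ∧ γ + π/3 ≤ t ∧ t ≤ 5*π/3)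

lemma kind_edge {γ t t' : ℝ} {r s : VRep} (h23 : 2*π/3 ≤ γ) 
    (hr : r.Ok) (hs : s.Ok) (kr : Kind γ t r)
    (ks : Kind γ t' s) (htt : t < t') (h0 : 0 ≤ crs r.pt s.pt) :
    crs r.pt s.pt / 2 ≤ cB + s.pot - r.pot := by
  have hpi := pi_pos
  rcases kr with ⟨h1, h2, h3, h4, h5, h6⟩ | ⟨h1, h2, h3, h4, h5, h6⟩ | ⟨h1, h2, h3, h4, h5, h6⟩ |
    ⟨h1, h2, h3, h4, h5, h6⟩ <;>
  rcases ks with ⟨g1, g2, g3, g4, g5, g6⟩ | ⟨g1, g2, g3, g4, g5, g6⟩ | ⟨g1, g2, g3, g4, g5, g6⟩ |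
    ⟨g1, g2, g3, g4, g5, g6⟩ <;>
  first
  | (exfalso; linarith)
  | (apply edge_ineq r s hr hs h0 <;>
     simp only [h1, h2, h3, h4, g1, g2, g3, g4] <;>
     first
     | (apply AI_of 0 <;> push_cast <;> linarith)
     | (apply AI_of 1 <;> push_cast <;> linarith)
     | (apply AI_of 2 <;> push_cast <;> linarith)
     | (apply AI_rev <;> linarith))

set_option maxHeartbeats 1000000 in
lemma kind_wrap {γ t t' : ℝ} {r s : VRep} (h23 : 2*π/3 ≤ γ) (h43 : γ ≤ 4*π/3)
    (hr : r.Ok) (hs : s.Ok) (kr : Kind γ t r)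
    (ks : Kind γ t' s) (htt : t' ≤ t) (h0 : 0 ≤ crs r.pt s.pt) :
    crs r.pt s.pt / 2 ≤ cB + (s.pot + cM) - r.pot := by
  have hpi := pi_pos
  rw [← s.shift_pot]
  rw [← s.shift_pt] at *
  have hs' : s.shift.Ok := hs
  rcases kr with ⟨h1, h2, h3, h4, h5, h6⟩ | ⟨h1, h2, h3, h4, h5, h6⟩ | ⟨h1, h2, h3, h4, h5, h6⟩ |
    ⟨h1, h2, h3, h4, h5, h6⟩ <;>
  rcases ks with ⟨g1, g2, g3, g4, g5, g6⟩ | ⟨g1, g2, g3, g4, g5, g6⟩ | ⟨g1, g2, g3, g4, g5, g6⟩ |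
    ⟨g1, g2, g3, g4, g5, g6⟩ <;>
    (apply edge_ineq r s.shift hr hs' h0 <;>
     simp only [VRep.shift, h1, h2, h3, h4, g1, g2, g3, g4] <;>
     first
     | (apply AI_of 0 <;> push_cast <;> linarith)
     | (apply AI_of 1 <;> push_cast <;> linarith)
     | (apply AI_of 2 <;> push_cast <;> linarith)
     | (apply AI_of 3 <;> push_cast <;> linarith)
     | (apply AI_of 4 <;> push_cast <;> linarith))

/-- points in the special sector -/
lemma sector_rep {r t : ℝ} (hr : 0 < r) (ht : -(π/3) ≤ t) (ht' : t ≤ π/3)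
    (hx : r * cos t ≤ 1/2) : ∃ w l : ℝ, 0 ≤ w ∧ w ≤ 1 ∧ 0 < l ∧ l ≤ 1 ∧
      r * cos t = l * (1/2) ∧ r * sin t = l * (√3/2) * (2*w - 1) := by
  have hpi := pi_pos
  have hc : 1/2 ≤ cos t := by
    rw [← cos_abs, ← cos_pi_div_three]
    exact cos_le_cos_of_nonneg_of_le_pi (abs_nonneg _) (by linarith) (abs_le.2 ⟨ht, ht'⟩)
  have hs3 : 0 < √3 := by positivity
  have hs := sin_sq_add_cos_sq t
  have h33 : √3 * √3 = 3 := mul_self_sqrt (by norm_num)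
  have hsin : |sin t| ≤ √3 * cos t := by
    apply abs_le_of_sq_le_sq _ (by positivity)
    nlinarith
  obtain ⟨hs1, hs2⟩ := abs_le.1 hsin
  have hc0 : 0 < cos t := by linarith
  refine ⟨(1 + sin t / (√3 * cos t))/2, 2 * (r * cos t), ?_, ?_, by positivity, by linarith, by ring, ?_⟩
  · have : -1 ≤ sin t / (√3 * cos t) := by rw [le_div_iff₀ (by positivity)]; linarith
    linarith
  · have : sin t / (√3 * cos t) ≤ 1 := by rw [div_le_iff₀ (by positivity)]; linarith
    linarith
  · field_simp; ring

lemma exists_rep {γ t r : ℝ} (hr : 0 < r) (hr1 : r ≤ 1) (ht : -(π/3) ≤ t) (ht' : t < 5*π/3)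
    (hx : r * cos t ≤ 1/2) (hy : r * cos (t - γ) ≤ 1/2) :
    ∃ R : VRep, R.Ok ∧ Kind γ t R ∧ R.pt = r • uE t := by
  by_cases h1 : t ≤ π/3
  · obtain ⟨w, l, a1, a2, a3, a4, a5, a6⟩ := sector_rep hr ht h1 hx
    refine ⟨⟨-(π/3), π/3, w, l, 0, 1⟩, ⟨a1, a2, a3, a4⟩, Or.inl ⟨rfl, rfl, rfl, rfl, ht, h1⟩, ?_⟩
    apply Complex.ext
    · simp [VRep.pt, uE, a5]; ring
    · simp [VRep.pt, uE, a6]; ring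
  push Not at h1
  by_cases h2 : t ≤ γ - π/3
  · refine ⟨⟨t, t, 0, r, 1, 1⟩, ⟨le_rfl, zero_le_one, hr, hr1⟩,
      Or.inr (Or.inl ⟨rfl, rfl, rfl, rfl, h1.le, h2⟩), ?_⟩
    simp [VRep.pt]
  push Not at h2
  by_cases h3 : t ≤ γ + π/3
  · obtain ⟨w, l, a1, a2, a3, a4, a5, a6⟩ := sector_rep (t := t - γ) hr (by linarith) (by linarith) hy
    refine ⟨⟨γ-(π/3), γ+π/3, w, l, 1, 2⟩, ⟨a1, a2, a3, a4⟩,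
      Or.inr (Or.inr (Or.inl ⟨rfl, rfl, rfl, rfl, h2.le, h3⟩)), ?_⟩
    have e1 : r * cos t = r * cos (t - γ) * cos γ - r * sin (t - γ) * sin γ := by
      rw [show r * cos t = r * cos ((t - γ) + γ) by ring_nf, cos_add]; ring
    have e2 : r * sin t = r * sin (t - γ) * cos γ + r * cos (t - γ) * sin γ := by
      rw [show r * sin t = r * sin ((t - γ) + γ) by ring_nf, sin_add]; ring
    rw [a5, a6] at e1 e2
    apply Complex.ext
    · simp [VRep.pt, uE, e1, cos_add, cos_sub]; ring
    · simp [VRep.pt, uE, e2, sin_add, sin_sub]; ring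
  push Not at h3
  · refine ⟨⟨t, t, 0, r, 2, 2⟩, ⟨le_rfl, zero_le_one, hr, hr1⟩,
      Or.inr (Or.inr (Or.inr ⟨rfl, rfl, rfl, rfl, h3.le, ht'.le⟩)), ?_⟩
    simp [VRep.pt]


def tri (p q : ℂ) : Set ℂ := {z | ∃ a b : ℝ, 0 ≤ a ∧ 0 ≤ b ∧ a + b ≤ 1 ∧ z = a • p + b • q}

lemma std_tri_vol : volume {z : ℂ | 0 ≤ z.re ∧ 0 ≤ z.im ∧ z.re + z.im ≤ 1} ≤ ENNReal.ofReal (1/2) := by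
  have h1 : {z : ℂ | 0 ≤ z.re ∧ 0 ≤ z.im ∧ z.re + z.im ≤ 1} =
      Complex.measurableEquivRealProd ⁻¹' {p : ℝ × ℝ | 0 ≤ p.1 ∧ 0 ≤ p.2 ∧ p.1 + p.2 ≤ 1} := by
    ext z; simp [Complex.measurableEquivRealProd]
  have hm : MeasurableSet {p : ℝ × ℝ | 0 ≤ p.1 ∧ 0 ≤ p.2 ∧ p.1 + p.2 ≤ 1} := by
    apply IsClosed.measurableSet
    refine (isClosed_le continuous_const continuous_fst).inter
      ((isClosed_le continuous_const continuous_snd).inter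
      (isClosed_le (continuous_fst.add continuous_snd) continuous_const))
  rw [h1, Complex.volume_preserving_equiv_real_prod.measure_preimage hm.nullMeasurableSet,
    Measure.volume_eq_prod, Measure.prod_apply hm]
  have h2 : ∀ x : ℝ, volume (Prod.mk x ⁻¹' {p : ℝ × ℝ | 0 ≤ p.1 ∧ 0 ≤ p.2 ∧ p.1 + p.2 ≤ 1})
      ≤ (Set.Icc (0:ℝ) 1).indicator (fun x => ENNReal.ofReal (1 - x)) x := by
    intro x
    by_cases hx : x ∈ Set.Icc (0:ℝ) 1
    · rw [Set.indicator_of_mem hx]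
      refine (measure_mono (t := Set.Icc 0 (1 - x)) ?_).trans (by simp)
      rintro y ⟨_, h2, h3⟩
      simp at h2 h3 ⊢
      exact ⟨h2, by linarith⟩
    · have : (Prod.mk x ⁻¹' {p : ℝ × ℝ | 0 ≤ p.1 ∧ 0 ≤ p.2 ∧ p.1 + p.2 ≤ 1}) = ∅ := by
        ext y
        simp only [Set.mem_preimage, Set.mem_setOf_eq, Set.mem_empty_iff_false, iff_false]
        rintro ⟨h1, h2, h3⟩
        exact hx ⟨h1, by linarith⟩
      rw [this]; simp
  refine (lintegral_mono h2).trans ?_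
  rw [lintegral_indicator measurableSet_Icc]
  rw [← ofReal_integral_eq_lintegral_ofReal]
  · rw [integral_Icc_eq_integral_Ioc, ← intervalIntegral.integral_of_le zero_le_one]
    apply ENNReal.ofReal_le_ofReal
    rw [intervalIntegral.integral_sub (by simp) (by simp)]
    simp
    norm_num
  · exact (continuous_const.sub continuous_id).integrableOn_Icc
  · filter_upwards [ae_restrict_mem measurableSet_Icc] with x hx
    simp; exact hx.2

/-- linear map sending 1 to p and I to q -/
def linPQ (p q : ℂ) : ℂ →ₗ[ℝ] ℂ where
  toFun z := z.re • p + z.im • q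
  map_add' := by intro x y; simp; ring
  map_smul' := by intro x y; simp; ring

lemma tri_vol (p q : ℂ) : volume (tri p q) ≤ ENNReal.ofReal (|crs p q| / 2) := by
  have h : tri p q = linPQ p q '' {z : ℂ | 0 ≤ z.re ∧ 0 ≤ z.im ∧ z.re + z.im ≤ 1} := by
    ext z
    constructor
    · rintro ⟨a, b, ha, hb, hab, rfl⟩
      exact ⟨⟨a, b⟩, ⟨ha, hb, hab⟩, rfl⟩
    · rintro ⟨w, ⟨ha, hb, hab⟩, rfl⟩
      exact ⟨w.re, w.im, ha, hb, hab, rfl⟩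
  have hdet : LinearMap.det (linPQ p q) = crs p q := by
    rw [← LinearMap.det_toMatrix Complex.basisOneI, Matrix.det_fin_two]
    simp [LinearMap.toMatrix_apply, linPQ, crs]
    ring
  rw [h, Measure.addHaar_image_linearMap, hdet]
  calc _ ≤ ENNReal.ofReal |crs p q| * ENNReal.ofReal (1/2) := by gcongr; exact std_tri_vol
    _ = _ := by rw [← ENNReal.ofReal_mul (abs_nonneg _)]; congr 1; ring


lemma crs_polar (r s a b : ℝ) : crs (r • uE a) (s • uE b) = r * s * sin (b - a) := by
  simp [crs, uE, sin_sub]; ring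

lemma uE_ne (t : ℝ) : uE t ≠ 0 := by
  intro h
  have h1 := congrArg Complex.re h
  have h2 := congrArg Complex.im h
  simp [uE] at h1 h2
  have := sin_sq_add_cos_sq t
  rw [h1, h2] at this; norm_num at this

lemma norm_uE (m : ℝ) : ‖uE m‖ = 1 := by
  rw [Complex.norm_def, Complex.normSq_apply]
  have := sin_sq_add_cos_sq m
  simp only [uE]
  rw [show cos m * cos m + sin m * sin m = 1 by nlinarith]; simp

lemma convex_lin_le {V : Set ℂ} (f : ℂ →ₗ[ℝ] ℝ) (c : ℝ) (h : ∀ v ∈ V, f v ≤ c) :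
    ∀ x ∈ convexHull ℝ V, f x ≤ c := by
  intro x hx
  have : convexHull ℝ V ⊆ {z | f z ≤ c} := convexHull_min h (convex_halfSpace_le f.isLinear c)
  exact this hx

/-- linear functional z ↦ crs p z -/
def crsL (p : ℂ) : ℂ →ₗ[ℝ] ℝ where
  toFun z := crs p z
  map_add' := by intro x y; simp [crs]; ring
  map_smul' := by intro x y; simp [crs]; ring

/-- linear functional: dot with unit vector -/
def dotL (t : ℝ) : ℂ →ₗ[ℝ] ℝ where
  toFun z := z.re * cos t + z.im * sin t
  map_add' := by intro x y; simp; ring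
  map_smul' := by intro x y; simp; ring

lemma crs_swap (p q : ℂ) : crs p q = - crs q p := by simp [crs]; ring

lemma extreme_no {K : Set ℂ} (hc : Convex ℝ K) (h0 : (0:ℂ) ∈ K) {q w p : ℂ}
    (hq : q ∈ K.extremePoints ℝ) (hq0 : q ≠ 0) (hw : w ∈ K) (hp : p ∈ K) {c d : ℝ} (h1 : 0 < c)
    (h2 : 0 ≤ d) (h3 : c + d < 1) (he : q = c • w + d • p) : False := by
  have hy : (c/(c+d)) • w + (d/(c+d)) • p ∈ K := by
    apply hc hw hp (by positivity) (by positivity)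
    field_simp
  have := (mem_extremePoints.1 hq).2 _ hy _ h0 ⟨c + d, 1 - (c+d), by linarith, by linarith, by ring, ?_⟩
  · exact hq0 this.2.symm
  · rw [he, smul_add, smul_smul, smul_smul, smul_zero, add_zero]
    congr 2 <;> field_simp

lemma edge_all {K V : Set ℂ} (hK : K = convexHull ℝ V) (h0 : (0:ℂ) ∈ interior K)
    {a b r s : ℝ} (hr : 0 < r) (hs : 0 < s) (hab : a < b) (hab2 : b ≤ a + 2 * π)
    (hp : r • uE a ∈ K.extremePoints ℝ) (hq : s • uE b ∈ K.extremePoints ℝ)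
    (hV : ∀ v ∈ V, ∃ ρ τ : ℝ, 0 < ρ ∧ b ≤ τ ∧ τ ≤ a + 2 * π ∧ v = ρ • uE τ) :
    0 ≤ crs (r • uE a) (s • uE b) ∧
    ∀ ρ θ : ℝ, 0 ≤ ρ → a ≤ θ → θ ≤ b → ρ • uE θ ∈ K → ρ • uE θ ∈ tri (r • uE a) (s • uE b) := by
  have hc : Convex ℝ K := hK ▸ convex_convexHull ℝ V
  have h0K := interior_subset h0
  have gap : b - a < π := by
    by_contra hg
    push Not at hg
    set m := (a + b)/2 with hm
    have h1 : ∀ x ∈ K, dotL m x ≤ 0 := by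
      rw [hK]
      apply convex_lin_le
      intro v hv
      obtain ⟨ρ, τ, h1, h2, h3, rfl⟩ := hV v hv
      have : dotL m (ρ • uE τ) = ρ * cos (τ - m) := by simp [dotL, uE, cos_sub]; ring
      rw [this]
      apply mul_nonpos_of_nonneg_of_nonpos h1.le
      exact cos_nonpos_of_pi_div_two_le_of_le (by linarith) (by linarith)
    rw [mem_interior_iff_mem_nhds, Metric.mem_nhds_iff] at h0
    obtain ⟨ε, he, hb⟩ := h0
    have h2 : (ε/2) • uE m ∈ K := by
      apply hb
      simp only [mem_ball, dist_zero_right, norm_smul, Real.norm_eq_abs]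
      have : ‖uE m‖ = 1 := by
        exact norm_uE m
      rw [this, abs_of_pos (by linarith)]; linarith
    have h3 := h1 _ h2
    have : dotL m ((ε/2) • uE m) = (ε/2) * (sin m ^ 2 + cos m ^ 2) := by
      simp only [dotL, uE, LinearMap.coe_mk, AddHom.coe_mk, Complex.smul_re, Complex.smul_im, smul_eq_mul]; ring
    rw [this, sin_sq_add_cos_sq] at h3; linarith
  have hsin : 0 < sin (b - a) := sin_pos_of_pos_of_lt_pi (by linarith) gap
  set p := r • uE a with hpd
  set q := s • uE b with hqd
  set D := crs p q with hD
  clear_value p q D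
  have hD0 : 0 < D := by rw [hD, hpd, hqd, crs_polar]; positivity
  have decomp : ∀ z : ℂ, z = (crs z q / D) • p + (crs p z / D) • q := by
    intro z
    apply Complex.ext
    · simp; field_simp; simp [hD, crs]; ring
    · simp; field_simp; simp [hD, crs]; ring
  have hp0 : p ≠ 0 := hpd ▸ smul_ne_zero hr.ne' (uE_ne _)
  have hq0 : q ≠ 0 := hqd ▸ smul_ne_zero hs.ne' (uE_ne _)
  have bound : ∀ x ∈ K, (crsL p - crsL q) x ≤ D := by
    rw [hK]
    apply convex_lin_le
    intro w hw
    have hwK : w ∈ K := by rw [hK]; exact subset_convexHull _ _ hw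
    by_contra hcon
    push Not at hcon
    have hl : (crsL p - crsL q) w = crs p w + crs w q := by
      rw [LinearMap.sub_apply]; rw [crs_swap w q]; simp [crsL]; ring
    rw [hl] at hcon
    set b' := crs p w with hb'
    set a' := crs w q with ha'
    have hw' : D • w = a' • p + b' • q := by
      conv_lhs => rw [decomp w]
      rw [smul_add, smul_smul, smul_smul]
      rw [mul_div_cancel₀ _ hD0.ne', mul_div_cancel₀ _ hD0.ne']
    rcases le_or_gt a' 0 with h | h
    · have hb0 : 0 < b' := by linarith
      refine extreme_no hc h0K hq hq0 hwK (extremePoints_subset hp) (c := D / b') (d := -a'/b')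
        (by positivity) (div_nonneg (by linarith) hb0.le) ?_ ?_
      · rw [← add_div, div_lt_one hb0]; linarith
      · have : b' • q = D • w + (-a') • p := by rw [hw']; module
        calc q = (1/b') • (b' • q) := by rw [smul_smul, one_div_mul_cancel hb0.ne', one_smul]
          _ = _ := by rw [this, smul_add, smul_smul, smul_smul]; congr 2 <;> field_simp
    rcases le_or_gt b' 0 with h' | h'
    · have hb0 : 0 < a' := by linarith
      refine extreme_no hc h0K hp hp0 hwK (extremePoints_subset hq) (c := D / a') (d := -b'/a')
        (by positivity) (div_nonneg (by linarith) hb0.le) ?_ ?_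
      · rw [← add_div, div_lt_one hb0]; linarith
      · have : a' • p = D • w + (-b') • q := by rw [hw']; module
        calc p = (1/a') • (a' • p) := by rw [smul_smul, one_div_mul_cancel hb0.ne', one_smul]
          _ = _ := by rw [this, smul_add, smul_smul, smul_smul]; congr 2 <;> field_simp
    obtain ⟨ρ, τ, h1, h2, h3, rfl⟩ := hV w hw
    rw [hb', hpd, crs_polar] at h'
    rw [ha', hqd, crs_polar] at h
    have s1 : 0 < sin (τ - a) := by
      by_contra hn; push Not at hn
      have := mul_nonpos_of_nonneg_of_nonpos (mul_pos hr h1).le hn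
      linarith
    have s2 : 0 < sin (b - τ) := by
      by_contra hn; push Not at hn
      have := mul_nonpos_of_nonneg_of_nonpos (mul_pos h1 hs).le hn
      linarith
    have t1 : τ - a < π := by
      by_contra hn; push Not at hn
      have : 0 ≤ sin (τ - a - π) := sin_nonneg_of_nonneg_of_le_pi (by linarith) (by linarith)
      rw [sin_sub_pi] at this; linarith
    have : 0 ≤ sin (τ - b) := sin_nonneg_of_nonneg_of_le_pi (by linarith) (by linarith)
    rw [show b - τ = -(τ - b) by ring, sin_neg] at s2
    linarith
  refine ⟨hD0.le, ?_⟩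
  intro ρ θ hρ h1 h2 hx
  have hb := bound _ hx
  have hl : (crsL p - crsL q) (ρ • uE θ) = crs p (ρ • uE θ) + crs (ρ • uE θ) q := by
    rw [LinearMap.sub_apply]; rw [crs_swap (ρ • uE θ) q]; simp [crsL]; ring
  rw [hl] at hb
  refine ⟨_, _, ?_, ?_, ?_, decomp _⟩
  · rw [hqd, crs_polar]
    have : 0 ≤ sin (b - θ) := sin_nonneg_of_nonneg_of_le_pi (by linarith) (by linarith)
    positivity
  · rw [hpd, crs_polar]
    have : 0 ≤ sin (θ - a) := sin_nonneg_of_nonneg_of_le_pi (by linarith) (by linarith)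
    positivity
  · rw [← add_div, div_le_one hD0]; linarith


/-- angle normalised to `[-π/3, 5π/3)` -/
def ang (z : ℂ) : ℝ := toIcoMod two_pi_pos (-(π/3)) z.arg

lemma ang_mem (z : ℂ) : -(π/3) ≤ ang z ∧ ang z < 5*π/3 := by
  have := toIcoMod_mem_Ico two_pi_pos (-(π/3)) z.arg
  exact ⟨this.1, by have := this.2; unfold ang; linarith⟩

lemma polar_ang (z : ℂ) : z = ‖z‖ • uE (ang z) := by
  have h : uE (ang z) = uE z.arg := by
    have : ang z = z.arg - (toIcoDiv two_pi_pos (-(π/3)) z.arg) * (2*π) := by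
      unfold ang
      rw [toIcoMod]; simp
    rw [this]
    simp only [uE, Real.cos_sub_int_mul_two_pi, Real.sin_sub_int_mul_two_pi]
  rw [h]
  apply Complex.ext
  · simp [uE]
  · simp [uE]

lemma uE_add_two_pi (t : ℝ) : uE (t + 2*π) = uE t := by simp [uE]

theorem area_bound {K : Set ℂ} (hc : Convex ℝ K) (hK : IsCompact K) (h0 : (0:ℂ) ∈ interior K)
    {V : Finset ℂ} (hVe : K.extremePoints ℝ = V) (hb : ∀ z ∈ K, ‖z‖ ≤ 1) {γ : ℝ}
    (h23 : 2*π/3 ≤ γ) (h43 : γ ≤ 4*π/3) (h1 : ∀ z ∈ K, z.re ≤ 1/2)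
    (h2 : ∀ z ∈ K, z.re * cos γ + z.im * sin γ ≤ 1/2) :
    volume K ≤ ENNReal.ofReal (V.card * cB + cM) := by
  classical
  have hpi := pi_pos
  have h0K := interior_subset h0
  have hconv : K = convexHull ℝ (V : Set ℂ) := by
    have h := closure_convexHull_extremePoints hK hc
    rw [hVe, (V.finite_toSet.isCompact_convexHull ℝ).isClosed.closure_eq] at h
    exact h.symm
  have hVK : ∀ v ∈ V, v ∈ K := fun v hv => by
    rw [hconv]; exact subset_convexHull _ _ hv
  have hVx : ∀ v ∈ V, v ∈ K.extremePoints ℝ := fun v hv => by rw [hVe]; exact hv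
  have hV0 : ∀ v ∈ V, v ≠ 0 := by
    rintro v hv rfl
    have hx := hVx _ hv
    rw [mem_interior_iff_mem_nhds, Metric.mem_nhds_iff] at h0
    obtain ⟨ε, he, hb'⟩ := h0
    have m1 : ((ε/2 : ℝ) : ℂ) ∈ K := hb' (by
      simp only [mem_ball, dist_zero_right, Complex.norm_real, Real.norm_eq_abs]
      rw [abs_of_pos (by linarith)]; linarith)
    have m2 : (-(ε/2 : ℝ) : ℂ) ∈ K := hb' (by
      simp only [mem_ball, dist_zero_right, norm_neg, Complex.norm_real, Real.norm_eq_abs]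
      rw [abs_of_pos (by linarith)]; linarith)
    have := (mem_extremePoints.1 hx).2 _ m1 _ m2 ⟨1/2, 1/2, by norm_num, by norm_num, by norm_num, by
      simp⟩
    have h3 := this.1
    rw [Complex.ofReal_eq_zero] at h3
    linarith
  -- representatives
  have hrep : ∀ v : ℂ, ∃ R : VRep, v ∈ V → R.Ok ∧ Kind γ (ang v) R ∧ R.pt = v := by
    intro v
    by_cases hv : v ∈ V
    · obtain ⟨R, a1, a2, a3⟩ := exists_rep (γ := γ) (t := ang v) (r := ‖v‖)
        (norm_pos_iff.2 (hV0 v hv)) (hb v (hVK v hv)) (ang_mem v).1 (ang_mem v).2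
        (by have := h1 v (hVK v hv); rw [polar_ang v] at this; simpa [uE] using this)
        (by have := h2 v (hVK v hv)
            rw [polar_ang v] at this
            simp only [uE, Complex.smul_re, Complex.smul_im, smul_eq_mul] at this
            rw [cos_sub]; linarith)
      exact ⟨R, fun _ => ⟨a1, a2, a3.trans (polar_ang v).symm⟩⟩
    · exact ⟨⟨0,0,0,0,0,0⟩, fun h => absurd h hv⟩
  choose R hR using hrep
  -- injectivity of ang
  have hinj : ∀ v ∈ V, ∀ w ∈ V, ang v = ang w → ‖v‖ < ‖w‖ → False := by
    intro v hv w hw he hlt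
    refine extreme_no hc h0K (hVx v hv) (hV0 v hv) (hVK w hw) h0K (c := ‖v‖/‖w‖) (d := 0)
      (div_pos (norm_pos_iff.2 (hV0 v hv)) (norm_pos_iff.2 (hV0 w hw))) le_rfl ?_ ?_
    · rw [add_zero, div_lt_one (norm_pos_iff.2 (hV0 w hw))]; exact hlt
    · have hw0 := (norm_pos_iff.2 (hV0 w hw))
      conv_lhs => rw [polar_ang v]
      conv_rhs => rw [polar_ang w]
      rw [norm_smul, norm_uE, he, smul_smul, smul_zero, add_zero]
      congr 1
      simp; field_simp
  have hinj' : ∀ v ∈ V, ∀ w ∈ V, ang v = ang w → v = w := by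
    intro v hv w hw he
    rcases lt_trichotomy ‖v‖ ‖w‖ with h | h | h
    · exact (hinj v hv w hw he h).elim
    · rw [polar_ang v, polar_ang w, he, h]
    · exact (hinj w hw v hv he.symm h).elim
  have hcard : (V.image ang).card = V.card := Finset.card_image_of_injOn (fun v hv w hw h => hinj' v hv w hw h)
  have hne : V.Nonempty := by
    rw [Finset.nonempty_iff_ne_empty]; rintro rfl
    rw [hconv] at h0K; simp at h0K
  obtain ⟨n, hn⟩ : ∃ n, V.card = n + 1 := ⟨V.card - 1, by have := hne.card_pos; omega⟩
  set T := (V.image ang).orderEmbOfFin (hcard.trans hn) with hT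
  have hTmem : ∀ i, ∃ v, v ∈ V ∧ ang v = T i := by
    intro i
    have := Finset.orderEmbOfFin_mem (V.image ang) (hcard.trans hn) i
    exact Finset.mem_image.1 this
  choose P hPV hPT using hTmem
  have hsurj : ∀ v ∈ V, ∃ i, v = P i := by
    intro v hv
    have : ang v ∈ Set.range T := by
      rw [hT, Finset.range_orderEmbOfFin]; exact Finset.mem_coe.2 (Finset.mem_image_of_mem _ hv)
    obtain ⟨i, hi⟩ := this
    exact ⟨i, hinj' v hv _ (hPV i) (hi.symm.trans (hPT i).symm)⟩
  have hPpol : ∀ i, P i = ‖P i‖ • uE (T i) := fun i => by rw [← hPT]; exact polar_ang _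
  have hPpos : ∀ i, 0 < ‖P i‖ := fun i => norm_pos_iff.2 (hV0 _ (hPV i))
  have hTb : ∀ i, -(π/3) ≤ T i ∧ T i < 5*π/3 := fun i => by rw [← hPT]; exact ang_mem _
  have hmono : ∀ {i j}, i < j → T i < T j := fun h => T.strictMono h
  have hmono' : ∀ {i j}, i ≤ j → T i ≤ T j := fun h => T.monotone h
  -- edges
  have edge : ∀ i : Fin n, 0 ≤ crs (P i.castSucc) (P i.succ) ∧
      ∀ ρ θ : ℝ, 0 ≤ ρ → T i.castSucc ≤ θ → θ ≤ T i.succ → ρ • uE θ ∈ K →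
        ρ • uE θ ∈ tri (P i.castSucc) (P i.succ) := by
    intro i
    have := edge_all hconv h0 (hPpos i.castSucc) (hPpos i.succ)
      (hmono (Fin.castSucc_lt_succ (i := i))) (by linarith [(hTb i.castSucc).1, (hTb i.succ).2])
      (by rw [← hPpol]; exact hVx _ (hPV _)) (by rw [← hPpol]; exact hVx _ (hPV _)) (by
        intro v hv
        obtain ⟨j, rfl⟩ := hsurj v hv
        rcases le_or_gt j i.castSucc with h | h
        · refine ⟨‖P j‖, T j + 2*π, hPpos j, ?_, ?_, ?_⟩
          · linarith [(hTb j).1, (hTb i.succ).2]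
          · linarith [hmono' h]
          · rw [uE_add_two_pi]; exact hPpol j
        · refine ⟨‖P j‖, T j, hPpos j, ?_, ?_, hPpol j⟩
          · exact hmono' (Fin.castSucc_lt_iff_succ_le.1 h)
          · linarith [(hTb j).2, (hTb i.castSucc).1])
    rwa [← hPpol, ← hPpol] at this
  have wrap : 0 ≤ crs (P (Fin.last n)) (P 0) ∧
      ∀ ρ θ : ℝ, 0 ≤ ρ → T (Fin.last n) ≤ θ → θ ≤ T 0 + 2*π → ρ • uE θ ∈ K →
        ρ • uE θ ∈ tri (P (Fin.last n)) (P 0) := by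
    have h00 : T 0 ≤ T (Fin.last n) := hmono' (Fin.zero_le _)
    have := edge_all hconv h0 (hPpos (Fin.last n)) (hPpos 0) (a := T (Fin.last n)) (b := T 0 + 2*π)
      (by linarith [(hTb 0).1, (hTb (Fin.last n)).2]) (by linarith)
      (by rw [← hPpol]; exact hVx _ (hPV _)) (by rw [uE_add_two_pi, ← hPpol]; exact hVx _ (hPV _)) (by
        intro v hv
        obtain ⟨j, rfl⟩ := hsurj v hv
        refine ⟨‖P j‖, T j + 2*π, hPpos j, ?_, ?_, ?_⟩
        · linarith [hmono' (Fin.zero_le j)]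
        · linarith [hmono' (Fin.le_last j)]
        · rw [uE_add_two_pi]; exact hPpol j)
    rwa [uE_add_two_pi, ← hPpol, ← hPpol] at this
  -- covering
  have cover : K ⊆ (⋃ i : Fin n, tri (P i.castSucc) (P i.succ)) ∪ tri (P (Fin.last n)) (P 0) := by
    intro x hx
    by_cases hlast : T (Fin.last n) ≤ ang x
    · right
      rw [polar_ang x] at hx ⊢
      exact wrap.2 _ _ (norm_nonneg _) hlast (by linarith [(ang_mem x).2, (hTb 0).1]) hx
    by_cases hfirst : ang x < T 0
    · right
      have e : x = ‖x‖ • uE (ang x + 2*π) := by rw [uE_add_two_pi]; exact polar_ang x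
      rw [e] at hx ⊢
      exact wrap.2 _ _ (norm_nonneg _) (by linarith [(ang_mem x).1, (hTb (Fin.last n)).2]) (by linarith) hx
    push Not at hlast hfirst
    left
    have : ∃ i : Fin n, T i.castSucc ≤ ang x ∧ ang x ≤ T i.succ := by
      by_contra hno
      push Not at hno
      have : ∀ i : Fin (n+1), T i ≤ ang x := by
        intro i
        induction i using Fin.induction with
        | zero => exact hfirst
        | succ i ih => exact (hno i ih).le
      linarith [this (Fin.last n)]
    obtain ⟨i, hi1, hi2⟩ := this
    rw [Set.mem_iUnion]
    refine ⟨i, ?_⟩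
    rw [polar_ang x] at hx ⊢
    exact (edge i).2 _ _ (norm_nonneg _) hi1 hi2 hx
  have hRo : ∀ i, (R (P i)).Ok := fun i => (hR _ (hPV i)).1
  have hRk : ∀ i, Kind γ (T i) (R (P i)) := fun i => hPT i ▸ (hR _ (hPV i)).2.1
  have hRp : ∀ i, (R (P i)).pt = P i := fun i => (hR _ (hPV i)).2.2
  have e1 : ∀ i : Fin n, crs (P i.castSucc) (P i.succ) / 2 ≤
      cB + (R (P i.succ)).pot - (R (P i.castSucc)).pot := by
    intro i
    have := kind_edge h23 (hRo i.castSucc) (hRo i.succ) (hRk i.castSucc) (hRk i.succ)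
      (hmono (Fin.castSucc_lt_succ (i := i)))
    rw [hRp, hRp] at this
    exact this (edge i).1
  have e2 : crs (P (Fin.last n)) (P 0) / 2 ≤ cB + ((R (P 0)).pot + cM) - (R (P (Fin.last n))).pot := by
    have := kind_wrap h23 h43 (hRo (Fin.last n)) (hRo 0) (hRk (Fin.last n)) (hRk 0)
      (hmono' (Fin.zero_le _))
    rw [hRp, hRp] at this
    exact this wrap.1
  have tele : ∑ i : Fin n, ((R (P i.succ)).pot - (R (P i.castSucc)).pot) =
      (R (P (Fin.last n))).pot - (R (P 0)).pot := by
    have a1 := Fin.sum_univ_succ (fun i => (R (P i)).pot)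
    have a2 := Fin.sum_univ_castSucc (fun i => (R (P i)).pot)
    rw [Finset.sum_sub_distrib]; linarith
  have tot : ∑ i : Fin n, crs (P i.castSucc) (P i.succ) / 2 + crs (P (Fin.last n)) (P 0) / 2
      ≤ V.card * cB + cM := by
    have : ∑ i : Fin n, crs (P i.castSucc) (P i.succ) / 2 ≤ ∑ i : Fin n,
      (cB + ((R (P i.succ)).pot - (R (P i.castSucc)).pot)) :=
        Finset.sum_le_sum (fun i _ => by linarith [e1 i])
    rw [Finset.sum_add_distrib, tele] at this
    simp at this
    rw [hn]; push_cast
    linarith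
  calc volume K ≤ volume ((⋃ i : Fin n, tri (P i.castSucc) (P i.succ)) ∪ tri (P (Fin.last n)) (P 0)) :=
        measure_mono cover
    _ ≤ volume (⋃ i : Fin n, tri (P i.castSucc) (P i.succ)) + volume (tri (P (Fin.last n)) (P 0)) :=
        measure_union_le _ _
    _ ≤ ∑ i : Fin n, volume (tri (P i.castSucc) (P i.succ)) + volume (tri (P (Fin.last n)) (P 0)) := by
        gcongr; exact measure_iUnion_fintype_le _ _
    _ ≤ ∑ i : Fin n, ENNReal.ofReal (crs (P i.castSucc) (P i.succ) / 2) +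
          ENNReal.ofReal (crs (P (Fin.last n)) (P 0) / 2) := by
        gcongr with i
        · refine (tri_vol _ _).trans ?_
          rw [abs_of_nonneg (edge i).1]
        · refine (tri_vol _ _).trans ?_
          rw [abs_of_nonneg wrap.1]
    _ = ENNReal.ofReal (∑ i : Fin n, crs (P i.castSucc) (P i.succ) / 2 + crs (P (Fin.last n)) (P 0) / 2) := by
        rw [ENNReal.ofReal_add, ENNReal.ofReal_sum_of_nonneg]
        · intro i _; linarith [(edge i).1]
        · exact Finset.sum_nonneg (fun i _ => by linarith [(edge i).1])
        · linarith [wrap.1]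
    _ ≤ _ := ENNReal.ofReal_le_ofReal tot


/-- squared distance -/
def qd (x c : ℂ) : ℝ := (x.re - c.re)^2 + (x.im - c.im)^2

lemma qd_eq (x c : ℂ) : qd x c = ‖x - c‖^2 := by
  rw [← Complex.normSq_eq_norm_sq, Complex.normSq_apply, qd]; simp; ring

lemma qd_nonneg (x c : ℂ) : 0 ≤ qd x c := by unfold qd; positivity

lemma qd_cont (c : ℂ) : Continuous (fun x => qd x c) := by
  unfold qd; fun_prop

lemma qd_le_iff (x c d : ℂ) : qd x c ≤ qd x d ↔ ‖x - c‖ ≤ ‖x - d‖ := by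
  rw [qd_eq, qd_eq, sq_le_sq₀ (norm_nonneg _) (norm_nonneg _)]

structure LF (S : Set ℂ) : Prop where
  fin : ∀ (z : ℂ) (R : ℝ), (S ∩ closedBall z R).Finite
  cov : ∀ z : ℂ, ∃ c ∈ S, ‖z - c‖ ≤ 1

def cell (S : Set ℂ) (c : ℂ) : Set ℂ := {x | ∀ d ∈ S, qd x c ≤ qd x d}
def near (S : Set ℂ) (v : ℂ) : Set ℂ := {c | c ∈ S ∧ v ∈ cell S c}

variable {S : Set ℂ}

lemma cell_norm (h : LF S) {c x : ℂ} (hx : x ∈ cell S c) : ‖x - c‖ ≤ 1 := by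
  obtain ⟨d, hd, hd1⟩ := h.cov x
  exact ((qd_le_iff _ _ _).1 (hx d hd)).trans hd1

lemma near_finite (h : LF S) (v : ℂ) : (near S v).Finite := by
  apply (h.fin v 1).subset
  rintro c ⟨hc, hv⟩
  refine ⟨hc, ?_⟩
  rw [mem_closedBall, dist_comm, dist_eq_norm]; exact cell_norm h hv

lemma near_nonempty (h : LF S) (v : ℂ) : (near S v).Nonempty := by
  obtain ⟨d, hd, hd1⟩ := h.cov v
  have hd' : d ∈ S ∩ closedBall v 1 := ⟨hd, by rwa [mem_closedBall, dist_comm, dist_eq_norm]⟩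
  obtain ⟨c, hc, hmin⟩ := Set.exists_min_image _ (fun c => ‖v - c‖) (h.fin v 1) ⟨d, hd'⟩
  refine ⟨c, hc.1, fun e he => ?_⟩
  rw [qd_le_iff]
  by_cases h1 : ‖v - e‖ ≤ 1
  · exact hmin e ⟨he, by rwa [mem_closedBall, dist_comm, dist_eq_norm]⟩
  · push Not at h1
    exact ((hmin d hd').trans hd1).trans h1.le

lemma near_local (h : LF S) {v c : ℂ} (hc : c ∈ near S v) :
    ∀ᶠ x in nhds v, ∀ d ∈ S, d ∉ near S v → qd x c ≤ qd x d := by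
  have h1 : ∀ᶠ x in nhds v, ∀ d ∈ S ∩ closedBall v 3, d ∉ near S v → qd x c ≤ qd x d := by
    rw [eventually_all_finite (h.fin v 3)]
    intro d hd
    by_cases hdn : d ∈ near S v
    · exact Eventually.of_forall (fun x hx => absurd hdn hx)
    · have : qd v c < qd v d := by
        by_contra hcon
        push Not at hcon
        exact hdn ⟨hd.1, fun e he => hcon.trans (hc.2 e he)⟩
      filter_upwards [(qd_cont c).continuousAt.eventually_lt (qd_cont d).continuousAt this] with x hx _
      exact hx.le
  filter_upwards [h1, Metric.ball_mem_nhds v one_pos] with x hx hxb d hd hdn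
  by_cases h3 : d ∈ closedBall v 3
  · exact hx d ⟨hd, h3⟩ hdn
  · rw [qd_le_iff]
    have a1 := cell_norm h hc.2
    rw [mem_closedBall, dist_comm] at h3
    push Not at h3
    rw [mem_ball] at hxb
    have a2 : dist x c ≤ dist x v + dist v c := dist_triangle _ _ _
    have a3 : dist v d ≤ dist v x + dist x d := dist_triangle _ _ _
    rw [← dist_eq_norm] at *
    rw [dist_comm v x] at a3
    rw [← dist_eq_norm]
    linarith

lemma cell_isClosed (c : ℂ) : IsClosed (cell S c) := by
  have : cell S c = ⋂ d ∈ S, {x | qd x c ≤ qd x d} := by ext; simp [cell]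
  rw [this]
  exact isClosed_biInter (fun d _ => isClosed_le (qd_cont c) (qd_cont d))

lemma cell_convex (c : ℂ) : Convex ℝ (cell S c) := by
  intro x hx y hy a b ha hb hab d hd
  have h1 := mul_le_mul_of_nonneg_left (hx d hd) ha
  have h2 := mul_le_mul_of_nonneg_left (hy d hd) hb
  obtain rfl : b = 1 - a := by linarith
  simp only [qd, Complex.add_re, Complex.add_im, Complex.smul_re, Complex.smul_im, smul_eq_mul] at *
  nlinarith

lemma cell_compact (h : LF S) (c : ℂ) : IsCompact (cell S c) := by
  apply (isCompact_closedBall c 1).of_isClosed_subset (cell_isClosed c)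
  intro x hx
  rw [mem_closedBall, dist_eq_norm]; exact cell_norm h hx

lemma cell_self {c : ℂ} : c ∈ cell S c := by
  intro d _
  have : qd c c = 0 := by simp [qd]
  rw [this]; exact qd_nonneg _ _

lemma qd_zero {x c : ℂ} (h : qd x c ≤ 0) : x = c := by
  rw [qd_eq] at h
  have : ‖x - c‖ = 0 := by nlinarith [norm_nonneg (x - c)]
  rwa [norm_eq_zero, sub_eq_zero] at this

lemma cell_interior (h : LF S) {c : ℂ} (hc : c ∈ S) : c ∈ interior (cell S c) := by
  rw [mem_interior_iff_mem_nhds]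
  filter_upwards [near_local h (v := c) (c := c) ⟨hc, cell_self⟩] with x hx d hd
  by_cases hdn : d ∈ near S c
  · have : c = d := by
      apply qd_zero
      have := hdn.2 c hc
      simpa [qd] using this
    rw [this]
  · exact hx d hd hdn

/-- circle property: three distinct concyclic points are not collinear -/
lemma circ {v a b c : ℂ} (h1 : qd v a = qd v c) (h2 : qd v b = qd v c) (hac : a ≠ c) (hbc : b ≠ c)
    (hab : a ≠ b) : crs (a - c) (b - c) ≠ 0 := by
  intro h0
  have hA : 0 < (a.re - c.re)^2 + (a.im - c.im)^2 := by
    by_contra hcon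
    push Not at hcon
    exact hac (qd_zero hcon)
  set A := (a.re - c.re)^2 + (a.im - c.im)^2 with hAd
  set s := ((b.re - c.re)*(a.re - c.re) + (b.im - c.im)*(a.im - c.im)) / A with hs
  simp only [crs, Complex.sub_re, Complex.sub_im] at h0
  have e1 : b.re - c.re = s * (a.re - c.re) := by
    rw [hs]; field_simp; rw [hAd]; linear_combination (-(a.im - c.im)) * h0
  have e2 : b.im - c.im = s * (a.im - c.im) := by
    rw [hs]; field_simp; rw [hAd]; linear_combination ((a.re - c.re)) * h0
  have hbr : b.re = c.re + s * (a.re - c.re) := by linarith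
  have hbi : b.im = c.im + s * (a.im - c.im) := by linarith
  simp only [qd] at h1 h2
  rw [hbr, hbi] at h2
  have h3 : s * (s - 1) * A = 0 := by rw [hAd]; linear_combination h2 - s * h1
  rcases mul_eq_zero.1 h3 with h3 | h3
  · rcases mul_eq_zero.1 h3 with h3 | h3
    · apply hbc; apply Complex.ext
      · rw [hbr, h3]; ring
      · rw [hbi, h3]; ring
    · apply hab; apply Complex.ext
      · rw [hbr, show s = 1 by linarith]; ring
      · rw [hbi, show s = 1 by linarith]; ring
  · linarith

lemma near_eq {v c d : ℂ} (hc : c ∈ near S v) (hd : d ∈ near S v) : qd v c = qd v d :=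
  le_antisymm (hc.2 d hd.1) (hd.2 c hc.1)

/-- vertices of the cell of `c` -/
def verts (S : Set ℂ) (c : ℂ) : Set ℂ :=
  {v | c ∈ near S v ∧ ∃ a ∈ near S v, ∃ b ∈ near S v, a ≠ c ∧ b ≠ c ∧ a ≠ b}

lemma verts_finite (h : LF S) (c : ℂ) : (verts S c).Finite := by
  have hT := h.fin c 2
  apply (Set.Finite.biUnion hT (fun a _ => Set.Finite.biUnion hT
    (fun b _ => Set.Subsingleton.finite (s := {v | qd v a = qd v c ∧ qd v b = qd v c ∧ a ≠ c ∧ b ≠ c ∧ a ≠ b}) ?_))).subset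
  · rintro v ⟨hc, a, ha, b, hb, h1, h2, h3⟩
    simp only [Set.mem_iUnion]
    have key : ∀ d ∈ near S v, d ∈ S ∩ closedBall c 2 := by
      intro d hd
      refine ⟨hd.1, ?_⟩
      have := cell_norm h hd.2
      have t2 := cell_norm h hc.2
      rw [← dist_eq_norm] at this t2
      rw [mem_closedBall]
      have := dist_triangle d v c
      rw [dist_comm d v] at this
      linarith
    exact ⟨a, key a ha, b, key b hb, near_eq ha hc, near_eq hb hc, h1, h2, h3⟩
  · rintro v ⟨v1, v2, v3, v4, v5⟩ w ⟨w1, w2, -, -, -⟩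
    have hcr := circ v1 v2 v3 v4 v5
    simp only [qd] at v1 v2 w1 w2
    simp only [crs, Complex.sub_re, Complex.sub_im] at hcr
    apply Complex.ext
    · apply mul_left_cancel₀ hcr
      linear_combination (-1/2) * (b.im - c.im) * (v1 - w1) - (-1/2) * (a.im - c.im) * (v2 - w2)
    · apply mul_left_cancel₀ hcr
      linear_combination (-1/2) * (a.re - c.re) * (v2 - w2) - (-1/2) * (b.re - c.re) * (v1 - w1)

lemma extreme_sub (h : LF S) {c : ℂ} (hc : c ∈ S) : (cell S c).extremePoints ℝ ⊆ verts S c := by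
  intro v hv
  have hvc := extremePoints_subset hv
  refine ⟨⟨hc, hvc⟩, ?_⟩
  by_contra hcon
  push Not at hcon
  obtain ⟨e, hec, hsub⟩ : ∃ e, e ≠ c ∧ ∀ d ∈ near S v, d = c ∨ d = e := by
    by_cases hx : ∃ e ∈ near S v, e ≠ c
    · obtain ⟨e, he, hec⟩ := hx
      refine ⟨e, hec, fun d hd => ?_⟩
      by_cases hdc : d = c
      · exact Or.inl hdc
      · exact Or.inr (hcon d hd e he hdc hec)
    · push Not at hx
      exact ⟨c + 1, by simp, fun d hd => Or.inl (hx d hd)⟩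
  set u : ℂ := ⟨-(e.im - c.im), e.re - c.re⟩ with hu
  have hu0 : u ≠ 0 := by
    intro h0
    apply hec
    have a1 := congrArg Complex.re h0
    have a2 := congrArg Complex.im h0
    simp [hu] at a1 a2
    apply Complex.ext <;> linarith
  have hloc := near_local h (v := v) (c := c) ⟨hc, hvc⟩
  have key : ∀ᶠ s : ℝ in nhds 0, v + s • u ∈ cell S c := by
    have ht : Tendsto (fun s : ℝ => v + s • u) (nhds 0) (nhds v) := by
      have : Continuous (fun s : ℝ => v + s • u) := by fun_prop
      have := this.tendsto 0
      simpa using this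
    filter_upwards [ht.eventually hloc] with s hs d hd
    by_cases hdn : d ∈ near S v
    · rcases hsub d hdn with rfl | rfl
      · exact le_rfl
      · have := near_eq (⟨hc, hvc⟩ : c ∈ near S v) hdn
        simp only [qd, Complex.add_re, Complex.add_im, Complex.smul_re, Complex.smul_im, smul_eq_mul, hu] at *
        nlinarith
    · exact hs d hd hdn
  have key2 : ∀ᶠ s : ℝ in nhds 0, v + (-s) • u ∈ cell S c := by
    have : Tendsto (fun s : ℝ => -s) (nhds 0) (nhds 0) := by
      have := (continuous_neg (G := ℝ)).tendsto 0
      simpa using this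
    exact this.eventually key
  obtain ⟨ε, he, hb⟩ := Metric.eventually_nhds_iff.1 (key.and key2)
  have hh := hb (y := ε/2) (by simp [abs_of_pos he]; linarith)
  have := (mem_extremePoints.1 hv).2 _ hh.1 _ hh.2 ⟨1/2, 1/2, by norm_num, by norm_num, by norm_num, by
    module⟩
  have h3 : (ε/2) • u = 0 := by simpa using this.1
  rw [smul_eq_zero] at h3
  rcases h3 with h3 | h3
  · linarith
  · exact hu0 h3


def ell (t : ℝ) (x : ℂ) : ℝ := t * x.re + x.im
def sgm (t : ℝ) (c : ℂ) : ℝ := c.re - t * c.im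

lemma exists_slope {S : Set ℂ} (hS : S.Countable) :
    ∃ t : ℝ, ∀ c ∈ S, ∀ d ∈ S, sgm t c = sgm t d → c = d := by
  have hcnt : ((fun p : ℂ × ℂ => (p.1.re - p.2.re)/(p.1.im - p.2.im)) '' (S ×ˢ S)).Countable :=
    (hS.prod hS).image _
  obtain ⟨t, ht⟩ : ∃ t : ℝ, t ∉ ((fun p : ℂ × ℂ => (p.1.re - p.2.re)/(p.1.im - p.2.im)) '' (S ×ˢ S)) := by
    by_contra hcon
    push Not at hcon
    have : (Set.univ : Set ℝ).Countable := hcnt.mono (fun t _ => hcon t)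
    exact Set.not_countable_univ this
  refine ⟨t, fun c hc d hd he => ?_⟩
  unfold sgm at he
  by_cases him : c.im = d.im
  · rw [him] at he
    exact Complex.ext (by linarith) him
  · exfalso
    apply ht
    refine ⟨(c, d), ⟨hc, hd⟩, ?_⟩
    have : c.im - d.im ≠ 0 := sub_ne_zero.2 him
    simp only
    field_simp
    linarith

def isTop (S : Set ℂ) (t : ℝ) (c v : ℂ) : Prop := v ∈ cell S c ∧ ∀ x ∈ cell S c, ell t x ≤ ell t v
def isBot (S : Set ℂ) (t : ℝ) (c v : ℂ) : Prop := v ∈ cell S c ∧ ∀ x ∈ cell S c, ell t v ≤ ell t x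

lemma level_unique {S : Set ℂ} (h : LF S) {t : ℝ} (ht : ∀ c ∈ S, ∀ d ∈ S, sgm t c = sgm t d → c = d)
    {c v w : ℂ} (hc : c ∈ S) (hv : v ∈ cell S c) (hw : w ∈ cell S c) (he : ell t v = ell t w)
    (hext : (∀ x ∈ cell S c, ell t x ≤ ell t v) ∨ (∀ x ∈ cell S c, ell t v ≤ ell t x)) : v = w := by
  by_contra hne
  set m : ℂ := (1/2 : ℝ) • v + (1/2 : ℝ) • w with hm
  have hmc : m ∈ cell S c := cell_convex c hv hw (by norm_num) (by norm_num) (by norm_num)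
  have hem : ell t m = ell t v := by
    simp only [ell, hm, Complex.add_re, Complex.add_im, Complex.smul_re, Complex.smul_im, smul_eq_mul] at *
    linarith
  have hex : ∃ d ∈ near S m, d ≠ c := by
    by_contra hno
    push Not at hno
    have hloc := near_local h (v := m) (c := c) ⟨hc, hmc⟩
    obtain ⟨ε, hε, hb⟩ := Metric.eventually_nhds_iff.1 hloc
    have key : ∀ x, dist x m < ε → x ∈ cell S c := by
      intro x hx d hd
      by_cases hdn : d ∈ near S m
      · rw [hno d hdn]
      · exact hb hx d hd hdn
    have k1 := key (m + ⟨0, ε/2⟩) (by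
      rw [dist_eq_norm, add_sub_cancel_left]
      refine (Complex.norm_le_abs_re_add_abs_im _).trans_lt ?_
      simp [abs_of_pos (half_pos hε)]; linarith)
    have k2 := key (m + ⟨0, -(ε/2)⟩) (by
      rw [dist_eq_norm, add_sub_cancel_left]
      refine (Complex.norm_le_abs_re_add_abs_im _).trans_lt ?_
      simp [abs_of_pos (half_pos hε)]; linarith)
    rw [← hem] at hext
    rcases hext with hx | hx
    · have := hx _ k1
      simp [ell] at this; linarith
    · have := hx _ k2
      simp [ell] at this; linarith
  obtain ⟨d, hd, hdc⟩ := hex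
  apply hdc
  apply ht d hd.1 c hc
  have a1 := hv d hd.1
  have a2 := hw d hd.1
  have a3 := near_eq hd ⟨hc, hmc⟩
  have e1 : (v.re - w.re) * (d.re - c.re) + (v.im - w.im) * (d.im - c.im) = 0 := by
    simp only [qd, hm, Complex.add_re, Complex.add_im, Complex.smul_re, Complex.smul_im, smul_eq_mul] at *
    nlinarith
  unfold ell at he
  have e2 : v.im - w.im = - t * (v.re - w.re) := by linarith
  rw [e2] at e1
  have hre : v.re - w.re ≠ 0 := by
    intro h0
    apply hne
    apply Complex.ext
    · linarith
    · rw [h0] at e2; linarith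
  have e3 : (v.re - w.re) * ((d.re - c.re) - t * (d.im - c.im)) = 0 := by linear_combination e1
  have := (mul_eq_zero.1 e3).resolve_left hre
  unfold sgm; linarith

lemma cellTop_unique {S : Set ℂ} (h : LF S) {t : ℝ} (ht : ∀ c ∈ S, ∀ d ∈ S, sgm t c = sgm t d → c = d)
    {c v w : ℂ} (hc : c ∈ S) (hv : isTop S t c v) (hw : isTop S t c w) : v = w :=
  level_unique h ht hc hv.1 hw.1 (le_antisymm (hw.2 _ hv.1) (hv.2 _ hw.1)) (Or.inl hv.2)

lemma cellBot_unique {S : Set ℂ} (h : LF S) {t : ℝ} (ht : ∀ c ∈ S, ∀ d ∈ S, sgm t c = sgm t d → c = d)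
    {c v w : ℂ} (hc : c ∈ S) (hv : isBot S t c v) (hw : isBot S t c w) : v = w :=
  level_unique h ht hc hv.1 hw.1 (le_antisymm (hv.2 _ hw.1) (hw.2 _ hv.1)) (Or.inr hv.2)

lemma middle {S : Set ℂ} {t : ℝ} {c v : ℂ} (hv : v ∈ verts S c) (h1 : ¬ isTop S t c v)
    (h2 : ¬ isBot S t c v) :
    (∀ p ∈ near S v, sgm t p ≤ sgm t c) ∨ (∀ p ∈ near S v, sgm t c ≤ sgm t p) := by
  obtain ⟨hc, a, ha, b, hb, hac, hbc, hab⟩ := hv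
  unfold isTop at h1
  unfold isBot at h2
  push Not at h1 h2
  obtain ⟨x, hx, hxl⟩ := h1 hc.2
  obtain ⟨y, hy, hyl⟩ := h2 hc.2
  have dx : ∀ p ∈ near S v, (x.re - v.re) * (p.re - c.re) + (x.im - v.im) * (p.im - c.im) ≤ 0 := by
    intro p hp
    have e1 := hx p hp.1
    have e2 := near_eq hp hc
    simp only [qd] at e1 e2
    linarith
  have dy : ∀ p ∈ near S v, (y.re - v.re) * (p.re - c.re) + (y.im - v.im) * (p.im - c.im) ≤ 0 := by
    intro p hp
    have e1 := hy p hp.1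
    have e2 := near_eq hp hc
    simp only [qd] at e1 e2
    linarith
  set α := ell t x - ell t v with hα
  set β := ell t v - ell t y with hβ
  have hα0 : 0 < α := by linarith
  have hβ0 : 0 < β := by linarith
  set s := β * (x.re - v.re) + α * (y.re - v.re) with hs
  have him : β * (x.im - v.im) + α * (y.im - v.im) = - t * s := by
    rw [hs, hα, hβ]; simp only [ell]; ring
  have hcomb : ∀ p ∈ near S v, s * (sgm t p - sgm t c) ≤ 0 := by
    intro p hp
    have e1 := mul_le_mul_of_nonneg_left (dx p hp) hβ0.le
    have e2 := mul_le_mul_of_nonneg_left (dy p hp) hα0.le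
    have e3 : s * (sgm t p - sgm t c) = s * (p.re - c.re) + (- t * s) * (p.im - c.im) := by
      unfold sgm; ring
    rw [e3, ← him, hs]; linarith
  rcases lt_trichotomy s 0 with h | h | h
  · right; intro p hp
    have := hcomb p hp
    nlinarith
  · exfalso
    have hperp : ∀ p ∈ near S v, (x.re - v.re) * (p.re - c.re) + (x.im - v.im) * (p.im - c.im) = 0 := by
      intro p hp
      apply le_antisymm (dx p hp)
      have e1 := dy p hp
      have e2 : β * ((x.re - v.re) * (p.re - c.re) + (x.im - v.im) * (p.im - c.im)) =
        - (α * ((y.re - v.re) * (p.re - c.re) + (y.im - v.im) * (p.im - c.im))) := by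
        rw [h] at hs him
        linear_combination (p.im - c.im) * him - (p.re - c.re) * hs
      by_contra hneg
      push Not at hneg
      have := mul_neg_of_pos_of_neg hβ0 hneg
      have := mul_le_mul_of_nonneg_left e1 hα0.le
      linarith
    have hA := hperp a ha
    have hB := hperp b hb
    apply circ (near_eq ha hc) (near_eq hb hc) hac hbc hab
    simp only [crs, Complex.sub_re, Complex.sub_im]
    by_cases hxr : x.re - v.re = 0
    · have hxi : x.im - v.im ≠ 0 := by
        intro h0
        have : α = 0 := by rw [hα]; unfold ell; rw [show x.re = v.re by linarith, show x.im = v.im by linarith]; ring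
        linarith
      apply mul_left_cancel₀ hxi
      linear_combination (a.re - c.re) * hB - (b.re - c.re) * hA
    · apply mul_left_cancel₀ hxr
      linear_combination (b.im - c.im) * hA - (a.im - c.im) * hB
  · left; intro p hp
    have := hcomb p hp
    nlinarith

open Classical in
lemma vertex_count {S : Set ℂ} (h : LF S) {t : ℝ} (ht : ∀ c ∈ S, ∀ d ∈ S, sgm t c = sgm t d → c = d)
    {G : Finset ℂ} {v : ℂ} (hG : ∀ c ∈ near S v, c ∈ G) {c₀ : ℂ} (hv : v ∈ verts S c₀) :
    (G.filter (fun c => c ∈ near S v)).card ≤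
      3 * ((G.filter (fun c => isTop S t c v)).card + (G.filter (fun c => isBot S t c v)).card) := by
  set M := G.filter (fun c => c ∈ near S v) with hM
  have hall : ∀ c ∈ M, v ∈ verts S c := by
    intro c hc
    have hc' := (Finset.mem_filter.1 hc).2
    obtain ⟨h0, a, ha, b, hb, h1, h2, h3⟩ := hv
    refine ⟨hc', ?_⟩
    by_cases e1 : c₀ = c
    · subst e1; exact ⟨a, ha, b, hb, h1, h2, h3⟩
    by_cases e2 : a = c
    · subst e2; exact ⟨c₀, h0, b, hb, e1, h3.symm, h2.symm⟩
    · exact ⟨c₀, h0, a, ha, e1, e2, h1.symm⟩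
  have h3 : 3 ≤ M.card := by
    obtain ⟨h0, a, ha, b, hb, h1, h2, h3⟩ := hv
    have : ({c₀, a, b} : Finset ℂ) ⊆ M := by
      intro x hx
      simp only [Finset.mem_insert, Finset.mem_singleton] at hx
      rw [hM, Finset.mem_filter]
      rcases hx with rfl | rfl | rfl
      · exact ⟨hG _ h0, h0⟩
      · exact ⟨hG _ ha, ha⟩
      · exact ⟨hG _ hb, hb⟩
    calc 3 = ({c₀, a, b} : Finset ℂ).card := (Finset.card_eq_three.2 ⟨c₀, a, b, h1.symm, h2.symm, h3, rfl⟩).symm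
      _ ≤ _ := Finset.card_le_card this
  have hsub : M ⊆ ((G.filter (fun c => isTop S t c v)) ∪ (G.filter (fun c => isBot S t c v))) ∪
      ((M.filter (fun c => ∀ p ∈ near S v, sgm t p ≤ sgm t c)) ∪
       (M.filter (fun c => ∀ p ∈ near S v, sgm t c ≤ sgm t p))) := by
    intro c hc
    have hcG := (Finset.mem_filter.1 hc).1
    simp only [Finset.mem_union, Finset.mem_filter]
    by_cases k1 : isTop S t c v
    · exact Or.inl (Or.inl ⟨hcG, k1⟩)
    by_cases k2 : isBot S t c v
    · exact Or.inl (Or.inr ⟨hcG, k2⟩)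
    rcases middle (hall c hc) k1 k2 with k | k
    · exact Or.inr (Or.inl ⟨hc, k⟩)
    · exact Or.inr (Or.inr ⟨hc, k⟩)
  have hone : ∀ c ∈ M, c ∈ near S v := fun c hc => (Finset.mem_filter.1 hc).2
  have c1 : (M.filter (fun c => ∀ p ∈ near S v, sgm t p ≤ sgm t c)).card ≤ 1 := by
    rw [Finset.card_le_one]
    intro a ha b hb
    obtain ⟨a1, a2⟩ := Finset.mem_filter.1 ha
    obtain ⟨b1, b2⟩ := Finset.mem_filter.1 hb
    exact ht a (hone a a1).1 b (hone b b1).1 (le_antisymm (b2 a (hone a a1)) (a2 b (hone b b1)))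
  have c2 : (M.filter (fun c => ∀ p ∈ near S v, sgm t c ≤ sgm t p)).card ≤ 1 := by
    rw [Finset.card_le_one]
    intro a ha b hb
    obtain ⟨a1, a2⟩ := Finset.mem_filter.1 ha
    obtain ⟨b1, b2⟩ := Finset.mem_filter.1 hb
    exact ht a (hone a a1).1 b (hone b b1).1 (le_antisymm (a2 b (hone b b1)) (b2 a (hone a a1)))
  have := (Finset.card_le_card hsub).trans ((Finset.card_union_le _ _).trans
    (add_le_add (Finset.card_union_le _ _) (Finset.card_union_le _ _)))
  omega

open Classical in
theorem total_verts {S : Set ℂ} (h : LF S) (hS : S.Countable) (F G : Finset ℂ) (hFS : ∀ c ∈ F, c ∈ S)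
    (hGS : ∀ c ∈ G, c ∈ S) (hG : ∀ c ∈ F, ∀ v ∈ cell S c, ∀ d ∈ near S v, d ∈ G) :
    ∑ c ∈ F, (verts_finite h c).toFinset.card ≤ 6 * G.card := by
  obtain ⟨t, ht⟩ := exists_slope hS
  set W : Finset ℂ := F.biUnion (fun c => (verts_finite h c).toFinset) with hW
  have hWc : ∀ v ∈ W, ∃ c ∈ F, v ∈ verts S c := by
    intro v hv
    obtain ⟨c, hc, hv⟩ := Finset.mem_biUnion.1 hv
    exact ⟨c, hc, (Set.Finite.mem_toFinset _).1 hv⟩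
  have hFG : F ⊆ G := fun c hc => hG c hc c cell_self c ⟨hFS c hc, cell_self⟩
  have s1 : ∑ c ∈ F, (verts_finite h c).toFinset.card ≤ ∑ c ∈ G, (W.filter (fun v => c ∈ near S v)).card := by
    refine (Finset.sum_le_sum (fun c hc => Finset.card_le_card ?_)).trans
      (Finset.sum_le_sum_of_subset hFG)
    intro v hv
    have hv' := (Set.Finite.mem_toFinset _).1 hv
    exact Finset.mem_filter.2 ⟨Finset.mem_biUnion.2 ⟨c, hc, hv⟩, hv'.1⟩
  have s2 : ∑ c ∈ G, (W.filter (fun v => c ∈ near S v)).card = ∑ v ∈ W, (G.filter (fun c => c ∈ near S v)).card :=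
    Finset.sum_card_bipartiteAbove_eq_sum_card_bipartiteBelow (fun c v => c ∈ near S v)
  have s3 : ∑ v ∈ W, (G.filter (fun c => c ∈ near S v)).card ≤ ∑ v ∈ W,
      3 * ((G.filter (fun c => isTop S t c v)).card + (G.filter (fun c => isBot S t c v)).card) := by
    apply Finset.sum_le_sum
    intro v hv
    obtain ⟨c, hc, hvc⟩ := hWc v hv
    exact vertex_count h ht (hG c hc v hvc.1.2) hvc
  have s4 : ∑ c ∈ G, (W.filter (fun v => isTop S t c v)).card = ∑ v ∈ W, (G.filter (fun c => isTop S t c v)).card :=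
    Finset.sum_card_bipartiteAbove_eq_sum_card_bipartiteBelow (fun c v => isTop S t c v)
  have s5 : ∑ c ∈ G, (W.filter (fun v => isBot S t c v)).card = ∑ v ∈ W, (G.filter (fun c => isBot S t c v)).card :=
    Finset.sum_card_bipartiteAbove_eq_sum_card_bipartiteBelow (fun c v => isBot S t c v)
  have s6 : ∑ c ∈ G, (W.filter (fun v => isTop S t c v)).card ≤ ∑ c ∈ G, 1 := by
    apply Finset.sum_le_sum
    intro c hc
    rw [Finset.card_le_one]
    intro a ha b hb
    exact cellTop_unique h ht (hGS c hc) (Finset.mem_filter.1 ha).2 (Finset.mem_filter.1 hb).2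
  have s7 : ∑ c ∈ G, (W.filter (fun v => isBot S t c v)).card ≤ ∑ c ∈ G, 1 := by
    apply Finset.sum_le_sum
    intro c hc
    rw [Finset.card_le_one]
    intro a ha b hb
    exact cellBot_unique h ht (hGS c hc) (Finset.mem_filter.1 ha).2 (Finset.mem_filter.1 hb).2
  rw [← Finset.mul_sum, Finset.sum_add_distrib] at s3
  simp only [Finset.sum_const, smul_eq_mul, mul_one] at s6 s7
  omega


lemma uE_mul (a b : ℝ) : uE a * uE b = uE (a + b) := by
  apply Complex.ext
  · simp [uE, cos_add]
  · simp [uE, sin_add]; ring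

lemma uE_zero : uE 0 = 1 := by apply Complex.ext <;> simp [uE]

lemma polar_arg (z : ℂ) : z = (‖z‖ : ℂ) * uE z.arg := by
  apply Complex.ext
  · simp [uE]
  · simp [uE]

/-- the rigid motion z ↦ c + u z -/
def gmap (c : ℂ) (α : ℝ) (z : ℂ) : ℂ := c + uE α * z

lemma gmap_mp (c : ℂ) (α : ℝ) : MeasurePreserving (gmap c α) := by
  have h1 : MeasurePreserving (fun z : ℂ => uE α * z) := by
    have he : ((Circle.exp α : Circle) : ℂ) = uE α := by
      rw [Circle.coe_exp, Complex.exp_mul_I]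
      apply Complex.ext <;> simp [uE, Complex.cos_ofReal_re, Complex.sin_ofReal_re]
    have := (rotation (Circle.exp α)).measurePreserving
    convert this using 1
    funext z; rw [rotation_apply, he]
  exact (measurePreserving_add_left volume c).comp h1

lemma gmap_inj (c : ℂ) (α : ℝ) : Function.Injective (gmap c α) := by
  intro x y h
  have := add_left_cancel h
  exact mul_left_cancel₀ (uE_ne α) this

lemma gmap_inv (c : ℂ) (α : ℝ) (x : ℂ) : gmap c α (uE (-α) * (x - c)) = x := by
  unfold gmap
  rw [← mul_assoc, uE_mul, add_neg_cancel, uE_zero]; ring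

lemma gmap_cont (c : ℂ) (α : ℝ) : Continuous (gmap c α) := by unfold gmap; fun_prop

lemma gmap_comb (c : ℂ) (α : ℝ) (x y : ℂ) {a b : ℝ} (hab : a + b = 1) :
    gmap c α (a • x + b • y) = a • gmap c α x + b • gmap c α y := by
  have : (a:ℂ) + b = 1 := by exact_mod_cast hab
  simp only [gmap, Complex.real_smul]
  linear_combination (-c) * this

lemma half_plane {S : Set ℂ} {c p x : ℂ} (hp : p ∈ S) (hx : x ∈ cell S c) :
    (x.re - c.re) * (p.re - c.re) + (x.im - c.im) * (p.im - c.im) ≤ ‖p - c‖^2 / 2 := by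
  have h1 := hx p hp
  rw [← qd_eq]
  unfold qd at *
  linarith

lemma half_plane' {S : Set ℂ} {c p z : ℂ} {α β : ℝ} (hp : p ∈ S) (hz : gmap c α z ∈ cell S c)
    (hpos : 0 < ‖p - c‖) (hle : ‖p - c‖ ≤ 1) (he : p - c = (‖p - c‖ : ℂ) * uE (α + β)) :
    z.re * cos β + z.im * sin β ≤ 1/2 := by
  have h1 := half_plane hp hz
  set r := ‖p - c‖ with hr
  have hre := congrArg Complex.re he
  have him := congrArg Complex.im he
  simp [uE] at hre him
  rw [hre, him] at h1
  simp only [gmap, uE, Complex.add_re, Complex.add_im, Complex.mul_re, Complex.mul_im, add_sub_cancel_left,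
    cos_add, sin_add] at h1
  have hsc := sin_sq_add_cos_sq α
  have e : r * (z.re * cos β + z.im * sin β) ≤ r * (r/2) := by
    have : (cos α * z.re - sin α * z.im) * (r * (cos α * cos β - sin α * sin β)) +
      (cos α * z.im + sin α * z.re) * (r * (sin α * cos β + cos α * sin β)) =
      (sin α^2 + cos α^2) * (r * (z.re * cos β + z.im * sin β)) := by ring
    rw [this, hsc] at h1
    linarith
  have := le_of_mul_le_mul_left e hpos
  linarith

lemma cell_area {S : Set ℂ} (h : LF S) {c p q : ℂ} (hc : c ∈ S) (hp : p ∈ S) (hq : q ∈ S)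
    (hp0 : 0 < ‖p - c‖) (hp1 : ‖p - c‖ ≤ 1) (hq0 : 0 < ‖q - c‖) (hq1 : ‖q - c‖ ≤ 1)
    (hang : (p.re - c.re) * (q.re - c.re) + (p.im - c.im) * (q.im - c.im) ≤ -(1/2) * (‖p - c‖ * ‖q - c‖)) :
    volume (cell S c) ≤ ENNReal.ofReal ((verts_finite h c).toFinset.card * cB + cM) := by
  have hpi := pi_pos
  set α := (p - c).arg with hα
  -- the second direction
  obtain ⟨γ, g1, g2, hqe⟩ : ∃ γ : ℝ, 2*π/3 ≤ γ ∧ γ ≤ 4*π/3 ∧ q - c = (‖q - c‖ : ℂ) * uE (α + γ) := by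
    set w := uE (-α) * (q - c) with hw
    have hwn : ‖w‖ = ‖q - c‖ := by rw [hw, norm_mul, norm_uE, one_mul]
    have hq' : q - c = uE α * w := by rw [hw, ← mul_assoc, uE_mul, add_neg_cancel, uE_zero, one_mul]
    have hqq : q - c = (‖q - c‖ : ℂ) * uE (α + w.arg) := by
      conv_lhs => rw [hq', polar_arg w, hwn]
      rw [← uE_mul]; ring
    have hcos : cos w.arg ≤ -(1/2) := by
      have hpp := polar_arg (p - c)
      rw [← hα] at hpp
      have a1 := congrArg Complex.re hpp
      have a2 := congrArg Complex.im hpp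
      have b1 := congrArg Complex.re hqq
      have b2 := congrArg Complex.im hqq
      simp [uE] at a1 a2 b1 b2
      rw [a1, a2, b1, b2] at hang
      have : ‖p - c‖ * ‖q - c‖ * cos w.arg = ‖p - c‖ * cos α * (‖q - c‖ * cos (α + w.arg)) +
          ‖p - c‖ * sin α * (‖q - c‖ * sin (α + w.arg)) := by
        rw [show cos w.arg = cos ((α + w.arg) - α) by ring_nf, cos_sub]; ring
      rw [← this] at hang
      have h3 : ‖p - c‖ * ‖q - c‖ * cos w.arg ≤ ‖p - c‖ * ‖q - c‖ * (-(1/2)) := by linarith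
      exact le_of_mul_le_mul_left h3 (by positivity)
    have habs : 2*π/3 ≤ |w.arg| := by
      by_contra hcon
      push Not at hcon
      have : cos (2*π/3) < cos |w.arg| := cos_lt_cos_of_nonneg_of_le_pi (abs_nonneg _) (by linarith) hcon
      rw [cos_abs, show 2*π/3 = π - π/3 by ring, cos_pi_sub, cos_pi_div_three] at this
      linarith
    rcases le_abs.1 habs with hh | hh
    · exact ⟨w.arg, hh, by linarith [Complex.arg_le_pi w], hqq⟩
    · refine ⟨w.arg + 2*π, by linarith [Complex.neg_pi_lt_arg w], by linarith, ?_⟩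
      rw [← add_assoc, uE_add_two_pi]; exact hqq
  set K := gmap c α ⁻¹' cell S c with hK
  have hvol : volume K = volume (cell S c) :=
    (gmap_mp c α).measure_preimage (cell_isClosed c).measurableSet.nullMeasurableSet
  have hnorm : ∀ z ∈ K, ‖z‖ ≤ 1 := by
    intro z hz
    have := cell_norm h hz
    rwa [gmap, add_sub_cancel_left, norm_mul, norm_uE, one_mul] at this
  have hcl : IsClosed K := (cell_isClosed c).preimage (gmap_cont c α)
  have hcomp : IsCompact K := by
    apply (isCompact_closedBall (0:ℂ) 1).of_isClosed_subset hcl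
    intro z hz
    rw [mem_closedBall, dist_zero_right]; exact hnorm z hz
  have hconv : Convex ℝ K := by
    intro x hx y hy a b ha hb hab
    show gmap c α _ ∈ cell S c
    rw [gmap_comb c α x y hab]
    exact cell_convex c hx hy ha hb hab
  have h0 : (0:ℂ) ∈ interior K := by
    apply preimage_interior_subset_interior_preimage (gmap_cont c α)
    show gmap c α 0 ∈ interior (cell S c)
    rw [gmap, mul_zero, add_zero]
    exact cell_interior h hc
  have hext : K.extremePoints ℝ ⊆ gmap c α ⁻¹' (verts S c) := by
    intro v hv
    apply extreme_sub h hc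
    rw [mem_extremePoints] at hv ⊢
    refine ⟨hv.1, ?_⟩
    intro x hx y hy hseg
    have hx' : uE (-α) * (x - c) ∈ K := by
      rw [hK, Set.mem_preimage, gmap_inv]; assumption
    have hy' : uE (-α) * (y - c) ∈ K := by
      rw [hK, Set.mem_preimage, gmap_inv]; assumption
    obtain ⟨a, b, ha, hb, hab, he⟩ := hseg
    have := hv.2 _ hx' _ hy' ⟨a, b, ha, hb, hab, by
      apply gmap_inj c α
      rw [gmap_comb c α _ _ hab, gmap_inv, gmap_inv, he]⟩
    constructor
    · rw [← this.1, gmap_inv]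
    · rw [← this.2, gmap_inv]
  have hfin0 : (gmap c α ⁻¹' (verts S c)).Finite := (verts_finite h c).preimage (gmap_inj c α).injOn
  have hfin : (K.extremePoints ℝ).Finite := hfin0.subset hext
  have hab := area_bound hconv hcomp h0 (V := hfin.toFinset) (by simp) hnorm g1 g2
    (by
      intro z hz
      have := half_plane' (β := 0) hp hz hp0 hp1 (by rw [add_zero]; exact polar_arg _)
      simpa using this)
    (by
      intro z hz
      exact half_plane' hq hz hq0 hq1 hqe)
  rw [← hvol]
  refine hab.trans (ENNReal.ofReal_le_ofReal ?_)
  have hcard : hfin.toFinset.card ≤ (verts_finite h c).toFinset.card := by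
    apply Finset.card_le_card_of_injOn (gmap c α)
    · intro z hz
      have hz' : z ∈ K.extremePoints ℝ := (Set.Finite.mem_toFinset _).1 hz
      exact (Set.Finite.mem_toFinset _).2 (hext hz')
    · exact (gmap_inj c α).injOn
  have : (hfin.toFinset.card : ℝ) ≤ ((verts_finite h c).toFinset.card : ℝ) := by exact_mod_cast hcard
  have := mul_le_mul_of_nonneg_right this cB_nonneg
  linarith

lemma cell_area_trivial {S : Set ℂ} (h : LF S) (c : ℂ) : volume (cell S c) ≤ ENNReal.ofReal π := by
  refine (measure_mono (t := closedBall c 1) ?_).trans ?_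
  · intro x hx
    rw [mem_closedBall, dist_eq_norm]; exact cell_norm h hx
  · rw [Complex.volume_closedBall]
    simp
    rw [ENNReal.ofReal, Real.toNNReal_of_nonneg pi_pos.le]; rfl


def toC (p : Pt) : ℂ := ⟨p 0, p 1⟩

lemma toC_dist (p q : Pt) : ‖toC p - toC q‖ = dist p q := by
  rw [EuclideanSpace.dist_eq, Complex.norm_def, Complex.normSq_apply]
  simp [toC, Fin.sum_univ_two, Real.dist_eq, sq_abs]
  congr 1; ring

lemma toC_surj (z : ℂ) : ∃ p : Pt, toC p = z := ⟨!₂[z.re, z.im], by simp [toC]⟩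

def csq (l : ℝ) : Set ℂ := {z | |z.re| < l ∧ |z.im| < l}

lemma csq_vol {l : ℝ} (hl : 0 < l) : volume (csq l) = ENNReal.ofReal (4 * l^2) := by
  have h1 : csq l = Complex.measurableEquivRealProd ⁻¹' (Set.Ioo (-l) l ×ˢ Set.Ioo (-l) l) := by
    ext z; simp [Complex.measurableEquivRealProd, csq, abs_lt]
  rw [h1, Complex.volume_preserving_equiv_real_prod.measure_preimage
    (measurableSet_Ioo.prod measurableSet_Ioo).nullMeasurableSet, Measure.volume_eq_prod,
    Measure.prod_prod, Real.volume_Ioo, ← ENNReal.ofReal_mul (by linarith)]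
  congr 1; ring

def idx (c : ℕ → ℂ) (l : ℝ) : Set ℕ := {n | ∃ z ∈ csq l, ‖z - c n‖ ≤ 1}

lemma Ncount_eq (C : ℕ → Pt) (l : ℝ) : Ncount C l = ((idx (fun n => toC (C n)) l).encard : ℕ∞) := by
  unfold Ncount
  congr 2
  ext n
  constructor
  · rintro ⟨p, hp, hq⟩
    exact ⟨toC p, hq, by rw [toC_dist]; exact hp⟩
  · rintro ⟨z, hz, hn⟩
    obtain ⟨p, rfl⟩ := toC_surj z
    exact ⟨p, by rw [mem_closedBall, ← toC_dist]; exact hn, hz⟩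

lemma idx_mono (c : ℕ → ℂ) {l m : ℝ} (h : l ≤ m) : idx c l ⊆ idx c m := by
  rintro n ⟨z, ⟨h1, h2⟩, h3⟩
  exact ⟨z, ⟨h1.trans_le h, h2.trans_le h⟩, h3⟩

lemma adm_inner {a b c : Pt} (h : 2 * π / 3 ≤ EuclideanGeometry.angle a b c) :
    ((toC a).re - (toC b).re) * ((toC c).re - (toC b).re) +
      ((toC a).im - (toC b).im) * ((toC c).im - (toC b).im) ≤
      -(1/2) * (‖toC a - toC b‖ * ‖toC c - toC b‖) := by
  have hpi := pi_pos
  have h1 : cos (EuclideanGeometry.angle a b c) ≤ -(1/2) := by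
    have : cos (EuclideanGeometry.angle a b c) ≤ cos (2*π/3) :=
      cos_le_cos_of_nonneg_of_le_pi (by positivity) (EuclideanGeometry.angle_le_pi _ _ _) h
    rwa [show 2*π/3 = π - π/3 by ring, cos_pi_sub, cos_pi_div_three] at this
  have h2 := InnerProductGeometry.cos_angle_mul_norm_mul_norm (a -ᵥ b) (c -ᵥ b)
  have h3 : inner ℝ (a -ᵥ b) (c -ᵥ b) = ((toC a).re - (toC b).re) * ((toC c).re - (toC b).re) +
      ((toC a).im - (toC b).im) * ((toC c).im - (toC b).im) := by
    simp [PiLp.inner_apply, Fin.sum_univ_two, toC]; ring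
  rw [← h3, ← h2, toC_dist, toC_dist, dist_eq_norm, dist_eq_norm]
  apply mul_le_mul_of_nonneg_right h1
  positivity

open Classical in
lemma key_count {c : ℕ → ℂ} (h : LF (Set.range c))
    (hst : ∀ n, 0 < ‖c n - c (n+1)‖ ∧ ‖c n - c (n+1)‖ ≤ 1)
    (han : ∀ n, ((c n).re - (c (n+1)).re) * ((c (n+2)).re - (c (n+1)).re) +
      ((c n).im - (c (n+1)).im) * ((c (n+2)).im - (c (n+1)).im) ≤
      -(1/2) * (‖c n - c (n+1)‖ * ‖c (n+2) - c (n+1)‖))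
    (hfin : ∀ l, (idx c l).Finite) {l : ℝ} (hl : 0 < l) :
    4 * l^2 ≤ (1 + √3/2) * ((idx c (l+2)).ncard : ℝ) + π := by
  set S := Set.range c with hS
  set F : Finset ℂ := (hfin l).toFinset.image c with hF
  set G : Finset ℂ := (hfin (l+2)).toFinset.image c with hG
  have hFG : F ⊆ G := by
    apply Finset.image_subset_image
    intro n hn
    simp only [Set.Finite.mem_toFinset] at hn ⊢
    exact idx_mono c (by linarith) hn
  have hGc : G.card ≤ (idx c (l+2)).ncard := by
    rw [Set.ncard_eq_toFinset_card _ (hfin (l+2))]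
    exact Finset.card_image_le
  have tv := total_verts h (Set.countable_range c) F G
    (by intro x hx; obtain ⟨n, -, rfl⟩ := Finset.mem_image.1 hx; exact ⟨n, rfl⟩)
    (by intro x hx; obtain ⟨n, -, rfl⟩ := Finset.mem_image.1 hx; exact ⟨n, rfl⟩)
    (by
      intro x hx v hv d hd
      obtain ⟨n, hn, rfl⟩ := Finset.mem_image.1 hx
      obtain ⟨⟨m, rfl⟩, hdv⟩ := hd
      obtain ⟨z, ⟨hz1, hz2⟩, hz⟩ := (Set.Finite.mem_toFinset _).1 hn
      refine Finset.mem_image.2 ⟨m, (Set.Finite.mem_toFinset _).2 ⟨v, ?_, cell_norm h hdv⟩, rfl⟩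
      have h1 := cell_norm h hv
      have h2 : ‖v - z‖ ≤ 2 := by
        calc ‖v - z‖ = ‖(v - c n) - (z - c n)‖ := by congr 1; ring
          _ ≤ ‖v - c n‖ + ‖z - c n‖ := norm_sub_le _ _
          _ ≤ 2 := by linarith
      have h3 := (Complex.abs_re_le_norm (v - z)).trans h2
      have h4 := (Complex.abs_im_le_norm (v - z)).trans h2
      rw [Complex.sub_re] at h3
      rw [Complex.sub_im] at h4
      rw [abs_le] at h3 h4
      rw [abs_lt] at hz1 hz2
      constructor <;> rw [abs_lt] <;> constructor <;> linarith)
  have hcov : csq l ⊆ ⋃ x ∈ F, cell S x := by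
    intro z hz
    obtain ⟨d, ⟨n, rfl⟩, hd⟩ := near_nonempty h z
    simp only [Set.mem_iUnion]
    exact ⟨c n, Finset.mem_image.2 ⟨n, (Set.Finite.mem_toFinset _).2 ⟨z, hz, cell_norm h hd⟩, rfl⟩, hd⟩
  have harea : ∀ x ∈ F, volume (cell S x) ≤ ENNReal.ofReal (((verts_finite h x).toFinset.card * cB + cM)
      + (if x = c 0 then π else 0)) := by
    intro x hx
    obtain ⟨n, -, rfl⟩ := Finset.mem_image.1 hx
    have hcB := cB_nonneg
    have hcM := cM_pos
    by_cases h0 : c n = c 0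
    · rw [if_pos h0]
      refine (cell_area_trivial h _).trans (ENNReal.ofReal_le_ofReal ?_)
      have : 0 ≤ ((verts_finite h (c n)).toFinset.card : ℝ) * cB := by positivity
      linarith
    · rw [if_neg h0, add_zero]
      obtain ⟨m, rfl⟩ : ∃ m, n = m + 1 := ⟨n - 1, by
        rcases n with _ | n
        · exact absurd rfl h0
        · simp⟩
      refine cell_area h (p := c m) (q := c (m+2)) ⟨_, rfl⟩ ⟨_, rfl⟩ ⟨_, rfl⟩ (hst m).1 (hst m).2 ?_ ?_ (han m)
      · rw [norm_sub_rev]; exact (hst (m+1)).1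
      · rw [norm_sub_rev]; exact (hst (m+1)).2
  have hnn : ∀ x ∈ F, 0 ≤ (((verts_finite h x).toFinset.card * cB + cM)
      + (if x = c 0 then π else 0)) := by
    intro x _
    have hcB := cB_nonneg
    have hcM := cM_pos
    have hpi := pi_pos
    split_ifs <;> positivity
  have hsum : ENNReal.ofReal (4*l^2) ≤ ENNReal.ofReal (∑ x ∈ F, (((verts_finite h x).toFinset.card * cB + cM)
      + (if x = c 0 then π else 0))) := by
    rw [← csq_vol hl]
    refine (measure_mono hcov).trans ((measure_biUnion_finset_le _ _).trans ?_)
    rw [ENNReal.ofReal_sum_of_nonneg hnn]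
    exact Finset.sum_le_sum harea
  rw [ENNReal.ofReal_le_ofReal_iff (Finset.sum_nonneg hnn)] at hsum
  rw [Finset.sum_add_distrib, Finset.sum_add_distrib, ← Finset.sum_mul, Finset.sum_const,
    ← Nat.cast_sum, nsmul_eq_mul] at hsum
  have h5 : ∑ x ∈ F, (if x = c 0 then π else 0) ≤ π := by
    rw [Finset.sum_ite_eq']
    split_ifs
    · exact le_rfl
    · exact pi_pos.le
  have h6 : ((∑ x ∈ F, (verts_finite h x).toFinset.card : ℕ) : ℝ) ≤ 6 * (G.card : ℝ) := by exact_mod_cast tv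
  have h7 : (F.card : ℝ) ≤ G.card := by exact_mod_cast Finset.card_le_card hFG
  have h8 : (G.card : ℝ) ≤ ((idx c (l+2)).ncard : ℝ) := by exact_mod_cast hGc
  rw [← cM_eq]
  have m1 := mul_le_mul_of_nonneg_right h6 cB_nonneg
  have m2 := mul_le_mul_of_nonneg_right h7 cM_pos.le
  have m3 := mul_le_mul_of_nonneg_right h8 (show 0 ≤ cM + 6*cB by linarith [cB_nonneg, cM_pos])
  linarith

theorem lower_bound {C : ℕ → Pt} (hC : Admissible C) :
    ENNReal.ofReal (2 * π / (2 + √3)) ≤ lowerDensity C := by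
  obtain ⟨h1, h2, h3⟩ := hC
  have hpi := pi_pos
  set c : ℕ → ℂ := fun n => toC (C n) with hc
  by_cases hfin : ∀ l, (idx c l).Finite
  · have hcov : ∀ z : ℂ, ∃ n, ‖z - c n‖ ≤ 1 := by
      intro z
      obtain ⟨p, rfl⟩ := toC_surj z
      have : p ∈ ⋃ n, closedBall (C n) 1 := by rw [h1]; trivial
      obtain ⟨n, hn⟩ := Set.mem_iUnion.1 this
      exact ⟨n, by rw [toC_dist]; exact hn⟩
    have hLF : LF (Set.range c) := by
      refine ⟨fun z R => ?_, fun z => ?_⟩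
      · apply ((hfin (‖z‖ + R + 1)).image c).subset
        rintro _ ⟨⟨n, rfl⟩, hn⟩
        refine ⟨n, ⟨c n, ?_, by simp⟩, rfl⟩
        rw [mem_closedBall, dist_eq_norm] at hn
        have : ‖c n‖ < ‖z‖ + R + 1 := by
          have := norm_add_le (c n - z) z
          rw [sub_add_cancel] at this
          linarith
        exact ⟨(Complex.abs_re_le_norm _).trans_lt this, (Complex.abs_im_le_norm _).trans_lt this⟩
      · obtain ⟨n, hn⟩ := hcov z
        exact ⟨c n, ⟨n, rfl⟩, hn⟩
    have key : ∀ l : ℝ, 0 < l → 4 * l^2 ≤ (1 + √3/2) * ((idx c (l+2)).ncard : ℝ) + π := by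
      intro l hl
      refine key_count hLF ?_ ?_ hfin hl
      · intro n
        have := h2 (n+1) (by omega)
        simp only [hc, toC_dist]
        rwa [dist_comm]
      · intro n
        exact adm_inner (h3 (n+1) (by omega))
    set A0 : ℝ := 1 + √3/2 with hA0
    have hA0p : 0 < A0 := by positivity
    have hlim : Tendsto (fun l : ℝ => ENNReal.ofReal ((4*(l-2)^2 - π)/A0 * π / (4*l^2))) atTop
        (nhds (ENNReal.ofReal (2 * π / (2 + √3)))) := by
      apply ENNReal.tendsto_ofReal
      have e : 2 * π / (2 + √3) = ((4*(1-2*0)^2 - π*0^2)/A0)*π/4 := by rw [hA0]; field_simp; ring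
      rw [e]
      have hi : Tendsto (fun l : ℝ => l⁻¹) atTop (nhds 0) := tendsto_inv_atTop_zero
      have : Tendsto (fun l : ℝ => ((4*(1-2*l⁻¹)^2 - π*(l⁻¹)^2)/A0)*π/4) atTop
          (nhds (((4*(1-2*0)^2 - π*0^2)/A0)*π/4)) := by
        have hcont : Continuous (fun x : ℝ => ((4*(1-2*x)^2 - π*x^2)/A0)*π/4) := by fun_prop
        exact (hcont.tendsto 0).comp hi
      apply this.congr'
      filter_upwards [eventually_gt_atTop 0] with l hl
      field_simp
    unfold lowerDensity
    rw [← hlim.liminf_eq]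
    refine liminf_le_liminf ?_ (by isBoundedDefault) (by isBoundedDefault)
    · filter_upwards [eventually_gt_atTop 2] with l hl
      have hk := key (l - 2) (by linarith)
      rw [sub_add_cancel] at hk
      rw [Ncount_eq, ← (hfin l).cast_ncard_eq]
      have hl2 : 0 < 4*l^2 := by positivity
      rw [ENNReal.ofReal_div_of_pos hl2]
      gcongr
      have : ((((idx c l).ncard : ℕ) : ℕ∞) : ℝ≥0∞) = ENNReal.ofReal ((idx c l).ncard : ℝ) := by
        simp
      rw [this, ← ENNReal.ofReal_mul (by positivity)]
      apply ENNReal.ofReal_le_ofReal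
      gcongr
      rw [div_le_iff₀ hA0p]; linarith
  · push Not at hfin
    obtain ⟨l0, hl0⟩ := hfin
    have : lowerDensity C = ⊤ := by
      unfold lowerDensity
      have : Tendsto (fun l : ℝ => Ncount C l * ENNReal.ofReal π / ENNReal.ofReal (4 * l ^ 2)) atTop (nhds ⊤) := by
        apply tendsto_const_nhds.congr'
        filter_upwards [eventually_ge_atTop l0] with l hl
        have : (idx c l).Infinite := fun hh => hl0 (hh.subset (idx_mono c hl))
        rw [Ncount_eq, Set.encard_eq_top_iff.2 this]
        rw [ENat.toENNReal_top, ENNReal.top_mul (by simp [hpi]), ENNReal.top_div_of_ne_top ENNReal.ofReal_ne_top]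
      exact this.liminf_eq
    rw [this]; exact le_top


/-- times at which the sides start -/
def Tm (N : ℕ → ℕ) (q : ℕ) : ℕ := ∑ i ∈ Finset.range q, N i

lemma Tm_succ (N : ℕ → ℕ) (q : ℕ) : Tm N (q+1) = Tm N q + N q := Finset.sum_range_succ _ _

lemma Tm_mono (N : ℕ → ℕ) : Monotone (Tm N) :=
  monotone_nat_of_le_succ (fun q => by rw [Tm_succ]; omega)

lemma Tm_ge {N : ℕ → ℕ} (hN : ∀ q, 1 ≤ N q) (q : ℕ) : q ≤ Tm N q := by
  induction q with
  | zero => simp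
  | succ q ih => rw [Tm_succ]; have := hN q; omega

lemma Tm_decomp {N : ℕ → ℕ} (hN : ∀ q, 1 ≤ N q) (n : ℕ) : ∃ q i, i < N q ∧ n = Tm N q + i := by
  induction n with
  | zero => exact ⟨0, 0, hN 0, by simp [Tm]⟩
  | succ n ih =>
    obtain ⟨q, i, hi, rfl⟩ := ih
    by_cases h : i + 1 < N q
    · exact ⟨q, i+1, h, by ring⟩
    · exact ⟨q+1, 0, hN _, by rw [Tm_succ]; omega⟩

lemma Tm_unique {N : ℕ → ℕ} {q q' i i' : ℕ} (hi : i < N q) (hi' : i' < N q')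
    (h : Tm N q + i = Tm N q' + i') : q = q' ∧ i = i' := by
  have key : ∀ a b x y : ℕ, x < N a → Tm N a + x = Tm N b + y → ¬ a < b := by
    intro a b x y hx he hab
    have := Tm_mono N (Nat.succ_le_of_lt hab)
    rw [Nat.succ_eq_add_one, Tm_succ] at this
    omega
  have h1 := key q q' i i' hi h
  have h2 := key q' q i' i hi' h.symm
  obtain rfl : q = q' := by omega
  exact ⟨rfl, by omega⟩

/-- direction of side `q` -/
def dirq (q : ℕ) : ℂ := uE ((q + 2 : ℕ) * (π/4))

lemma path_exists {a : ℕ → ℝ} {W : ℕ → ℂ} {N : ℕ → ℕ} (hN : ∀ q, 1 ≤ N q)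
    (hW : ∀ q, W (q+1) = W q + (a q) • dirq q) :
    ∃ c : ℕ → ℂ, ∀ q i, i ≤ N q → c (Tm N q + i) = W q + (i * (a q / N q)) • dirq q := by
  have h := Tm_decomp hN
  choose Q I hI hn using h
  refine ⟨fun n => W (Q n) + (I n * (a (Q n) / N (Q n))) • dirq (Q n), ?_⟩
  have base : ∀ q i, i < N q → Q (Tm N q + i) = q ∧ I (Tm N q + i) = i := by
    intro q i hi
    exact Tm_unique (hI _) hi (hn _).symm
  intro q i hi
  rcases hi.lt_or_eq with h | h
  · obtain ⟨h1, h2⟩ := base q i h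
    simp only [h1, h2]
  · have e : Tm N q + i = Tm N (q+1) + 0 := by rw [Tm_succ, h]; rfl
    rw [e]
    obtain ⟨h1, h2⟩ := base (q+1) 0 (hN _)
    simp only [h1, h2]
    have : (N q : ℝ) ≠ 0 := by have := hN q; positivity
    rw [hW, h]
    have e2 : (N q : ℝ) * (a q / N q) = a q := by field_simp
    rw [e2]; simp

def ofC (z : ℂ) : Pt := !₂[z.re, z.im]
lemma toC_ofC (z : ℂ) : toC (ofC z) = z := by simp [toC, ofC]

lemma angle_ge {a b c : Pt} (h1 : 0 < ‖toC a - toC b‖) (h2 : 0 < ‖toC c - toC b‖)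
    (h : ((toC a).re - (toC b).re) * ((toC c).re - (toC b).re) +
      ((toC a).im - (toC b).im) * ((toC c).im - (toC b).im) ≤
      -(1/2) * (‖toC a - toC b‖ * ‖toC c - toC b‖)) : 2 * π / 3 ≤ EuclideanGeometry.angle a b c := by
  have h3 : inner ℝ (a -ᵥ b) (c -ᵥ b) = ((toC a).re - (toC b).re) * ((toC c).re - (toC b).re) +
      ((toC a).im - (toC b).im) * ((toC c).im - (toC b).im) := by
    simp [PiLp.inner_apply, Fin.sum_univ_two, toC]; ring
  have hpi := pi_pos
  have e : 2*π/3 = arccos (-(1/2)) := by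
    rw [← arccos_cos (x := 2*π/3) (by positivity) (by linarith)]
    congr 1
    rw [show 2*π/3 = π - π/3 by ring, cos_pi_sub, cos_pi_div_three]
  rw [e]
  unfold EuclideanGeometry.angle InnerProductGeometry.angle
  apply arccos_le_arccos
  have n1 : ‖a -ᵥ b‖ = ‖toC a - toC b‖ := by rw [toC_dist, dist_eq_norm]; rfl
  have n2 : ‖c -ᵥ b‖ = ‖toC c - toC b‖ := by rw [toC_dist, dist_eq_norm]; rfl
  rw [n1, n2, div_le_iff₀ (by positivity), h3]
  exact h

lemma dir_dot (q q' : ℕ) (h : q' = q ∨ q' = q + 1) :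
    1/2 ≤ (dirq q).re * (dirq q').re + (dirq q).im * (dirq q').im := by
  have e : (dirq q).re * (dirq q').re + (dirq q).im * (dirq q').im =
      cos ((q'+2 : ℕ) * (π/4) - (q+2 : ℕ) * (π/4)) := by
    rw [cos_sub]; simp only [dirq, uE]; ring
  rw [e]
  rcases h with rfl | rfl
  · simp; norm_num
  · have : (((q+1)+2 : ℕ) : ℝ) * (π/4) - (q+2 : ℕ) * (π/4) = π/4 := by push_cast; ring
    rw [this, ← cos_pi_div_three]
    have hpi := pi_pos
    exact cos_le_cos_of_nonneg_of_le_pi (by linarith) (by linarith) (by linarith)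

/-- local structure of the path -/
lemma path_steps {a : ℕ → ℝ} {W : ℕ → ℂ} {N : ℕ → ℕ} {c : ℕ → ℂ} (hN : ∀ q, 1 ≤ N q)
    (ha : ∀ q, 0 < a q) (haN : ∀ q, a q ≤ N q)
    (hc : ∀ q i, i ≤ N q → c (Tm N q + i) = W q + (i * (a q / N q)) • dirq q) :
    ∀ n, ∃ q q' : ℕ, ∃ s s' : ℝ, (q' = q ∨ q' = q + 1) ∧ 0 < s ∧ s ≤ 1 ∧ 0 < s' ∧ s' ≤ 1 ∧
      c (n+1) = c n + s • dirq q ∧ c (n+2) = c (n+1) + s' • dirq q' := by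
  have one : ∀ q i, i < N q → c (Tm N q + i + 1) = c (Tm N q + i) + (a q / N q) • dirq q := by
    intro q i hi
    rw [add_assoc, hc q (i+1) hi, hc q i hi.le, add_assoc, ← add_smul]
    congr 2; push_cast; ring
  have hs : ∀ q, 0 < a q / N q ∧ a q / N q ≤ 1 := by
    intro q
    have h0 : (0:ℝ) < N q := by have := hN q; positivity
    exact ⟨div_pos (ha q) h0, (div_le_one h0).2 (haN q)⟩
  intro n
  obtain ⟨q, i, hi, rfl⟩ := Tm_decomp hN n
  by_cases h : i + 1 < N q
  · refine ⟨q, q, _, _, Or.inl rfl, (hs q).1, (hs q).2, (hs q).1, (hs q).2, one q i hi, ?_⟩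
    exact one q (i+1) h
  · refine ⟨q, q+1, _, _, Or.inr rfl, (hs q).1, (hs q).2, (hs (q+1)).1, (hs (q+1)).2, one q i hi, ?_⟩
    have e : Tm N q + i + 1 = Tm N (q+1) + 0 := by rw [Tm_succ]; omega
    have := one (q+1) 0 (hN _)
    rw [← e] at this
    exact this

lemma path_admissible {c : ℕ → ℂ} (hcov : ∀ z, ∃ n, ‖z - c n‖ ≤ 1)
    (hst : ∀ n, ∃ q q' : ℕ, ∃ s s' : ℝ, (q' = q ∨ q' = q + 1) ∧ 0 < s ∧ s ≤ 1 ∧ 0 < s' ∧ s' ≤ 1 ∧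
      c (n+1) = c n + s • dirq q ∧ c (n+2) = c (n+1) + s' • dirq q') :
    Admissible (fun n => ofC (c n)) := by
  have hnd : ∀ q, ‖dirq q‖ = 1 := fun q => norm_uE _
  refine ⟨?_, ?_, ?_⟩
  · ext p
    simp only [Set.mem_iUnion, Set.mem_univ, iff_true]
    obtain ⟨n, hn⟩ := hcov (toC p)
    refine ⟨n, ?_⟩
    rw [mem_closedBall, ← toC_dist, toC_ofC]; exact hn
  · intro n hn
    obtain ⟨m, rfl⟩ : ∃ m, n = m + 1 := ⟨n - 1, by omega⟩
    obtain ⟨q, q', s, s', h1, h2, h3, h4, h5, h6, h7⟩ := hst m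
    rw [← toC_dist, toC_ofC, toC_ofC, Nat.add_sub_cancel, h6, add_sub_cancel_left, norm_smul, hnd,
      mul_one, Real.norm_eq_abs, abs_of_pos h2]
    exact ⟨h2, h3⟩
  · intro n hn
    obtain ⟨m, rfl⟩ : ∃ m, n = m + 1 := ⟨n - 1, by omega⟩
    obtain ⟨q, q', s, s', h1, h2, h3, h4, h5, h6, h7⟩ := hst m
    rw [Nat.add_sub_cancel]
    have e1 : ‖c m - c (m+1)‖ = s := by
      rw [h6, norm_sub_rev, add_sub_cancel_left, norm_smul, hnd, mul_one, Real.norm_eq_abs, abs_of_pos h2]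
    have e2 : ‖c (m+1+1) - c (m+1)‖ = s' := by
      rw [h7, add_sub_cancel_left, norm_smul, hnd, mul_one, Real.norm_eq_abs, abs_of_pos h4]
    apply angle_ge
    · rw [toC_ofC, toC_ofC, e1]; exact h2
    · rw [toC_ofC, toC_ofC, e2]; exact h4
    · simp only [toC_ofC]
      rw [e1, e2, h7, h6]
      simp only [Complex.add_re, Complex.add_im, Complex.smul_re, Complex.smul_im, smul_eq_mul]
      have hd := dir_dot q q' h1
      have : 0 < s * s' := by positivity
      nlinarith


/-- distance between neighbouring rows -/
def hh : ℝ := 1 + √3/2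

/-- number of steps of a row in shell `j` -/
def Dn (j : ℕ) : ℕ := j + 2 * ⌈(j:ℝ)*hh + 3 - j/2⌉₊

/-- half the length of a row in shell `j` -/
def Mr (j : ℕ) : ℝ := (Dn j : ℝ) / 2

lemma hh_bounds : 1.866 < hh ∧ hh < 1.8661 := by
  have := sqrt3_bounds
  unfold hh; constructor <;> linarith

lemma Mr_bounds (j : ℕ) : j * hh + 3 ≤ Mr j ∧ Mr j ≤ j * hh + 4 := by
  have hb := hh_bounds
  have hj : (0:ℝ) ≤ j := Nat.cast_nonneg j
  have h1 := Nat.le_ceil ((j:ℝ)*hh + 3 - j/2)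
  have h2 := Nat.ceil_lt_add_one (a := (j:ℝ)*hh + 3 - j/2) (by nlinarith)
  have e : Mr j = j/2 + (⌈(j:ℝ)*hh + 3 - j/2⌉₊ : ℝ) := by unfold Mr Dn; push_cast; ring
  rw [e]; constructor <;> linarith

lemma Mr_succ (j : ℕ) : ∃ e : ℤ, Mr (j+1) = Mr j + 1/2 + e := by
  refine ⟨(⌈((j+1 : ℕ):ℝ)*hh + 3 - (j+1 : ℕ)/2⌉₊ : ℤ) - (⌈(j:ℝ)*hh + 3 - j/2⌉₊ : ℤ), ?_⟩
  unfold Mr Dn; push_cast; ring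

/-- side lengths -/
def sl (q : ℕ) : ℝ :=
  if q % 10 = 0 then Dn (q/10/4)
  else if q % 10 = 4 then 1 + Mr (q/10/4) + √2/2 - ((q/10+1)/4 : ℕ) * hh
  else if q % 10 = 6 then 1 + Mr ((q/10+1)/4) + √2/2 - (q/10/4 : ℕ) * hh
  else 1

def Nq (q : ℕ) : ℕ := ⌈sl q⌉₊

def Wq : ℕ → ℂ
  | 0 => -(Mr 0 : ℂ) * Complex.I
  | (q+1) => Wq q + (sl q) • dirq q

lemma sqrt2_bounds : 1.414 < √2 ∧ √2 < 1.4143 := by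
  constructor
  · exact Real.lt_sqrt_of_sq_lt (by norm_num)
  · rw [Real.sqrt_lt' (by norm_num)]; norm_num

lemma sl0 (r : ℕ) : sl (10*r) = Dn (r/4) := by
  have h1 : (10*r) % 10 = 0 := by omega
  have h2 : (10*r)/10 = r := by omega
  simp [sl, h1, h2]

lemma sl4 (r : ℕ) : sl (10*r+4) = 1 + Mr (r/4) + √2/2 - ((r+1)/4 : ℕ) * hh := by
  have h1 : (10*r+4) % 10 = 4 := by omega
  have h2 : (10*r+4)/10 = r := by omega
  simp [sl, h1, h2]

lemma sl6 (r : ℕ) : sl (10*r+6) = 1 + Mr ((r+1)/4) + √2/2 - (r/4 : ℕ) * hh := by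
  have h1 : (10*r+6) % 10 = 6 := by omega
  have h2 : (10*r+6)/10 = r := by omega
  simp [sl, h1, h2]

lemma slo (r m : ℕ) (hm : m < 10) (h0 : m ≠ 0) (h4 : m ≠ 4) (h6 : m ≠ 6) : sl (10*r+m) = 1 := by
  have h1 : (10*r+m) % 10 = m := by omega
  simp [sl, h1, h0, h4, h6]

lemma div_cases (r : ℕ) : (r+1)/4 = r/4 ∨ (r+1)/4 = r/4 + 1 := by omega

lemma sl4_bounds (r : ℕ) : 1 ≤ sl (10*r+4) ∧ sl (10*r+4) ≤ 6 := by
  rw [sl4]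
  have h1 := Mr_bounds (r/4)
  have h2 := sqrt2_bounds
  have h3 := hh_bounds
  rcases div_cases r with h | h <;> rw [h] <;> push_cast <;> constructor <;> linarith

lemma sl6_bounds (r : ℕ) : 1 ≤ sl (10*r+6) ∧ sl (10*r+6) ≤ 8 := by
  rw [sl6]
  have h1 := Mr_bounds ((r+1)/4)
  have h2 := sqrt2_bounds
  have h3 := hh_bounds
  rcases div_cases r with h | h <;> rw [h] at h1 ⊢ <;> push_cast at h1 ⊢ <;> constructor <;> linarith

lemma Dn_pos (j : ℕ) : 6 ≤ Dn j := by
  have h := (Mr_bounds j).1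
  have hj : (0:ℝ) ≤ j * hh := by have := hh_bounds; have : (0:ℝ) ≤ j := Nat.cast_nonneg j; nlinarith
  unfold Mr at h
  have : (6:ℝ) ≤ Dn j := by linarith
  exact_mod_cast this

lemma sl_ge (q : ℕ) : 1 ≤ sl q := by
  obtain ⟨r, m, hm, rfl⟩ : ∃ r m, m < 10 ∧ q = 10*r+m := ⟨q/10, q%10, by omega, by omega⟩
  by_cases h0 : m = 0
  · subst h0
    rw [add_zero, sl0]
    have := Dn_pos (r/4)
    have h : 1 ≤ Dn (r/4) := by omega
    exact_mod_cast h
  by_cases h4 : m = 4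
  · subst h4; exact (sl4_bounds r).1
  by_cases h6 : m = 6
  · subst h6; exact (sl6_bounds r).1
  exact (slo r m hm h0 h4 h6).ge

lemma Nq_ge (q : ℕ) : 1 ≤ Nq q := Nat.one_le_ceil_iff.2 (by linarith [sl_ge q])
lemma sl_le (q : ℕ) : sl q ≤ Nq q := Nat.le_ceil _

lemma Nq0 (r : ℕ) : Nq (10*r) = Dn (r/4) := by simp [Nq, sl0]

lemma Tm_row (r : ℕ) : Tm Nq (10*r+10) ≤ Tm Nq (10*r+1) + 21 := by
  have o : ∀ m, m < 10 → m ≠ 0 → m ≠ 4 → m ≠ 6 → Nq (10*r+m) = 1 := by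
    intro m a b c d; simp [Nq, slo r m a b c d]
  have h4 : Nq (10*r+4) ≤ 6 := Nat.ceil_le.2 (by exact_mod_cast (sl4_bounds r).2)
  have h6 : Nq (10*r+6) ≤ 8 := Nat.ceil_le.2 (by exact_mod_cast (sl6_bounds r).2)
  have := o 1 (by norm_num) (by norm_num) (by norm_num) (by norm_num)
  have := o 2 (by norm_num) (by norm_num) (by norm_num) (by norm_num)
  have := o 3 (by norm_num) (by norm_num) (by norm_num) (by norm_num)
  have := o 5 (by norm_num) (by norm_num) (by norm_num) (by norm_num)
  have := o 7 (by norm_num) (by norm_num) (by norm_num) (by norm_num)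
  have := o 8 (by norm_num) (by norm_num) (by norm_num) (by norm_num)
  have := o 9 (by norm_num) (by norm_num) (by norm_num) (by norm_num)
  have t1 := Tm_succ Nq (10*r+1)
  have t2 := Tm_succ Nq (10*r+2)
  have t3 := Tm_succ Nq (10*r+3)
  have t4 := Tm_succ Nq (10*r+4)
  have t5 := Tm_succ Nq (10*r+5)
  have t6 := Tm_succ Nq (10*r+6)
  have t7 := Tm_succ Nq (10*r+7)
  have t8 := Tm_succ Nq (10*r+8)
  have t9 := Tm_succ Nq (10*r+9)
  simp only [add_assoc, Nat.reduceAdd] at t1 t2 t3 t4 t5 t6 t7 t8 t9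
  omega

lemma Tm_row' (r : ℕ) : Tm Nq (10*(r+1)) ≤ Tm Nq (10*r) + Dn (r/4) + 21 := by
  have h1 := Tm_row r
  have h2 := Tm_succ Nq (10*r)
  rw [Nq0] at h2
  rw [show 10*(r+1) = 10*r+10 by ring]
  omega

lemma Tm_bound (J : ℕ) : (Tm Nq (40*J) : ℝ) ≤ 4*hh*J^2 + 116*J := by
  induction J with
  | zero => simp [Tm]
  | succ J ih =>
    have a0 := Tm_row' (4*J)
    have a1 := Tm_row' (4*J+1)
    have a2 := Tm_row' (4*J+2)
    have a3 := Tm_row' (4*J+3)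
    rw [show (4*J)/4 = J by omega] at a0
    rw [show (4*J+1)/4 = J by omega] at a1
    rw [show (4*J+2)/4 = J by omega] at a2
    rw [show (4*J+3)/4 = J by omega] at a3
    rw [show 10*(4*J) = 40*J by ring] at a0
    rw [show 10*(4*J+3+1) = 40*(J+1) by ring] at a3
    simp only [add_assoc, Nat.reduceAdd] at a0 a1 a2 a3
    have h : Tm Nq (40*(J+1)) ≤ Tm Nq (40*J) + 4 * Dn J + 84 := by omega
    have h' : (Tm Nq (40*(J+1)) : ℝ) ≤ Tm Nq (40*J) + 4 * Dn J + 84 := by exact_mod_cast h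
    have hM := (Mr_bounds J).2
    unfold Mr at hM
    have := hh_bounds
    push_cast
    nlinarith

lemma dirq_pow (q : ℕ) : dirq q = (uE (π/4))^(q+2) := by
  have : ∀ n : ℕ, uE (n * (π/4)) = (uE (π/4))^n := by
    intro n
    induction n with
    | zero => simp [uE_zero]
    | succ n ih => rw [pow_succ, ← ih, uE_mul]; congr 1; push_cast; ring
  exact this _

lemma zeta_val : uE (π/4) = (√2/2 : ℝ) + (√2/2 : ℝ) * Complex.I := by
  apply Complex.ext <;> simp [uE]

lemma zeta_sq : (uE (π/4))^2 = Complex.I := by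
  rw [pow_two, uE_mul, show π/4+π/4 = π/2 by ring]
  apply Complex.ext <;> simp [uE]

lemma dirq_form (r m : ℕ) : dirq (10*r+m) = Complex.I^(r+1) * (uE (π/4))^m := by
  rw [dirq_pow, show 10*r+m+2 = 2*(4*r) + 2*(r+1) + m by ring, pow_add, pow_add, pow_mul, pow_mul (uE (π/4)) 2 (r+1), zeta_sq,
    pow_mul Complex.I 4 r, Complex.I_pow_four, one_pow, one_mul]

lemma Wq_row (r : ℕ) : Wq (10*r) = Complex.I^r * (((r/4 : ℕ) * hh : ℝ) - (Mr (r/4) : ℝ) * Complex.I) := by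
  induction r with
  | zero => simp [Wq]
  | succ r ih =>
    have e : Wq (10*(r+1)) = Wq (10*r) + sl (10*r) • dirq (10*r) + sl (10*r+1) • dirq (10*r+1)
        + sl (10*r+2) • dirq (10*r+2) + sl (10*r+3) • dirq (10*r+3) + sl (10*r+4) • dirq (10*r+4)
        + sl (10*r+5) • dirq (10*r+5) + sl (10*r+6) • dirq (10*r+6) + sl (10*r+7) • dirq (10*r+7)
        + sl (10*r+8) • dirq (10*r+8) + sl (10*r+9) • dirq (10*r+9) := rfl
    rw [e, ih, sl0, sl4, sl6, 
      slo r 1 (by simp) (by simp) (by simp) (by simp), slo r 2 (by simp) (by simp) (by simp) (by simp), slo r 3 (by simp) (by simp) (by simp) (by simp), slo r 5 (by simp) (by simp) (by simp) (by simp), slo r 7 (by simp) (by simp) (by simp) (by simp), slo r 8 (by simp) (by simp) (by simp) (by simp), slo r 9 (by simp) (by simp) (by simp) (by simp)]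
    have d0 := dirq_form r 0
    rw [add_zero] at d0
    rw [d0]
    simp only [dirq_form]
    have z2 := zeta_sq
    set ζ := uE (π/4) with hζ
    have z3 : ζ^3 = Complex.I * ζ := by rw [pow_succ, z2]
    have z4 : ζ^4 = -1 := by rw [show ζ^4 = (ζ^2)^2 by ring, z2, Complex.I_sq]
    have z5 : ζ^5 = -ζ := by rw [pow_succ, z4]; ring
    have z6 : ζ^6 = -Complex.I := by rw [show ζ^6 = ζ^4*ζ^2 by ring, z2, z4]; ring
    have z7 : ζ^7 = -(Complex.I*ζ) := by rw [pow_succ, z6]; ring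
    have z8 : ζ^8 = 1 := by rw [show ζ^8 = (ζ^4)^2 by ring, z4]; ring
    have z9 : ζ^9 = ζ := by rw [pow_succ, z8]; ring
    rw [z2, z3, z4, z5, z6, z7, z8, z9]
    have zv : ζ = (√2/2 : ℝ) + (√2/2 : ℝ) * Complex.I := zeta_val
    have hD : (Dn (r/4) : ℂ) = 2 * (Mr (r/4) : ℂ) := by unfold Mr; push_cast; ring
    simp only [Complex.real_smul]
    rw [pow_succ, pow_one, zv]
    push_cast
    rw [hD]
    have hI : Complex.I^2 = -1 := Complex.I_sq
    ring_nf
    rw [hI]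
    ring


lemma two_rows {u g : ℝ} (hu : 0 ≤ u) (huh : u ≤ hh) (hg : 0 ≤ g) (hg2 : g ≤ 1/2) :
    u^2 + g^2 ≤ 1 ∨ (hh - u)^2 + (1/2 - g)^2 ≤ 1 := by
  have h3 : √3^2 = 3 := Real.sq_sqrt (by norm_num)
  have hb := sqrt3_bounds
  unfold hh at *
  set k := √3 with hk
  by_cases c1 : u ≤ k/2
  · left; nlinarith
  by_cases c2 : 1 ≤ u
  · right; nlinarith
  push Not at c1 c2
  obtain ⟨τ, hτ⟩ : ∃ τ, u = k/2 + τ*(1-k/2) := ⟨(u-k/2)/(1-k/2), by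
    have : (1 - k/2) ≠ 0 := by nlinarith
    rw [div_mul_cancel₀ _ this]; ring⟩
  have t0 : 0 ≤ τ := by
    by_contra h; push Not at h; nlinarith
  have t1 : τ ≤ 1 := by
    by_contra h; push Not at h; nlinarith
  have tt : 0 ≤ τ*(1-τ) := mul_nonneg t0 (by linarith)
  by_cases c3 : g ≤ (1-τ)/2
  · left
    have e : u^2 + ((1-τ)/2)^2 = 1 - τ*(1-τ)*(2-k) := by rw [hτ]; linear_combination (1/4*(1-τ)^2) * h3
    have : 0 ≤ τ*(1-τ)*(2-k) := mul_nonneg tt (by linarith)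
    nlinarith
  · right
    push Not at c3
    have e : (1+k/2-u)^2 + (τ/2)^2 = 1 - τ*(1-τ)*(2-k) := by rw [hτ]; linear_combination (1/4*τ^2) * h3
    have : 0 ≤ τ*(1-τ)*(2-k) := mul_nonneg tt (by linarith)
    nlinarith

lemma cover_sector {x y : ℝ} (h : |y| ≤ x) :
    ∃ j i : ℕ, i ≤ Dn j ∧ (x - j*hh)^2 + (y + Mr j - i)^2 ≤ 1 := by
  have hb := hh_bounds
  have hx : 0 ≤ x := (abs_nonneg y).trans h
  have hp : 0 < hh := by linarith
  set j := ⌊x/hh⌋₊ with hj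
  have j1 : j * hh ≤ x := by
    have := Nat.floor_le (a := x/hh) (by positivity)
    rwa [le_div_iff₀ hp] at this
  have j2 : x < (j+1) * hh := by
    have := Nat.lt_floor_add_one (x/hh)
    rwa [div_lt_iff₀ hp] at this
  obtain ⟨y1, y2⟩ := abs_le.1 h
  have M0 := Mr_bounds j
  have M1 := Mr_bounds (j+1)
  push_cast at M1
  have idx : ∀ (j : ℕ) (k : ℤ), |y| ≤ Mr j → |y + Mr j - k| ≤ 1/2 →
      ∃ i : ℕ, i ≤ Dn j ∧ (i:ℝ) = k := by
    intro j k hy hk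
    obtain ⟨a1, a2⟩ := abs_le.1 hy
    obtain ⟨b1, b2⟩ := abs_le.1 hk
    have e : (Dn j : ℝ) = 2 * Mr j := by unfold Mr; ring
    have k0 : (-1:ℝ) < k := by linarith
    have k0' : 0 ≤ k := by
      have : (-1:ℤ) < k := by exact_mod_cast k0
      omega
    have k1 : (k:ℝ) < Dn j + 1 := by linarith
    lift k to ℕ using k0'
    refine ⟨k, ?_, by simp⟩
    have : k < Dn j + 1 := by exact_mod_cast k1
    omega
  set k := round (y + Mr j) with hk
  have hk2 : |y + Mr j - k| ≤ 1/2 := abs_sub_round _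
  rcases two_rows (u := x - j*hh) (g := |y + Mr j - k|) (by linarith) (by linarith) (abs_nonneg _) hk2 with c | c
  · obtain ⟨i, hi, hik⟩ := idx j k (abs_le.2 ⟨by linarith, by linarith⟩) hk2
    refine ⟨j, i, hi, ?_⟩
    rw [hik]; rwa [sq_abs] at c
  · obtain ⟨e, he⟩ := Mr_succ j
    obtain ⟨k', hk'⟩ : ∃ k' : ℤ, |y + Mr (j+1) - k'| = 1/2 - |y + Mr j - k| := by
      rcases le_total 0 (y + Mr j - k) with s | s
      · refine ⟨k+e+1, ?_⟩
        rw [abs_of_nonneg s] at hk2 ⊢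
        rw [he]; push_cast
        rw [abs_of_nonpos (by linarith)]; ring
      · refine ⟨k+e, ?_⟩
        rw [abs_of_nonpos s] at hk2 ⊢
        rw [he]; push_cast
        rw [abs_of_nonneg (by linarith)]; ring
    obtain ⟨i, hi, hik⟩ := idx (j+1) k' (abs_le.2 ⟨by linarith, by linarith⟩)
      (by rw [hk']; linarith [abs_nonneg (y + Mr j - k)])
    refine ⟨j+1, i, hi, ?_⟩
    rw [← hk', sq_abs] at c
    rw [hik]; push_cast
    have : x - (j+1)*hh = -(hh - (x - j*hh)) := by ring
    rw [this, neg_sq]; exact c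

lemma rot_sector (z : ℂ) : ∃ (m : ℕ) (w : ℂ), m < 4 ∧ z = Complex.I^m * w ∧ |w.im| ≤ w.re := by
  by_cases h1 : |z.im| ≤ |z.re|
  · rcases le_total 0 z.re with s | s
    · exact ⟨0, z, by norm_num, by simp, by rwa [abs_of_nonneg s] at h1⟩
    · refine ⟨2, -z, by norm_num, by simp [Complex.I_sq], ?_⟩
      rw [abs_of_nonpos s] at h1; simpa using h1
  · push Not at h1
    rcases le_total 0 z.im with s | s
    · refine ⟨1, -Complex.I*z, by norm_num, by rw [pow_one, ← mul_assoc]; simp, ?_⟩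
      rw [abs_of_nonneg s] at h1; simpa using h1.le
    · refine ⟨3, Complex.I*z, by norm_num, by rw [Complex.I_pow_three, ← mul_assoc]; simp, ?_⟩
      rw [abs_of_nonpos s] at h1; simpa using h1.le

lemma csq_rot {z : ℂ} {l : ℝ} (hz : z ∈ csq l) (r : ℕ) : ∃ w ∈ csq l, z = Complex.I^r * w := by
  induction r with
  | zero => exact ⟨z, hz, by simp⟩
  | succ r ih =>
    obtain ⟨w, hw, e⟩ := ih
    refine ⟨-Complex.I*w, ?_, ?_⟩
    · obtain ⟨h1, h2⟩ := hw
      exact ⟨by simpa using h2, by simpa using h1⟩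
    · rw [e, pow_succ]
      linear_combination (Complex.I^r*w) * Complex.I_sq

lemma norm_I_pow (r : ℕ) : ‖Complex.I^r‖ = 1 := by simp

section
variable {c : ℕ → ℂ}
  (hc : ∀ q i, i ≤ Nq q → c (Tm Nq q + i) = Wq q + (i * (sl q / Nq q)) • dirq q)

lemma row_point (hc : ∀ q i, i ≤ Nq q → c (Tm Nq q + i) = Wq q + (i * (sl q / Nq q)) • dirq q)
    (r i : ℕ) (hi : i ≤ Dn (r/4)) : c (Tm Nq (10*r) + i) =
    Complex.I^r * (((r/4 : ℕ) * hh : ℝ) + ((i:ℝ) - Mr (r/4) : ℝ) * Complex.I) := by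
  have d0 := dirq_form r 0
  rw [add_zero, pow_zero, mul_one] at d0
  have hp : (Dn (r/4) : ℝ) ≠ 0 := by
    have := Dn_pos (r/4)
    have h : Dn (r/4) ≠ 0 := by omega
    exact_mod_cast h
  rw [hc (10*r) i (by rw [Nq0]; exact hi), Nq0, sl0, div_self hp, mul_one, Wq_row, d0, Complex.real_smul, pow_succ]
  push_cast
  ring

lemma spiral_cover (hc : ∀ q i, i ≤ Nq q → c (Tm Nq q + i) = Wq q + (i * (sl q / Nq q)) • dirq q)
    (z : ℂ) : ∃ n, ‖z - c n‖ ≤ 1 := by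
  obtain ⟨m, w, hm, rfl, hw⟩ := rot_sector z
  obtain ⟨j, i, hi, h⟩ := cover_sector hw
  have hj : (4*j+m)/4 = j := by omega
  refine ⟨Tm Nq (10*(4*j+m)) + i, ?_⟩
  rw [row_point hc (4*j+m) i (by rw [hj]; exact hi), hj, pow_add, pow_mul, Complex.I_pow_four, one_pow, one_mul,
    ← mul_sub, norm_mul, norm_I_pow, one_mul]
  have : ‖w - (((j:ℝ)*hh : ℝ) + ((i:ℝ) - Mr j : ℝ) * Complex.I)‖^2 ≤ 1 := by
    rw [Complex.sq_norm, Complex.normSq_apply]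
    simp
    nlinarith
  nlinarith [norm_nonneg (w - (((j:ℝ)*hh : ℝ) + ((i:ℝ) - Mr j : ℝ) * Complex.I))]

lemma lip {c : ℕ → ℂ} (h1 : ∀ n, ‖c (n+1) - c n‖ ≤ 1) (n k : ℕ) : ‖c (n+k) - c n‖ ≤ k := by
  induction k with
  | zero => simp
  | succ k ih =>
    have := norm_add_le (c (n+k+1) - c (n+k)) (c (n+k) - c n)
    have := h1 (n+k)
    rw [sub_add_sub_cancel] at *
    rw [← add_assoc]; push_cast; linarith

lemma spiral_far (hc : ∀ q i, i ≤ Nq q → c (Tm Nq q + i) = Wq q + (i * (sl q / Nq q)) • dirq q)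
    (h1 : ∀ n, ‖c (n+1) - c n‖ ≤ 1) (J n : ℕ) (l : ℝ) (hl : l ≤ J*hh - 22) (hn : n ∈ idx c l) :
    n < Tm Nq (40*J) := by
  by_contra hge
  push Not at hge
  obtain ⟨q, i, hi, e⟩ := Tm_decomp Nq_ge n
  have hr : 4*J ≤ q/10 := by
    by_contra h
    push Not at h
    have := Tm_mono Nq (show q+1 ≤ 40*J by omega)
    rw [Tm_succ] at this
    omega
  set r := q/10 with hrd
  have key : ∃ i', i' ≤ Dn (r/4) ∧ ‖c n - c (Tm Nq (10*r) + i')‖ ≤ 21 := by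
    by_cases hq : q = 10*r
    · refine ⟨i, ?_, ?_⟩
      · rw [hq, Nq0] at hi; exact hi.le
      · rw [e, ← hq]; simp
    · refine ⟨Dn (r/4), le_rfl, ?_⟩
      have a := Tm_succ Nq (10*r)
      rw [Nq0] at a
      rw [← a]
      have b := Tm_row r
      have b1 := Tm_mono Nq (show 10*r+1 ≤ q by omega)
      have b2 := Tm_mono Nq (show q+1 ≤ 10*r+10 by omega)
      rw [Tm_succ] at b2
      obtain ⟨k, hk⟩ : ∃ k, n = Tm Nq (10*r+1) + k := ⟨n - Tm Nq (10*r+1), by omega⟩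
      have hk2 : k ≤ 21 := by omega
      rw [hk]
      refine (lip h1 _ k).trans ?_
      exact_mod_cast hk2
  obtain ⟨i', hi', hd⟩ := key
  obtain ⟨z, hz, hzn⟩ := hn
  obtain ⟨w, hw, rfl⟩ := csq_rot hz r
  rw [row_point hc r i' hi'] at hd
  set p : ℂ := (((r/4 : ℕ) * hh : ℝ) + ((i':ℝ) - Mr (r/4) : ℝ) * Complex.I) with hp
  have d2 : ‖Complex.I^r * w - Complex.I^r * p‖ ≤ 22 := by
    have := norm_add_le (Complex.I^r * w - c n) (c n - Complex.I^r * p)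
    rw [sub_add_sub_cancel] at this
    linarith
  rw [← mul_sub, norm_mul, norm_I_pow, one_mul] at d2
  have d3 := (Complex.abs_re_le_norm (w - p)).trans d2
  have pre : p.re = (r/4 : ℕ) * hh := by simp [hp]
  rw [Complex.sub_re, pre] at d3
  have d4 := (abs_le.1 d3).1
  have d5 := (abs_lt.1 hw.1).2
  have hJ : J ≤ r/4 := by omega
  have hJ' : (J:ℝ) ≤ (r/4 : ℕ) := by exact_mod_cast hJ
  have := hh_bounds
  nlinarith
end

lemma dens_limit : Tendsto (fun J : ℕ => (4*hh*J^2 + 116*J) * π / (4*((J:ℝ)*hh - 22)^2)) atTop (nhds (π/hh)) := by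
  have hb := hh_bounds
  have h0 : hh ≠ 0 := by linarith
  have t : Tendsto (fun J : ℕ => (1:ℝ)/J) atTop (nhds 0) := tendsto_one_div_atTop_nhds_zero_nat
  have h : Tendsto (fun J : ℕ => (4*hh + 116*((1:ℝ)/J)) * π / (4*(hh - 22*((1:ℝ)/J))^2)) atTop
      (nhds ((4*hh + 116*0)*π/(4*(hh-22*0)^2))) := by
    refine Tendsto.div ?_ ?_ (by simpa using h0)
    · exact ((t.const_mul 116).const_add _).mul_const _
    · exact (((t.const_mul 22).const_sub _).pow 2).const_mul _
  have e : (4*hh + 116*0)*π/(4*(hh-22*0)^2) = π/hh := by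
    rw [mul_zero, mul_zero, add_zero, sub_zero]; field_simp
  rw [e] at h
  refine h.congr' ?_
  filter_upwards [eventually_gt_atTop 0] with J hJ
  have hJ' : (J:ℝ) ≠ 0 := by positivity
  have e1 : (4*hh + 116*((1:ℝ)/J)) = (4*hh*J^2+116*J)/J^2 := by field_simp
  have e2 : (4*(hh - 22*((1:ℝ)/J))^2) = 4*((J:ℝ)*hh-22)^2/J^2 := by field_simp
  rw [e1, e2, div_mul_eq_mul_div, div_div_div_cancel_right₀ (by positivity)]

theorem upper_bound : ∃ C : ℕ → Pt, Admissible C ∧ lowerDensity C ≤ ENNReal.ofReal (2 * π / (2 + √3)) := by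
  obtain ⟨c, hc⟩ := path_exists (a := sl) (W := Wq) (N := Nq) Nq_ge (fun q => rfl)
  have hst := path_steps Nq_ge (fun q => by linarith [sl_ge q]) sl_le hc
  refine ⟨fun n => ofC (c n), path_admissible (spiral_cover hc) hst, ?_⟩
  have h1 : ∀ n, ‖c (n+1) - c n‖ ≤ 1 := by
    intro n
    obtain ⟨q, q', s, s', _, h2, h3, _, _, h6, _⟩ := hst n
    rw [h6, add_sub_cancel_left, norm_smul, show ‖dirq q‖ = 1 from norm_uE _, mul_one, Real.norm_eq_abs, abs_of_pos h2]
    exact h3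
  have hb := hh_bounds
  have hv : 2 * π / (2 + √3) = π / hh := by
    unfold hh
    have := sqrt3_bounds
    field_simp
  rw [hv]
  have hl : Tendsto (fun J : ℕ => (J:ℝ)*hh - 22) atTop atTop :=
    tendsto_atTop_add_const_right _ _ (tendsto_natCast_atTop_atTop.atTop_mul_const (by linarith))
  have hlim := ENNReal.tendsto_ofReal dens_limit
  rw [← hlim.liminf_eq]
  unfold lowerDensity
  refine (liminf_le_liminf_of_le (show map (fun J : ℕ => (J:ℝ)*hh - 22) atTop ≤ atTop from hl)).trans ?_
  rw [← liminf_comp]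
  refine liminf_le_liminf ?_
  filter_upwards [hl.eventually_gt_atTop 0] with J hJ
  simp only [Function.comp]
  have hN : Ncount (fun n => ofC (c n)) ((J:ℝ)*hh - 22) ≤ ENNReal.ofReal (4*hh*J^2 + 116*J) := by
    rw [Ncount_eq]
    simp only [toC_ofC]
    have hsub : idx c ((J:ℝ)*hh - 22) ⊆ ((Finset.range (Tm Nq (40*J)) : Finset ℕ) : Set ℕ) := by
      intro n hn
      simpa using spiral_far hc h1 J n _ le_rfl hn
    have := Set.encard_le_encard hsub
    rw [Set.encard_coe_eq_coe_finsetCard, Finset.card_range] at this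
    calc (((idx c ((J:ℝ)*hh - 22)).encard : ℕ∞) : ℝ≥0∞) ≤ (((Tm Nq (40*J) : ℕ) : ℕ∞) : ℝ≥0∞) := by
          exact_mod_cast this
      _ = ENNReal.ofReal (Tm Nq (40*J) : ℝ) := by simp
      _ ≤ _ := ENNReal.ofReal_le_ofReal (Tm_bound J)
  have hp := pi_pos
  rw [ENNReal.ofReal_div_of_pos (by positivity), ENNReal.ofReal_mul (p := 4*hh*J^2 + 116*J) (by have : 0 < hh := (by linarith); positivity)]
  gcongr

/-- The optimal lower density of covering the plane by a sequence of unit circular disks, each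
containing the center of the next and with no turn sharper than `2π/3`, equals `2π/(2+√3)`. -/
theorem optimal_lower_density_seq_covering :
    sInf {d : ℝ≥0∞ | ∃ C : ℕ → Pt, Admissible C ∧ d = lowerDensity C} =
      ENNReal.ofReal (2 * π / (2 + Real.sqrt 3)) := by
  apply le_antisymm
  · obtain ⟨C, hC, h⟩ := upper_bound
    refine le_trans (sInf_le ?_) h
    exact ⟨C, hC, rfl⟩
  · apply le_sInf
    rintro d ⟨C, hC, rfl⟩
    exact lower_bound hC
end
end

section
/- For every integer n ≥ 4, 2·a*(n) ≥ a*(n−1) + a*(n+1), where a*(k) is the supremum of the areas of convex polygons with at most k vertices inscribed in M; that is, the sequence of maximal inscribed-polygon areas in M is concave. -/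
open Metric MeasureTheory Real

noncomputable section

/-- The set `M`: the closed unit disk truncated by two chords of length `√3` sharing the
endpoint `(0, −1)`. -/
def M : Set Pt :=
  {p | p 0 ^ 2 + p 1 ^ 2 ≤ 1 ∧ Real.sqrt 3 * p 0 - p 1 ≤ 1 ∧ -Real.sqrt 3 * p 0 - p 1 ≤ 1}

/-- `a*(k)`: the supremum of the areas of convex polygons with at most `k` vertices inscribed
in `M`. -/
def astar (k : ℕ) : ℝ :=
  sSup {a : ℝ | ∃ S : Finset Pt, (S : Set Pt) ⊆ M ∧ S.card ≤ k ∧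
    a = (volume (convexHull ℝ (S : Set Pt))).toReal}

namespace AC

/-- Area of the convex hull, in the model `ℝ × ℝ`. -/
def V (S : Set (ℝ × ℝ)) : ENNReal := volume (convexHull ℝ S)

lemma V_lt_top {S : Set (ℝ × ℝ)} (hS : S.Finite) : V S < ⊤ :=
  (hS.isCompact_convexHull (𝕜 := ℝ)).measure_lt_top

lemma hull_meas {S : Set (ℝ × ℝ)} (hS : S.Finite) : MeasurableSet (convexHull ℝ S) :=
  (hS.isCompact_convexHull (𝕜 := ℝ)).isClosed.measurableSet

lemma abs_le_slice {K : Set (ℝ × ℝ)} (hK : Convex ℝ K) {x y z : ℝ} (hy : (x, y) ∈ K)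
    (hz : (x, z) ∈ K) : ENNReal.ofReal |y - z| ≤ volume (Prod.mk x ⁻¹' K) := by
  have hc : Convex ℝ (Prod.mk x ⁻¹' K) := by
    intro a ha b hb s t hs ht hst
    have := hK ha hb hs ht hst
    have e : s • (x, a) + t • (x, b) = (x, s • a + t • b) := by
      ext
      · simp [← add_mul, hst]
      · simp
    rw [e] at this
    exact this
  have h1 := hc.segment_subset hz hy
  rw [segment_eq_uIcc] at h1
  rw [← Real.volume_interval]
  exact measure_mono h1

lemma slice_ineq {T : Set (ℝ × ℝ)} (hT : T.Nonempty) {a u v t₁ t₂ : ℝ} (h1 : 0 ≤ t₁)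
    (h2 : 0 ≤ t₂) (h12 : t₁ + t₂ = 1) (x : ℝ) :
    volume (Prod.mk x ⁻¹' convexHull ℝ (insert (a, t₁ * u + t₂ * v) T)) ≤
      ENNReal.ofReal t₁ * volume (Prod.mk x ⁻¹' convexHull ℝ (insert (a, u) T)) +
      ENNReal.ofReal t₂ * volume (Prod.mk x ⁻¹' convexHull ℝ (insert (a, v) T)) := by
  refine (Real.volume_le_diam _).trans (ediam_le ?_)
  have key : ∀ y, (x, y) ∈ convexHull ℝ (insert (a, t₁ * u + t₂ * v) T) →
      ∃ α : ℝ, ∀ w, (x, y + α * (w - (t₁ * u + t₂ * v))) ∈ convexHull ℝ (insert (a, w) T) := by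
    intro y hy
    rw [convexHull_insert hT, mem_convexJoin] at hy
    obtain ⟨q, hq, k, hk, α, β, hα, hβ, hαβ, he⟩ := hy
    rw [Set.mem_singleton_iff] at hq
    subst hq
    refine ⟨α, fun w => ?_⟩
    rw [convexHull_insert hT, mem_convexJoin]
    refine ⟨_, rfl, k, hk, α, β, hα, hβ, hαβ, ?_⟩
    have e1 := congrArg Prod.fst he
    have e2 := congrArg Prod.snd he
    simp at e1 e2
    ext
    · simpa using e1
    · simp; linarith
  intro y hy z hz
  obtain ⟨α, hα⟩ := key y hy
  obtain ⟨β, hβ⟩ := key z hz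
  have hu := abs_le_slice (convex_convexHull ℝ _) (hα u) (hβ u)
  have hv := abs_le_slice (convex_convexHull ℝ _) (hα v) (hβ v)
  set p := t₁ * u + t₂ * v with hp
  have e : y - z = t₁ * (y + α * (u - p) - (z + β * (u - p)))
      + t₂ * (y + α * (v - p) - (z + β * (v - p))) := by
    have : t₂ = 1 - t₁ := by linarith
    rw [hp]; subst this; ring
  have : |y - z| ≤ t₁ * |y + α * (u - p) - (z + β * (u - p))|
      + t₂ * |y + α * (v - p) - (z + β * (v - p))| := by
    rw [e]
    refine (abs_add_le _ _).trans ?_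
    rw [abs_mul, abs_mul, abs_of_nonneg h1, abs_of_nonneg h2]
  rw [edist_dist, Real.dist_eq]
  refine (ENNReal.ofReal_le_ofReal this).trans ?_
  rw [ENNReal.ofReal_add (by positivity) (by positivity), ENNReal.ofReal_mul h1,
    ENNReal.ofReal_mul h2]
  gcongr

lemma V_vert {T : Set (ℝ × ℝ)} (hT : T.Nonempty) (hf : T.Finite) {a u v t₁ t₂ : ℝ} (h1 : 0 ≤ t₁)
    (h2 : 0 ≤ t₂) (h12 : t₁ + t₂ = 1) :
    V (insert (a, t₁ * u + t₂ * v) T) ≤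
      ENNReal.ofReal t₁ * V (insert (a, u) T) + ENNReal.ofReal t₂ * V (insert (a, v) T) := by
  have e : ∀ w, V (insert (a, w) T) =
      ∫⁻ x, volume (Prod.mk x ⁻¹' convexHull ℝ (insert (a, w) T)) := by
    intro w
    rw [V, Measure.volume_eq_prod, Measure.prod_apply (hull_meas (hf.insert _))]
  rw [e, e, e, ← lintegral_const_mul _ (measurable_measure_prodMk_left (hull_meas (hf.insert _))),
    ← lintegral_const_mul _ (measurable_measure_prodMk_left (hull_meas (hf.insert _))),
    ← lintegral_add_left ((measurable_measure_prodMk_left (hull_meas (hf.insert _))).const_mul _)]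
  exact lintegral_mono fun x => slice_ineq hT h1 h2 h12 x

lemma V_image (A : (ℝ × ℝ) ≃L[ℝ] (ℝ × ℝ)) (S : Set (ℝ × ℝ)) :
    V (A '' S) = ENNReal.ofReal |LinearMap.det ((A : (ℝ × ℝ) →L[ℝ] (ℝ × ℝ)) : (ℝ × ℝ) →ₗ[ℝ] (ℝ × ℝ))| * V S := by
  have : convexHull ℝ (A '' S) = A '' convexHull ℝ S := by
    have := ((A : (ℝ × ℝ) →L[ℝ] (ℝ × ℝ)) : (ℝ × ℝ) →ₗ[ℝ] (ℝ × ℝ)).image_convexHull S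
    exact this.symm
  rw [V, V, this, Measure.addHaar_image_continuousLinearEquiv]
  rfl

lemma V_conv {T : Set (ℝ × ℝ)} (hf : T.Finite) (u v : ℝ × ℝ) {t₁ t₂ : ℝ} (h1 : 0 ≤ t₁)
    (h2 : 0 ≤ t₂) (h12 : t₁ + t₂ = 1) :
    V (insert (t₁ • u + t₂ • v) T) ≤
      ENNReal.ofReal t₁ * V (insert u T) + ENNReal.ofReal t₂ * V (insert v T) := by
  rcases T.eq_empty_or_nonempty with rfl | hT
  · simp [V]
  by_cases huv : u = v
  · subst huv
    rw [← add_smul, h12, one_smul, ← add_mul, ← ENNReal.ofReal_add h1 h2, h12]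
    simp
  obtain ⟨A, hA⟩ := SeparatingDual.exists_continuousLinearEquiv_apply_eq (R := ℝ)
    (x := ((0, 1) : ℝ × ℝ)) (y := v - u) (by simp) (by simpa [sub_eq_zero] using Ne.symm huv)
  have im : ∀ w, insert w T = A '' (insert (A.symm w) (A.symm '' T)) := by
    intro w
    simp [Set.image_insert_eq, Set.image_image]
  have hv : A.symm v = A.symm u + (0, 1) := by
    apply A.injective
    simp [hA]
  have hw : A.symm (t₁ • u + t₂ • v) =
      ((A.symm u).1, t₁ * (A.symm u).2 + t₂ * ((A.symm u).2 + 1)) := by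
    rw [map_add, map_smul, map_smul, hv]
    ext
    · simp [← add_mul, h12]
    · simp [mul_add]
  have hv' : A.symm v = ((A.symm u).1, (A.symm u).2 + 1) := by
    rw [hv]; ext <;> simp
  have hu' : A.symm u = ((A.symm u).1, (A.symm u).2) := rfl
  rw [im, im u, im v, V_image, V_image, V_image, hw, hv']
  have := V_vert (hT.image A.symm) (hf.image A.symm) (a := (A.symm u).1) (u := (A.symm u).2)
    (v := (A.symm u).2 + 1) h1 h2 h12
  refine (mul_le_mul_right this _).trans (le_of_eq ?_)
  ring

lemma V_max {T E : Set (ℝ × ℝ)} (hf : T.Finite) {p : ℝ × ℝ} (hp : p ∈ convexHull ℝ E) :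
    ∃ q ∈ E, V (insert p T) ≤ V (insert q T) := by
  have hc : ConvexOn ℝ (convexHull ℝ E) fun p => (V (insert p T)).toReal := by
    refine ⟨convex_convexHull ℝ E, fun u _ v _ t₁ t₂ h1 h2 h12 => ?_⟩
    have := V_conv hf u v h1 h2 h12
    have hu := (V_lt_top (hf.insert u)).ne
    have hv := (V_lt_top (hf.insert v)).ne
    have := ENNReal.toReal_mono (by finiteness) this
    rw [ENNReal.toReal_add (by finiteness) (by finiteness)] at this
    simpa [h1, h2] using this
  obtain ⟨q, hq, h⟩ := hc.exists_ge_of_mem_convexHull (subset_convexHull ℝ E) hp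
  exact ⟨q, hq, (ENNReal.toReal_le_toReal (V_lt_top (hf.insert _)).ne (V_lt_top (hf.insert _)).ne).1 h⟩

lemma V_reduce {E : Set (ℝ × ℝ)} (S : Finset (ℝ × ℝ)) (hS : (S : Set (ℝ × ℝ)) ⊆ convexHull ℝ E) :
    ∀ T : Finset (ℝ × ℝ), (T : Set (ℝ × ℝ)) ⊆ E →
    ∃ T' : Finset (ℝ × ℝ), (T' : Set (ℝ × ℝ)) ⊆ E ∧ T'.card ≤ S.card + T.card ∧
      V ((S ∪ T : Finset (ℝ × ℝ)) : Set (ℝ × ℝ)) ≤ V T' := by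
  induction S using Finset.induction_on with
  | empty => exact fun T hT => ⟨T, hT, by simp, by simp⟩
  | insert p S hp ih =>
    intro T hT
    rw [Finset.coe_insert, Set.insert_subset_iff] at hS
    obtain ⟨q, hq, hle⟩ := V_max (T := ((S ∪ T : Finset (ℝ × ℝ)) : Set (ℝ × ℝ)))
      (Finset.finite_toSet _) hS.1
    obtain ⟨T', h1, h2, h3⟩ := ih hS.2 (insert q T) (by
      rw [Finset.coe_insert, Set.insert_subset_iff]; exact ⟨hq, hT⟩)
    refine ⟨T', h1, ?_, ?_⟩
    · rw [Finset.card_insert_of_notMem hp]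
      have := Finset.card_insert_le q T
      omega
    · rw [Finset.insert_union, Finset.coe_insert]
      refine hle.trans ?_
      rw [← Finset.coe_insert, ← Finset.union_insert]
      exact h3

def Δc : Set (ℝ × ℝ) := {p | 0 ≤ p.1 ∧ 0 ≤ p.2 ∧ p.1 + p.2 ≤ 1}

def Δo : Set (ℝ × ℝ) := {p | 0 < p.1 ∧ 0 < p.2 ∧ p.1 + p.2 < 1}

lemma int_half : ∫ x in (0 : ℝ)..1, (1 - x) = 1 / 2 := by
  rw [intervalIntegral.integral_sub (by simp) (by simp)]
  norm_num

lemma vol_Δc : volume Δc = ENNReal.ofReal (1 / 2) := by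
  have hm : MeasurableSet Δc := by
    apply IsClosed.measurableSet
    exact (isClosed_le continuous_const continuous_fst).inter
      ((isClosed_le continuous_const continuous_snd).inter
      (isClosed_le (continuous_fst.add continuous_snd) continuous_const))
  rw [Measure.volume_eq_prod, Measure.prod_apply hm]
  have : ∀ x : ℝ, volume (Prod.mk x ⁻¹' Δc) =
      (Set.Icc (0 : ℝ) 1).indicator (fun x => ENNReal.ofReal (1 - x)) x := by
    intro x
    by_cases hx : x ∈ Set.Icc (0 : ℝ) 1
    · rw [Set.indicator_of_mem hx]
      have : Prod.mk x ⁻¹' Δc = Set.Icc 0 (1 - x) := by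
        ext y
        simp only [Δc, Set.mem_preimage, Set.mem_ofPred_eq, Set.mem_Icc]
        constructor
        · rintro ⟨h1, h2, h3⟩; exact ⟨h2, by linarith⟩
        · rintro ⟨h1, h2⟩; exact ⟨hx.1, h1, by linarith⟩
      rw [this, Real.volume_Icc, sub_zero]
    · rw [Set.indicator_of_notMem hx]
      have : Prod.mk x ⁻¹' Δc = ∅ := by
        ext y
        simp only [Δc, Set.mem_preimage, Set.mem_ofPred_eq, Set.mem_empty_iff_false, iff_false]
        rintro ⟨h1, h2, h3⟩
        exact hx ⟨h1, by linarith⟩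
      rw [this, measure_empty]
  simp_rw [this]
  rw [lintegral_indicator measurableSet_Icc, ← ofReal_integral_eq_lintegral_ofReal]
  · rw [integral_Icc_eq_integral_Ioc, ← intervalIntegral.integral_of_le zero_le_one, int_half]
  · exact (Continuous.continuousOn (by fun_prop)).integrableOn_Icc
  · refine (ae_restrict_iff' measurableSet_Icc).2 (Filter.Eventually.of_forall fun x hx => ?_)
    simp [hx.2]

lemma vol_Δo : volume Δo = ENNReal.ofReal (1 / 2) := by
  have : Δo = regionBetween (fun _ : ℝ => (0 : ℝ)) (fun x => 1 - x) (Set.Ioo 0 1) := by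
    ext ⟨x, y⟩
    simp only [Δo, regionBetween, Set.mem_ofPred_eq, Set.mem_Ioo]
    constructor
    · rintro ⟨h1, h2, h3⟩; exact ⟨⟨h1, by linarith⟩, h2, by linarith⟩
    · rintro ⟨⟨h1, _⟩, h2, h3⟩; exact ⟨h1, h2, by linarith⟩
  rw [this, Measure.volume_eq_prod, volume_regionBetween_eq_integral]
  · congr 1
    rw [← integral_Ioc_eq_integral_Ioo, ← intervalIntegral.integral_of_le zero_le_one, ← int_half]
    simp
  · exact (Continuous.continuousOn (by fun_prop)).integrableOn_Icc.mono_set Set.Ioo_subset_Icc_self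
  · exact (Continuous.continuousOn (by fun_prop)).integrableOn_Icc.mono_set Set.Ioo_subset_Icc_self
  · exact measurableSet_Ioo
  · intro x hx; simp; exact hx.2.le

def C : ℝ × ℝ := (0, -1)

/-- The linear map sending the standard triangle to the triangle with vertices `C`, `u`, `q`
(up to translation by `C`). -/
def Lin (u q : ℝ × ℝ) : (ℝ × ℝ) →ₗ[ℝ] (ℝ × ℝ) :=
  Matrix.toLin (Module.Basis.finTwoProd ℝ) (Module.Basis.finTwoProd ℝ) !![u.1, q.1; u.2 + 1, q.2 + 1]

lemma Lin_apply (u q p : ℝ × ℝ) :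
    Lin u q p = (u.1 * p.1 + q.1 * p.2, (u.2 + 1) * p.1 + (q.2 + 1) * p.2) := by
  rw [Lin, Matrix.toLin_finTwoProd_apply]

/-- Cross product of `u - C` and `q - C`. -/
def cr (u q : ℝ × ℝ) : ℝ := u.1 * (q.2 + 1) - (u.2 + 1) * q.1

lemma Lin_det (u q : ℝ × ℝ) : LinearMap.det (Lin u q) = cr u q := by
  rw [Lin, LinearMap.det_toLin, Matrix.det_fin_two_of, cr]; ring

def Tri (u q : ℝ × ℝ) (D : Set (ℝ × ℝ)) : Set (ℝ × ℝ) :=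
  (fun h => -C + h) ⁻¹' (Lin u q '' D)

lemma mem_Tri {u q : ℝ × ℝ} {D : Set (ℝ × ℝ)} {z : ℝ × ℝ} :
    z ∈ Tri u q D ↔ ∃ p ∈ D, z = C + Lin u q p := by
  constructor
  · rintro ⟨p, hp, h⟩
    refine ⟨p, hp, ?_⟩
    simp only at h
    rw [h]; simp
  · rintro ⟨p, hp, rfl⟩
    exact ⟨p, hp, by simp⟩

lemma vol_Tri {u q : ℝ × ℝ} {D : Set (ℝ × ℝ)} (h : 0 ≤ cr u q)
    (hD : volume D = ENNReal.ofReal (1 / 2)) :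
    volume (Tri u q D) = ENNReal.ofReal (cr u q / 2) := by
  rw [Tri, measure_preimage_add, Measure.addHaar_image_linearMap, Lin_det, hD, abs_of_nonneg h,
    ← ENNReal.ofReal_mul h]
  congr 1; ring

lemma hull3_sub (u q : ℝ × ℝ) : convexHull ℝ {C, u, q} ⊆ Tri u q Δc := by
  apply convexHull_min
  · intro z hz
    rw [mem_Tri]
    simp only [Set.mem_insert_iff, Set.mem_singleton_iff] at hz
    rcases hz with rfl | rfl | rfl
    · exact ⟨(0, 0), by simp [Δc], by simp [Lin_apply]⟩
    · exact ⟨(1, 0), by simp [Δc], by ext <;> simp [Lin_apply, C]⟩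
    · exact ⟨(0, 1), by simp [Δc], by ext <;> simp [Lin_apply, C]⟩
  · have : Convex ℝ Δc := by
      intro x hx y hy a b ha hb hab
      obtain ⟨h1, h2, h3⟩ := hx
      obtain ⟨h4, h5, h6⟩ := hy
      refine ⟨?_, ?_, ?_⟩
      · simp; positivity
      · simp; positivity
      · simp; nlinarith
    exact (this.linear_image (Lin u q)).translate_preimage_right _

lemma Tri_sub (u q : ℝ × ℝ) : Tri u q Δo ⊆ convexHull ℝ {C, u, q} := by
  intro z hz
  rw [mem_Tri] at hz
  obtain ⟨⟨s, t⟩, ⟨hs, ht, hst⟩, rfl⟩ := hz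
  simp only at hs ht hst
  have := (convex_convexHull ℝ ({C, u, q} : Set (ℝ × ℝ))).sum_mem (t := Finset.univ)
    (w := ![1 - s - t, s, t]) (z := ![C, u, q]) (by
      intro i _; fin_cases i <;> simp <;> linarith) (by simp [Fin.sum_univ_three]; ring) (by
      intro i _; apply subset_convexHull; fin_cases i <;> simp)
  convert this using 1
  simp only [Fin.sum_univ_three]
  ext
  · simp [Lin_apply, C]; ring
  · simp [Lin_apply, C]; ring

lemma disk_convex : Convex ℝ {p : ℝ × ℝ | p.1 ^ 2 + p.2 ^ 2 ≤ 1} := by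
  intro x hx y hy a b ha hb hab
  simp only [Set.mem_ofPred_eq] at hx hy
  have hb' : b = 1 - a := by linarith
  subst hb'
  simp
  nlinarith [mul_nonneg (mul_nonneg ha hb) (add_nonneg (sq_nonneg (x.1 - y.1)) (sq_nonneg (x.2 - y.2))),
    mul_nonneg ha (sub_nonneg.2 hx), mul_nonneg hb (sub_nonneg.2 hy)]

lemma cr_comb (u x y : ℝ × ℝ) {a b : ℝ} (hab : a + b = 1) :
    cr u (a • x + b • y) = a * cr u x + b * cr u y := by
  have hb' : b = 1 - a := by linarith
  subst hb'
  simp [cr]; ring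

lemma chord {u w : ℝ × ℝ} (hu : u.1 ^ 2 + u.2 ^ 2 = 1) (hu2 : 0 < u.2 + 1)
    (hw : w.1 ^ 2 + w.2 ^ 2 ≤ 1) (h : cr u w = 0) : w ∈ segment ℝ C u := by
  obtain ⟨t, ht⟩ : ∃ t, t = (w.2 + 1) / (u.2 + 1) := ⟨_, rfl⟩
  have e2 : w.2 = t * (u.2 + 1) - 1 := by rw [ht]; field_simp; ring
  have e1 : w.1 = t * u.1 := by
    have : (u.2 + 1) * w.1 = (u.2 + 1) * (t * u.1) := by
      rw [cr, e2] at h; linarith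
    exact mul_left_cancel₀ hu2.ne' this
  rw [e1, e2] at hw
  have h3 : (u.2 + 1) * (t ^ 2 - t) ≤ 0 := by nlinarith
  have h4 : t ^ 2 - t ≤ 0 := by
    by_contra hc
    push Not at hc
    nlinarith
  have t0 : 0 ≤ t := by nlinarith
  have t1 : t ≤ 1 := by nlinarith
  refine ⟨1 - t, t, by linarith, t0, by ring, ?_⟩
  ext
  · simp [C, e1]
  · simp [C, e2]; ring

lemma hull_step {S : Set (ℝ × ℝ)} {u q : ℝ × ℝ} (hC : C ∈ S) (huS : u ∈ S)
    (hd : ∀ p ∈ S, p.1 ^ 2 + p.2 ^ 2 ≤ 1) (hs : ∀ p ∈ S, cr u p ≤ 0)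
    (hu : u.1 ^ 2 + u.2 ^ 2 = 1) (hu2 : 0 < u.2 + 1) (hq : q.1 ^ 2 + q.2 ^ 2 ≤ 1)
    (hcr : 0 < cr u q) :
    convexHull ℝ (insert q S) ⊆ convexHull ℝ S ∪ convexHull ℝ {C, u, q} := by
  intro z hz
  rw [convexHull_insert ⟨C, hC⟩, mem_convexJoin] at hz
  obtain ⟨q', hq', k, hk, hz⟩ := hz
  rw [Set.mem_singleton_iff] at hq'
  subst hq'
  have hdk : k.1 ^ 2 + k.2 ^ 2 ≤ 1 := convexHull_min (t := {p : ℝ × ℝ | p.1 ^ 2 + p.2 ^ 2 ≤ 1}) hd disk_convex hk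
  have hsk : cr u k ≤ 0 := by
    refine convexHull_min (t := {p : ℝ × ℝ | cr u p ≤ 0}) hs ?_ hk
    intro x hx y hy a b ha hb hab
    simp only [Set.mem_ofPred_eq] at *
    rw [cr_comb u x y hab]
    nlinarith
  rw [segment_symm, segment_eq_image_lineMap] at hz
  obtain ⟨a, ⟨ha0, ha1⟩, rfl⟩ := hz
  obtain ⟨c, hc⟩ : ∃ c, c = -cr u k / (cr u q' - cr u k) := ⟨_, rfl⟩
  have hpos : 0 < cr u q' - cr u k := by linarith
  have hc0 : 0 ≤ c := by rw [hc]; exact div_nonneg (by linarith) hpos.le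
  have hc1 : c ≤ 1 := by rw [hc, div_le_one hpos]; linarith
  have hw : AffineMap.lineMap k q' c ∈ segment ℝ C u := by
    have e : AffineMap.lineMap k q' c = (1 - c) • k + c • q' := AffineMap.lineMap_apply_module _ _ _
    refine chord hu hu2 ?_ ?_
    · rw [e]
      exact disk_convex hdk hq (by linarith) hc0 (by ring)
    · rw [e, cr_comb _ _ _ (by ring), hc]
      field_simp
      ring
  have im : ∀ s t r : ℝ, s ≤ r → r ≤ t → AffineMap.lineMap k q' r ∈
      segment ℝ (AffineMap.lineMap k q' s) (AffineMap.lineMap k q' t : ℝ × ℝ) := by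
    intro s t r h1 h2
    rw [← image_segment, segment_eq_Icc (h1.trans h2)]
    exact ⟨r, ⟨h1, h2⟩, rfl⟩
  rcases le_total a c with h | h
  · left
    have := im 0 c a ha0 h
    rw [AffineMap.lineMap_apply_zero] at this
    refine (convex_convexHull ℝ S).segment_subset hk ?_ this
    exact (convex_convexHull ℝ S).segment_subset (subset_convexHull ℝ S hC) (subset_convexHull ℝ S huS) hw
  · right
    have := im c 1 a h ha1
    rw [AffineMap.lineMap_apply_one] at this
    have h3 := convex_convexHull ℝ ({C, u, q'} : Set (ℝ × ℝ))
    refine h3.segment_subset ?_ (subset_convexHull ℝ _ (by simp)) this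
    exact h3.segment_subset (subset_convexHull ℝ _ (by simp)) (subset_convexHull ℝ _ (by simp)) hw

lemma V_step {S : Set (ℝ × ℝ)} (hf : S.Finite) {u q : ℝ × ℝ} (hC : C ∈ S) (huS : u ∈ S)
    (hd : ∀ p ∈ S, p.1 ^ 2 + p.2 ^ 2 ≤ 1) (hs : ∀ p ∈ S, cr u p ≤ 0)
    (hu : u.1 ^ 2 + u.2 ^ 2 = 1) (hu2 : 0 < u.2 + 1) (hq : q.1 ^ 2 + q.2 ^ 2 ≤ 1)
    (hcr : 0 < cr u q) :
    V (insert q S) = V S + ENNReal.ofReal (cr u q / 2) := by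
  apply le_antisymm
  · refine (measure_mono (hull_step hC huS hd hs hu hu2 hq hcr)).trans ?_
    refine (measure_union_le _ _).trans ?_
    rw [← vol_Tri hcr.le vol_Δc]
    exact add_le_add le_rfl (measure_mono (hull3_sub u q))
  · rw [← vol_Tri hcr.le vol_Δo, V, ← measure_union']
    · apply measure_mono
      apply Set.union_subset (convexHull_mono (Set.subset_insert _ _))
      refine (Tri_sub u q).trans (convexHull_mono ?_)
      intro z hz
      simp only [Set.mem_insert_iff, Set.mem_singleton_iff] at hz
      rcases hz with rfl | rfl | rfl
      · exact Or.inr hC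
      · exact Or.inr huS
      · exact Or.inl rfl
    · rw [Set.disjoint_left]
      intro k hk hk'
      have hsk : cr u k ≤ 0 := by
        refine convexHull_min (t := {p : ℝ × ℝ | cr u p ≤ 0}) hs ?_ hk
        intro x hx y hy a b ha hb hab
        simp only [Set.mem_ofPred_eq] at *
        rw [cr_comb u x y hab]
        nlinarith
      rw [mem_Tri] at hk'
      obtain ⟨⟨s, t⟩, ⟨_, ht, _⟩, rfl⟩ := hk'
      have : cr u (C + Lin u q (s, t)) = t * cr u q := by
        simp [cr, C, Lin_apply]; ring
      rw [this] at hsk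
      have : 0 < t * cr u q := mul_pos ht hcr
      linarith
    · exact hull_meas hf

lemma sin_tangent {x φ : ℝ} (hx0 : 0 ≤ x) (hx1 : x ≤ π) (h0 : 0 ≤ φ) (h1 : φ ≤ π) :
    sin x ≤ sin φ + cos φ * (x - φ) := by
  rcases lt_trichotomy x φ with h | h | h
  · obtain ⟨ξ, ⟨hξ1, hξ2⟩, e⟩ := exists_deriv_eq_slope sin h continuous_sin.continuousOn
      differentiable_sin.differentiableOn
    rw [Real.deriv_sin, eq_div_iff (by linarith)] at e
    have := cos_le_cos_of_nonneg_of_le_pi (hx0.trans hξ1.le) h1 hξ2.le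
    nlinarith
  · subst h; simp
  · obtain ⟨ξ, ⟨hξ1, hξ2⟩, e⟩ := exists_deriv_eq_slope sin h continuous_sin.continuousOn
      differentiable_sin.differentiableOn
    rw [Real.deriv_sin, eq_div_iff (by linarith)] at e
    have := cos_le_cos_of_nonneg_of_le_pi h0 (hξ2.le.trans hx1) hξ1.le
    nlinarith

/-- `sin x ≤ √3/2 + (x - π/3)/2` on `[-π/3, π/3]`. -/
lemma sin_third {x : ℝ} (hx0 : -(π / 3) ≤ x) (hx1 : x ≤ π / 3) :
    sin x ≤ √3 / 2 + (x - π / 3) / 2 := by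
  rcases hx1.lt_or_eq with h | h
  · obtain ⟨ξ, ⟨hξ1, hξ2⟩, e⟩ := exists_deriv_eq_slope sin h continuous_sin.continuousOn
      differentiable_sin.differentiableOn
    rw [Real.deriv_sin, eq_div_iff (by linarith), sin_pi_div_three] at e
    have : cos (π / 3) ≤ cos ξ := by
      rw [← cos_abs ξ]
      exact cos_le_cos_of_nonneg_of_le_pi (abs_nonneg _) (by linarith [pi_pos])
        (abs_le.2 ⟨by linarith, by linarith⟩)
    rw [cos_pi_div_three] at this
    nlinarith
  · subst h; simp [sin_pi_div_three]

def pt (θ : ℝ) : ℝ × ℝ := (cos θ, sin θ)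

def I : Set ℝ := Set.Icc (π / 6) (5 * π / 6)

lemma cr_pt (α γ : ℝ) : cr (pt α) (pt γ) = sin (γ - α) + cos α - cos γ := by
  simp [cr, pt, sin_sub]; ring

lemma cr_pt_nonneg {α γ : ℝ} (hα : α ∈ I) (hγ : γ ∈ I) (h : α < γ) :
    0 < cr (pt α) (pt γ) := by
  have hp := pi_pos
  rw [cr_pt]
  have h1 : cos γ < cos α := cos_lt_cos_of_nonneg_of_le_pi (by linarith [hα.1]) (by linarith [hγ.2]) h
  have h2 : 0 ≤ sin (γ - α) := sin_nonneg_of_nonneg_of_le_pi (by linarith)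
    (by linarith [hα.1, hγ.2])
  linarith

lemma cr_swap (u q : ℝ × ℝ) : cr u q = - cr q u := by simp [cr]; ring

lemma pt_step {Θ : Set ℝ} (hf : Θ.Finite) (hI : Θ ⊆ I) {α γ : ℝ} (hα : α ∈ Θ)
    (hmax : ∀ θ ∈ Θ, θ ≤ α) (hγ : γ ∈ I) (h : α < γ) :
    (V (insert C (pt '' insert γ Θ))).toReal =
      (V (insert C (pt '' Θ))).toReal + (sin (γ - α) + cos α - cos γ) / 2 := by
  have hp := pi_pos
  have hpos := cr_pt_nonneg (hI hα) hγ h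
  have hunit : ∀ θ, (pt θ).1 ^ 2 + (pt θ).2 ^ 2 = 1 := fun θ => by
    simp [pt]
  have hsin : 0 < sin α := sin_pos_of_pos_of_lt_pi (by linarith [(hI hα).1]) (by linarith [(hI hα).2])
  have hfin : (insert C (pt '' Θ)).Finite := (hf.image _).insert _
  have := V_step hfin (u := pt α) (q := pt γ) (Set.mem_insert _ _)
    (Set.mem_insert_of_mem _ ⟨α, hα, rfl⟩) ?_ ?_ (hunit α) (by simp [pt]; linarith)
    (hunit γ).le hpos
  · rw [Set.image_insert_eq, Set.insert_comm, this, ENNReal.toReal_add (V_lt_top hfin).ne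
      ENNReal.ofReal_ne_top, ENNReal.toReal_ofReal (by positivity), cr_pt]
  · rintro p (rfl | ⟨θ, hθ, rfl⟩)
    · simp [C]
    · exact (hunit θ).le
  · rintro p (rfl | ⟨θ, hθ, rfl⟩)
    · simp [cr, C]
    · rcases (hmax θ hθ).lt_or_eq with h' | h'
      · rw [cr_swap]
        linarith [cr_pt_nonneg (hI hθ) (hI hα) h']
      · subst h'; simp [cr]; linarith

lemma V_pair (u : ℝ × ℝ) : V {C, u} = 0 := by
  have h := measure_mono (μ := volume) (hull3_sub u u)
  have h0 : cr u u = 0 := by simp [cr]; ring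
  rw [vol_Tri h0.ge vol_Δc, h0] at h
  simpa [V] using h

/-- Upper bound for fans. -/
lemma fan_upper {φ : ℝ} (h0 : 0 ≤ φ) (h1 : φ ≤ π) (Θ : Finset ℝ) :
    (Θ : Set ℝ) ⊆ I → Θ.Nonempty → ∃ α ∈ Θ, ∃ β ∈ Θ, (∀ θ ∈ Θ, θ ≤ α) ∧
    (V (insert C (pt '' (Θ : Set ℝ)))).toReal ≤ ((Θ.card - 1) * (sin φ - φ * cos φ) +
      (cos φ * α - cos α) - (cos φ * β - cos β)) / 2 := by
  induction Θ using Finset.induction_on_max with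
  | empty => intro _ h; simp at h
  | insert γ s hs ih =>
    intro hI _
    have hp := pi_pos
    rw [Finset.coe_insert, Set.insert_subset_iff] at hI
    rcases s.eq_empty_or_nonempty with rfl | hne
    · refine ⟨γ, by simp, γ, by simp, by simp, ?_⟩
      simp [V_pair]
    · obtain ⟨α, hα, β, hβ, hmax, hle⟩ := ih hI.2 hne
      refine ⟨γ, by simp, β, by simp [hβ], ?_, ?_⟩
      · intro θ hθ
        rcases Finset.mem_insert.1 hθ with rfl | h
        · exact le_rfl
        · exact (hs θ h).le
      · rw [Finset.coe_insert, pt_step s.finite_toSet hI.2 hα hmax hI.1 (hs α hα),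
          Finset.card_insert_of_notMem (fun h => lt_irrefl _ (hs γ h))]
        have hαI := hI.2 hα
        have hγI := hI.1
        have hlt := hs α hα
        have := sin_tangent (x := γ - α) (by linarith) (by linarith [hαI.1, hγI.2]) h0 h1
        push_cast
        linarith

/-- The extremal area. -/
def f (j : ℕ) : ℝ := √3 / 2 + j / 2 * sin (2 * π / 3 / j)

lemma fan_le {j : ℕ} (hj : 1 ≤ j) (Θ : Finset ℝ) (hI : (Θ : Set ℝ) ⊆ I) (hc : Θ.card ≤ j + 1) :
    (V (insert C (pt '' (Θ : Set ℝ)))).toReal ≤ f j := by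
  have hp := pi_pos
  have hj' : (1 : ℝ) ≤ j := by exact_mod_cast hj
  have hφ0 : 0 ≤ 2 * π / 3 / j := by positivity
  have hφ1 : 2 * π / 3 / j ≤ 2 * π / 3 := div_le_self (by positivity) hj'
  have hjφ : (j : ℝ) * (2 * π / 3 / j) = 2 * π / 3 := by field_simp
  rw [f]
  set φ := 2 * π / 3 / (j : ℝ) with hφ
  have hcos : -(1 / 2) ≤ cos φ := by
    have := cos_le_cos_of_nonneg_of_le_pi hφ0 (by linarith) hφ1
    have e : cos (2 * π / 3) = -(1 / 2) := by
      rw [show 2 * π / 3 = π - π / 3 by ring, cos_pi_sub, cos_pi_div_three]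
    linarith
  rcases Θ.eq_empty_or_nonempty with rfl | hne
  · have : V {C} = 0 := by simp [V]
    have hs : 0 ≤ sin φ := sin_nonneg_of_nonneg_of_le_pi hφ0 (by linarith)
    simp [this]
    positivity
  obtain ⟨α, hα, β, hβ, _, hle⟩ := fan_upper hφ0 (by linarith) Θ hI hne
  refine hle.trans ?_
  have hαI := hI hα
  have hβI := hI hβ
  have ha : - cos α ≤ √3 / 2 + (α - 5 * π / 6) / 2 := by
    have := sin_third (x := α - π / 2) (by linarith [hαI.1]) (by linarith [hαI.2])
    rw [sin_sub_pi_div_two] at this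
    linarith
  have hb : cos β ≤ √3 / 2 + (π / 6 - β) / 2 := by
    have := sin_third (x := π / 2 - β) (by linarith [hβI.2]) (by linarith [hβI.1])
    rw [sin_pi_div_two_sub] at this
    linarith
  have hnn : 0 ≤ sin φ - φ * cos φ := by
    have := sin_tangent (x := 0) le_rfl hp.le hφ0 (by linarith)
    rw [sin_zero] at this
    linarith
  have hcard : (Θ.card : ℝ) - 1 ≤ j := by
    have : (Θ.card : ℝ) ≤ j + 1 := by exact_mod_cast hc
    linarith
  have h1 := mul_le_mul_of_nonneg_right hcard hnn
  have h2 : 0 ≤ (cos φ + 1 / 2) * (5 * π / 6 - α) :=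
    mul_nonneg (by linarith) (by linarith [hαI.2])
  have h3 : 0 ≤ (cos φ + 1 / 2) * (β - π / 6) :=
    mul_nonneg (by linarith) (by linarith [hβI.1])
  have h4 : (j : ℝ) * (sin φ - φ * cos φ) = j * sin φ - 2 * π / 3 * cos φ := by
    rw [← hjφ]; ring
  nlinarith

lemma f_concave {j : ℕ} (hj : 2 ≤ j) : f (j - 1) + f (j + 1) ≤ 2 * f j := by
  have hp := pi_pos
  obtain ⟨i, rfl⟩ : ∃ i, j = i + 2 := ⟨j - 2, by omega⟩
  have e : i + 2 - 1 = i + 1 := by omega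
  rw [e]
  have hle : ∀ m : ℕ, 1 ≤ m → 0 ≤ 2 * π / 3 / (m : ℝ) ∧ 2 * π / 3 / (m : ℝ) ≤ π := by
    intro m hm
    have : (1 : ℝ) ≤ m := by exact_mod_cast hm
    refine ⟨by positivity, (div_le_self (by positivity) this).trans (by linarith)⟩
  have key : ∀ m : ℕ, 1 ≤ m → (m : ℝ) * sin (2 * π / 3 / m) ≤
      m * sin (2 * π / 3 / (i + 2 : ℕ)) + cos (2 * π / 3 / (i + 2 : ℕ)) *
      (2 * π / 3 - m * (2 * π / 3 / (i + 2 : ℕ))) := by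
    intro m hm
    have := sin_tangent (hle m hm).1 (hle m hm).2 (hle (i + 2) (by omega)).1 (hle (i + 2) (by omega)).2
    have hm' : (0 : ℝ) < m := by exact_mod_cast hm
    have := mul_le_mul_of_nonneg_left this hm'.le
    have e : (m : ℝ) * (2 * π / 3 / m) = 2 * π / 3 := by field_simp
    have : (m : ℝ) * sin (2 * π / 3 / m) ≤ m * sin (2 * π / 3 / (i + 2 : ℕ))
       + cos (2 * π / 3 / (i + 2 : ℕ)) * (m * (2 * π / 3 / m) - m * (2 * π / 3 / (i + 2 : ℕ))) := by
      linarith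
    rwa [e] at this
  have k1 := key (i + 1) (by omega)
  have k2 := key (i + 2 + 1) (by omega)
  have e2 : ((i + 2 : ℕ) : ℝ) * (2 * π / 3 / (i + 2 : ℕ)) = 2 * π / 3 := by
    have : ((i + 2 : ℕ) : ℝ) ≠ 0 := by positivity
    field_simp
  simp only [f]
  set s := sin (2 * π / 3 / (i + 2 : ℕ))
  set c := cos (2 * π / 3 / (i + 2 : ℕ))
  set d := 2 * π / 3 / ((i + 2 : ℕ) : ℝ)
  have e3 : c * (((i + 2 : ℕ) : ℝ) * d) = c * (2 * π / 3) := by rw [e2]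
  push_cast at *
  linarith

/-- The extremal fan. -/
lemma fan_lower {φ : ℝ} (h0 : 0 < φ) (j : ℕ) (h : π / 6 + j * φ ≤ 5 * π / 6) :
    (V (insert C (pt '' ((fun i : ℕ => π / 6 + i * φ) '' Set.Iic j)))).toReal =
      (j * sin φ + cos (π / 6) - cos (π / 6 + j * φ)) / 2 := by
  have hI : ∀ i : ℕ, i ≤ j → π / 6 + i * φ ∈ I := by
    intro i hi
    have : (i : ℝ) ≤ j := by exact_mod_cast hi
    exact ⟨by simp; positivity, by nlinarith⟩
  induction j with
  | zero =>
    have : (Set.Iic 0 : Set ℕ) = {0} := by ext; simp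
    rw [this]
    simp [V_pair]
  | succ j ih =>
    have e : (Set.Iic (j + 1) : Set ℕ) = insert (j + 1) (Set.Iic j) := by
      ext x; simp only [Set.mem_Iic, Set.mem_insert_iff]; omega
    push_cast at h
    rw [e, Set.image_insert_eq, pt_step (α := π / 6 + j * φ)
      ((Set.finite_Iic j).image _) ?_ ⟨j, by simp, rfl⟩ ?_ (hI (j + 1) le_rfl) ?_,
      ih (by linarith) (fun i hi => hI i (by omega))]
    · have : π / 6 + ((j + 1 : ℕ) : ℝ) * φ - (π / 6 + j * φ) = φ := by push_cast; ring
      rw [this]; push_cast; ring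
    · rintro _ ⟨i, hi, rfl⟩
      exact hI i (Nat.le_succ_of_le hi)
    · rintro _ ⟨i, hi, rfl⟩
      have : (i : ℝ) ≤ j := by exact_mod_cast hi
      simp only
      nlinarith
    · push_cast; linarith

def E : Set (ℝ × ℝ) := insert C (pt '' I)

def M' : Set (ℝ × ℝ) :=
  {p | p.1 ^ 2 + p.2 ^ 2 ≤ 1 ∧ √3 * p.1 - p.2 ≤ 1 ∧ -√3 * p.1 - p.2 ≤ 1}

lemma mem_arc {x y : ℝ} (h : x ^ 2 + y ^ 2 = 1) (hy : 1 / 2 ≤ y) : (x, y) ∈ pt '' I := by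
  have hp := pi_pos
  have hx1 : -1 ≤ x := by nlinarith
  have hx2 : x ≤ 1 := by nlinarith
  have hsin : sin (arccos x) = y := by
    rw [sin_arccos, show 1 - x ^ 2 = y ^ 2 by linarith, sqrt_sq (by linarith)]
  refine ⟨arccos x, ⟨?_, ?_⟩, ?_⟩
  · by_contra hc
    push Not at hc
    have := sin_lt_sin_of_lt_of_le_pi_div_two (x := arccos x) (y := π / 6)
      (by linarith [arccos_nonneg x]) (by linarith) hc
    rw [hsin, sin_pi_div_six] at this
    linarith
  · by_contra hc
    push Not at hc
    have := sin_lt_sin_of_lt_of_le_pi_div_two (x := π - arccos x) (y := π / 6)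
      (by linarith [arccos_le_pi x]) (by linarith) (by linarith)
    rw [sin_pi_sub, hsin, sin_pi_div_six] at this
    linarith
  · rw [pt, hsin, cos_arccos hx1 hx2]

lemma M'_sub : M' ⊆ convexHull ℝ E := by
  rintro ⟨x, y⟩ ⟨h1, h2, h3⟩
  simp only at h1 h2 h3
  have s3 : √3 * √3 = 3 := mul_self_sqrt (by norm_num)
  have hc := convex_convexHull ℝ E
  have hE : ∀ {a b : ℝ}, a ^ 2 + b ^ 2 = 1 → 1 / 2 ≤ b → (a, b) ∈ convexHull ℝ E :=
    fun h h' => subset_convexHull ℝ E (Set.mem_insert_of_mem _ (mem_arc h h'))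
  rcases le_total (1 / 2) y with hy | hy
  · obtain ⟨r, hr⟩ : ∃ r, r = √(1 - y ^ 2) := ⟨_, rfl⟩
    have hr2 : r ^ 2 = 1 - y ^ 2 := by rw [hr]; exact sq_sqrt (by nlinarith)
    have hr0 : 0 ≤ r := by rw [hr]; positivity
    rcases hr0.eq_or_lt with h0 | h0
    · rw [← h0] at hr2
      exact hE (by nlinarith) hy
    · have hx : -r ≤ x ∧ x ≤ r := abs_le.1 (abs_le_of_sq_le_sq (by linarith) hr0)
      have := hc (hE (a := r) (b := y) (by linarith) hy) (hE (a := -r) (b := y) (by linarith) hy)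
        (a := (r + x) / (2 * r)) (b := (r - x) / (2 * r)) (div_nonneg (by linarith) (by linarith))
        (div_nonneg (by linarith) (by linarith)) (by field_simp; ring)
      convert this using 1
      ext
      · simp; field_simp; ring
      · simp; field_simp; ring
  · have hA : (√3 / 2, (1 / 2 : ℝ)) ∈ convexHull ℝ E := hE (by nlinarith) le_rfl
    have hB : (-(√3 / 2), (1 / 2 : ℝ)) ∈ convexHull ℝ E := hE (by nlinarith) le_rfl
    have hC : C ∈ convexHull ℝ E := subset_convexHull ℝ E (Set.mem_insert _ _)
    have := hc.sum_mem (t := Finset.univ)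
      (w := ![(1 + y + √3 * x) / 3, (1 + y - √3 * x) / 3, (1 - 2 * y) / 3])
      (z := ![(√3 / 2, (1 / 2 : ℝ)), (-(√3 / 2), (1 / 2 : ℝ)), C]) (by
        intro i _; fin_cases i <;> simp <;> linarith) (by simp [Fin.sum_univ_three]; ring) (by
        intro i _; fin_cases i
        · exact hA
        · exact hB
        · exact hC)
    convert this using 1
    simp only [Fin.sum_univ_three]
    ext
    · simp [C]; linear_combination (-x / 3) * s3
    · simp [C]; ring

lemma upper_E {j : ℕ} (hj : 1 ≤ j) (S : Finset (ℝ × ℝ)) (hS : (S : Set (ℝ × ℝ)) ⊆ E)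
    (hc : S.card ≤ j + 2) : (V (S : Set (ℝ × ℝ))).toReal ≤ f j := by
  have hp := pi_pos
  by_cases hCS : C ∈ S
  · have hang : ∀ p ∈ S.erase C, ∃ θ ∈ I, pt θ = p := by
      intro p hp
      rcases hS (Finset.mem_of_mem_erase hp) with h | h
      · exact absurd h (Finset.ne_of_mem_erase hp)
      · exact h
    choose! g hg1 hg2 using hang
    have hΘ := fan_le hj ((S.erase C).image g) (by
      intro θ hθ
      rw [Finset.mem_coe, Finset.mem_image] at hθ
      obtain ⟨p, hp, rfl⟩ := hθ
      exact hg1 p hp) (by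
      refine Finset.card_image_le.trans ?_
      rw [Finset.card_erase_of_mem hCS]; omega)
    convert hΘ using 4
    ext p
    simp only [Finset.mem_coe, Set.mem_insert_iff, Finset.coe_image, Set.mem_image]
    constructor
    · intro hp
      by_cases h : p = C
      · exact Or.inl h
      · have := Finset.mem_erase.2 ⟨h, hp⟩
        exact Or.inr ⟨g p, ⟨p, this, rfl⟩, hg2 p this⟩
    · rintro (rfl | ⟨_, ⟨q, hq, rfl⟩, rfl⟩)
      · exact hCS
      · rw [hg2 q hq]; exact Finset.mem_of_mem_erase hq
  · have hsub : convexHull ℝ (S : Set (ℝ × ℝ)) ⊆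
        Set.Icc (-(√3 / 2)) (√3 / 2) ×ˢ Set.Icc (1 / 2) 1 := by
      refine convexHull_min ?_ ((convex_Icc _ _).prod (convex_Icc _ _))
      intro p hp
      rcases hS hp with rfl | ⟨θ, hθ, rfl⟩
      · exact absurd hp hCS
      · have hs : 1 / 2 ≤ sin θ := by
          rw [← sin_pi_div_six]
          rcases le_total θ (π / 2) with h | h
          · exact sin_le_sin_of_le_of_le_pi_div_two (by linarith) h hθ.1
          · rw [← sin_pi_sub θ]
            exact sin_le_sin_of_le_of_le_pi_div_two (by linarith) (by linarith)
              (by linarith [hθ.2])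
        have hcs := sin_sq_add_cos_sq θ
        have s3 : √3 * √3 = 3 := mul_self_sqrt (by norm_num)
        have : |cos θ| ≤ √3 / 2 := abs_le_of_sq_le_sq (by nlinarith) (by positivity)
        exact ⟨abs_le.1 this, hs, sin_le_one θ⟩
    have h := measure_mono (μ := volume) hsub
    rw [Measure.volume_eq_prod, Measure.prod_prod, Real.volume_Icc, Real.volume_Icc,
      ← ENNReal.ofReal_mul (by linarith [sqrt_nonneg 3])] at h
    have h2 := ENNReal.toReal_mono ENNReal.ofReal_ne_top h
    rw [ENNReal.toReal_ofReal (by norm_num)] at h2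
    refine h2.trans ?_
    have hj' : (1 : ℝ) ≤ j := by exact_mod_cast hj
    have hφ1 : 2 * π / 3 / j ≤ 2 * π / 3 := div_le_self (by positivity) hj'
    have hs : 0 ≤ sin (2 * π / 3 / j) := sin_nonneg_of_nonneg_of_le_pi (by positivity) (by linarith)
    have : 0 ≤ (j : ℝ) / 2 * sin (2 * π / 3 / j) := by positivity
    rw [f]
    linarith

lemma upper_M' {j : ℕ} (hj : 1 ≤ j) (S : Finset (ℝ × ℝ)) (hS : (S : Set (ℝ × ℝ)) ⊆ M')
    (hc : S.card ≤ j + 2) : (V (S : Set (ℝ × ℝ))).toReal ≤ f j := by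
  obtain ⟨T, h1, h2, h3⟩ := V_reduce S (hS.trans M'_sub) ∅ (by simp)
  simp only [Finset.union_empty, Finset.card_empty, add_zero] at h2 h3
  exact (ENNReal.toReal_mono (V_lt_top T.finite_toSet).ne h3).trans (upper_E hj T h1 (h2.trans hc))

lemma E_sub_M' : E ⊆ M' := by
  have hp := pi_pos
  have s3 : √3 * √3 = 3 := mul_self_sqrt (by norm_num)
  rintro p (rfl | ⟨θ, hθ, rfl⟩)
  · simp [M', C]
  · have hs : 1 / 2 ≤ sin θ := by
      rw [← sin_pi_div_six]
      rcases le_total θ (π / 2) with h | h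
      · exact sin_le_sin_of_le_of_le_pi_div_two (by linarith) h hθ.1
      · rw [← sin_pi_sub θ]
        exact sin_le_sin_of_le_of_le_pi_div_two (by linarith) (by linarith)
          (by linarith [hθ.2])
    have hcs := sin_sq_add_cos_sq θ
    have : |cos θ| ≤ √3 / 2 := abs_le_of_sq_le_sq (by nlinarith) (by positivity)
    obtain ⟨ha, hb⟩ := abs_le.1 this
    refine ⟨?_, ?_, ?_⟩
    · simp [pt]
    · simp only [pt]; nlinarith [sqrt_nonneg 3]
    · simp only [pt]; nlinarith [sqrt_nonneg 3]

lemma lower_M' {j : ℕ} (hj : 1 ≤ j) : ∃ S : Finset (ℝ × ℝ), (S : Set (ℝ × ℝ)) ⊆ M' ∧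
    S.card ≤ j + 2 ∧ (V (S : Set (ℝ × ℝ))).toReal = f j := by
  have hp := pi_pos
  have hj' : (1 : ℝ) ≤ j := by exact_mod_cast hj
  have hjφ : (j : ℝ) * (2 * π / 3 / j) = 2 * π / 3 := by field_simp
  have hφ : 0 < 2 * π / 3 / (j : ℝ) := by positivity
  have e := fan_lower hφ j (by rw [hjφ]; linarith)
  refine ⟨insert C (((Finset.Iic j).image (fun i : ℕ => π / 6 + i * (2 * π / 3 / j))).image pt),
    ?_, ?_, ?_⟩
  · refine Set.Subset.trans ?_ E_sub_M'
    intro p hp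
    simp only [Finset.coe_insert, Finset.coe_image, Finset.coe_Iic] at hp
    rcases hp with rfl | ⟨_, ⟨i, hi, rfl⟩, rfl⟩
    · exact Set.mem_insert _ _
    · refine Set.mem_insert_of_mem _ ⟨_, ⟨?_, ?_⟩, rfl⟩
      · simp only; nlinarith [mul_nonneg (Nat.cast_nonneg (α := ℝ) i) hφ.le]
      · have : (i : ℝ) ≤ j := by exact_mod_cast hi
        have := mul_le_mul_of_nonneg_right this hφ.le
        simp only; linarith
  · refine (Finset.card_insert_le _ _).trans ?_
    have := (Finset.card_image_le (s := (Finset.Iic j).image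
      (fun i : ℕ => π / 6 + i * (2 * π / 3 / j))) (f := pt)).trans Finset.card_image_le
    rw [Nat.card_Iic] at this
    omega
  · simp only [Finset.coe_insert, Finset.coe_image, Finset.coe_Iic]
    rw [e, hjφ, show π / 6 + 2 * π / 3 = π - π / 6 by ring, cos_pi_sub, cos_pi_div_six, f]
    ring

/-- Measure-preserving identification of the plane with `ℝ × ℝ`. -/
def toProd : Pt ≃ₗ[ℝ] (ℝ × ℝ) :=
  (WithLp.linearEquiv 2 ℝ (Fin 2 → ℝ)).trans (LinearEquiv.finTwoArrow ℝ ℝ)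

lemma toProd_apply (p : Pt) : toProd p = (p 0, p 1) := rfl

lemma toProd_mp : MeasurePreserving toProd volume volume :=
  (volume_preserving_finTwoArrow ℝ).comp (EuclideanSpace.volume_preserving_symm_measurableEquiv_toLp (Fin 2))

lemma vol_eq (S : Finset Pt) : volume (convexHull ℝ (S : Set Pt)) =
    V ((S.image toProd : Finset (ℝ × ℝ)) : Set (ℝ × ℝ)) := by
  have h1 : convexHull ℝ (toProd '' (S : Set Pt)) = toProd '' convexHull ℝ (S : Set Pt) :=
    (LinearMap.image_convexHull toProd.toLinearMap (S : Set Pt)).symm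
  have hm := hull_meas (S.image toProd).finite_toSet
  rw [V, ← toProd_mp.measure_preimage hm.nullMeasurableSet]
  rw [Finset.coe_image, h1, Set.preimage_image_eq _ toProd.injective]

lemma astar_eq {j : ℕ} (hj : 1 ≤ j) : astar (j + 2) = f j := by
  have hub : f j ∈ upperBounds {a : ℝ | ∃ S : Finset Pt, (S : Set Pt) ⊆ M ∧ S.card ≤ j + 2 ∧
      a = (volume (convexHull ℝ (S : Set Pt))).toReal} := by
    rintro a ⟨S, hS, hc, rfl⟩
    rw [vol_eq]
    refine upper_M' hj _ ?_ (Finset.card_image_le.trans hc)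
    rw [Finset.coe_image]
    rintro _ ⟨p, hp, rfl⟩
    exact hS hp
  apply le_antisymm
  · exact csSup_le ⟨_, ∅, by simp, by simp, rfl⟩ hub
  · obtain ⟨S, h1, h2, h3⟩ := lower_M' hj
    refine le_csSup ⟨_, hub⟩ ⟨S.image toProd.symm, ?_, Finset.card_image_le.trans h2, ?_⟩
    · rw [Finset.coe_image]
      rintro _ ⟨p, hp, rfl⟩
      have := h1 hp
      have e : toProd (toProd.symm p) = p := toProd.apply_symm_apply p
      rw [← e] at this
      exact this
    · rw [vol_eq, Finset.image_image, ← h3]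
      congr 3
      ext p
      simp

end AC

/-- Dowker's concavity of the sequence of maximal inscribed-polygon areas in `M`. -/
theorem astar_concave (n : ℕ) (hn : 4 ≤ n) :
    astar (n - 1) + astar (n + 1) ≤ 2 * astar n := by
  obtain ⟨i, rfl⟩ : ∃ i, n = i + 2 + 2 := ⟨n - 4, by omega⟩
  have h := AC.f_concave (j := i + 2) (by omega)
  rw [show i + 2 - 1 = i + 1 by omega] at h
  rw [show i + 2 + 2 - 1 = (i + 1) + 2 by omega, show i + 2 + 2 + 1 = (i + 2 + 1) + 2 by omega,
    AC.astar_eq (by omega), AC.astar_eq (by omega), AC.astar_eq (by omega)]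
  exact h
end
end
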